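/- arXiv:math/0110223 — 2 statements merged into one kernel-verified Lean document; each statement's English description precedes it below -/
import Mathlib

section
/- Let H be a non-semisimple Hopf algebra over k of dimension pq, where p ≤ q are odd primes, with antipode S. Then the order of S⁴ (the smallest positive integer m with S^{4m} = id_H) equals p. -/
open scoped TensorProduct

/-- A group-like element of a coalgebra: a nonzero element `a` with `Δ a = a ⊗ a`. -/
def IsGroupLike (k : Type*) {H : Type*} [CommSemiring k] [AddCommMonoid H] [Module k H]
    [Coalgebra k H] (a : H) : Prop :=
  a ≠ 0 ∧ Coalgebra.comul (R := k) a = a ⊗ₜ[k] a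

/-- The convolution product on the dual of a coalgebra. -/
noncomputable def conv {k H : Type*} [CommSemiring k] [AddCommMonoid H] [Module k H]
    [Coalgebra k H] (f g : Module.Dual k H) : Module.Dual k H :=
  LinearMap.mul' k k ∘ₗ TensorProduct.map f g ∘ₗ Coalgebra.comul

/-- `l ∈ H*` is a right integral of `H*`: `l * β = β(1) • l` for the convolution product. -/
def IsRightIntegralDual (k : Type*) {H : Type*} [CommSemiring k] [Semiring H]
    [HopfAlgebra k H] (l : Module.Dual k H) : Prop :=
  ∀ f : Module.Dual k H, conv l f = f 1 • l

/-- `Λ ∈ H` is a left integral of `H`: `a * Λ = ε(a) • Λ` for all `a`. -/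
def IsLeftIntegral (k : Type*) {H : Type*} [CommSemiring k] [Semiring H]
    [HopfAlgebra k H] (L : H) : Prop :=
  ∀ a : H, a * L = Coalgebra.counit (R := k) a • L

/-- `Λ ∈ H` is a right integral of `H`: `Λ * a = ε(a) • Λ` for all `a`. -/
def IsRightIntegral (k : Type*) {H : Type*} [CommSemiring k] [Semiring H]
    [HopfAlgebra k H] (L : H) : Prop :=
  ∀ a : H, L * a = Coalgebra.counit (R := k) a • L

/-- `g` is the distinguished group-like element of `H`: it is group-like and
`β * λ = β(g) • λ` for some nonzero right integral `λ` of `H*`. -/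
def IsDistinguishedGroupLike (k : Type*) {H : Type*} [CommSemiring k] [Semiring H]
    [HopfAlgebra k H] (g : H) : Prop :=
  IsGroupLike k g ∧ ∃ l : Module.Dual k H, l ≠ 0 ∧ IsRightIntegralDual k l ∧
    ∀ f : Module.Dual k H, conv f l = f g • l

/-- `α` is the distinguished group-like element of `H*`: an algebra map `H → k` with
`Λ * a = α(a) • Λ` for some nonzero left integral `Λ` of `H`. -/
def IsDistinguishedGroupLikeDual (k : Type*) {H : Type*} [CommSemiring k] [Semiring H]
    [HopfAlgebra k H] (α : H →ₐ[k] k) : Prop :=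
  ∃ L : H, L ≠ 0 ∧ IsLeftIntegral k L ∧ ∀ a : H, L * a = α a • L

/-- `IsHopfIndex k g n` : `n` is the index of the Hopf algebra `H` with distinguished
group-like element `g`, i.e. the smallest positive integer `n` with `S ^ (4 n) = id` and
`g ^ n = 1`, where `S` is the antipode. -/
def IsHopfIndex (k : Type*) {H : Type*} [CommSemiring k] [Semiring H] [HopfAlgebra k H]
    (g : H) (n : ℕ) : Prop :=
  0 < n ∧ (HopfAlgebra.antipode (R := k) (A := H) : Module.End k H) ^ (4 * n) = 1 ∧ g ^ n = 1 ∧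
    ∀ m : ℕ, 0 < m → (HopfAlgebra.antipode (R := k) (A := H) : Module.End k H) ^ (4 * m) = 1 →
      g ^ m = 1 → n ≤ m

/-- The simultaneous eigenspace `H^ω_{a,i,j} = {u ∈ H | S² u = (-1)^a ω^i • u, u * g = ω^j • u}`
for `(a,i,j) ∈ ℤ/2 × ℤ/n × ℤ/n`. -/
noncomputable def hopfEigenspace {k H : Type*} [CommRing k] [Ring H] [HopfAlgebra k H]
    (g : H) (ω : k) {n : ℕ} (t : ZMod 2 × ZMod n × ZMod n) : Submodule k H :=
  Module.End.eigenspace ((HopfAlgebra.antipode (R := k) (A := H) : Module.End k H) ^ 2)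
      ((-1 : k) ^ t.1.val * ω ^ t.2.1.val) ⊓
    Module.End.eigenspace (LinearMap.mulRight k g : Module.End k H) (ω ^ t.2.2.val)

/-- Convolution powers of an element of the dual; the zeroth power is the counit,
the unit of the convolution algebra. -/
noncomputable def convPow {k H : Type*} [CommSemiring k] [AddCommMonoid H] [Module k H]
    [Coalgebra k H] (f : Module.Dual k H) : ℕ → Module.Dual k H
  | 0 => Coalgebra.counit
  | m + 1 => conv f (convPow f m)

namespace HopfPQ
open Coalgebra HopfAlgebra

section Hit
variable {k H : Type*} [Field k] [Ring H] [HopfAlgebra k H]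

/-- The right hit action `x ↦ x₁ f(x₂)` of a functional. -/
noncomputable def hitR (f : H →ₗ[k] k) : H →ₗ[k] H :=
  (TensorProduct.rid k H).toLinearMap ∘ₗ f.lTensor H ∘ₗ comul

/-- The left hit action `x ↦ f(x₁) x₂` of a functional. -/
noncomputable def hitL (f : H →ₗ[k] k) : H →ₗ[k] H :=
  (TensorProduct.lid k H).toLinearMap ∘ₗ f.rTensor H ∘ₗ comul

lemma counit_hitR (f : H →ₗ[k] k) (x : H) : counit (R := k) (hitR f x) = f x := by
  have h : ∀ t : H ⊗[k] H, counit (R := k) (TensorProduct.rid k H (f.lTensor H t)) =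
      f (TensorProduct.lid k H (counit.rTensor H t)) := by
    intro t
    induction t with
    | zero => simp
    | tmul a b => simp [mul_comm]
    | add a b ha hb => simp only [map_add, ha, hb]
  simp [hitR, h]

lemma counit_hitL (f : H →ₗ[k] k) (x : H) : counit (R := k) (hitL f x) = f x := by
  have h : ∀ t : H ⊗[k] H, counit (R := k) (TensorProduct.lid k H (f.rTensor H t)) =
      f (TensorProduct.rid k H (counit.lTensor H t)) := by
    intro t
    induction t with
    | zero => simp
    | tmul a b => simp [mul_comm]
    | add a b ha hb => simp only [map_add, ha, hb]
  simp [hitL, h]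

lemma comul_hitR (f : H →ₗ[k] k) (x : H) :
    comul (R := k) (hitR f x) = (hitR f).lTensor H (comul x) := by
  have h : ∀ t : H ⊗[k] H, comul (R := k) (TensorProduct.rid k H (f.lTensor H t)) =
      (TensorProduct.rid k H).toLinearMap.lTensor H ((f.lTensor H).lTensor H
        (TensorProduct.assoc k H H H (comul.rTensor H t))) := by
    intro t
    induction t with
    | zero => simp
    | tmul a b =>
      simp only [LinearMap.lTensor_tmul, LinearMap.rTensor_tmul, TensorProduct.rid_tmul, map_smul]
      generalize comul (R := k) a = u
      induction u with
      | zero => simp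
      | tmul a b => simp [TensorProduct.tmul_smul]
      | add a b ha hb => simp only [map_add, ha, hb, smul_add, TensorProduct.add_tmul]
    | add a b ha hb => simp only [map_add, ha, hb]
  simp only [hitR, LinearMap.comp_apply, LinearEquiv.coe_coe, h, coassoc_apply,
    LinearMap.lTensor_comp]

lemma comul_hitL (f : H →ₗ[k] k) (x : H) :
    comul (R := k) (hitL f x) = (hitL f).rTensor H (comul x) := by
  have h : ∀ t : H ⊗[k] H, comul (R := k) (TensorProduct.lid k H (f.rTensor H t)) =
      (TensorProduct.lid k H).toLinearMap.rTensor H ((f.rTensor H).rTensor H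
        ((TensorProduct.assoc k H H H).symm (comul.lTensor H t))) := by
    intro t
    induction t with
    | zero => simp
    | tmul a b =>
      simp only [LinearMap.lTensor_tmul, LinearMap.rTensor_tmul, TensorProduct.lid_tmul, map_smul]
      generalize comul (R := k) b = u
      induction u with
      | zero => simp
      | tmul a b => simp [TensorProduct.smul_tmul']
      | add a b ha hb => simp only [map_add, ha, hb, smul_add, TensorProduct.tmul_add]
    | add a b ha hb => simp only [map_add, ha, hb]
  simp only [hitL, LinearMap.comp_apply, LinearEquiv.coe_coe, h, coassoc_symm_apply,
    LinearMap.rTensor_comp]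

lemma hitR_comp_hitL (f g : H →ₗ[k] k) (x : H) : hitR f (hitL g x) = hitL g (hitR f x) := by
  have h : ∀ t : H ⊗[k] H, TensorProduct.rid k H (f.lTensor H ((hitL g).rTensor H t)) =
      hitL g (TensorProduct.rid k H (f.lTensor H t)) := by
    intro t
    induction t with
    | zero => simp
    | tmul a b => simp
    | add a b ha hb => simp only [map_add, ha, hb]
  conv_lhs => rw [hitR]
  simp only [LinearMap.comp_apply, LinearEquiv.coe_coe, comul_hitL, h]
  simp [hitR]

lemma hitR_hitR (f g : H →ₗ[k] k) (x : H) : hitR f (hitR g x) = hitR (f ∘ₗ hitR g) x := by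
  simp only [hitR, LinearMap.comp_apply, LinearEquiv.coe_coe]
  have := comul_hitR g x
  simp only [hitR, LinearMap.comp_apply, LinearEquiv.coe_coe] at this
  rw [this, ← LinearMap.comp_apply, ← LinearMap.lTensor_comp]

lemma hitR_eq (f : H →ₗ[k] k) (x : H) :
    hitR f x = TensorProduct.rid k H (f.lTensor H (comul x)) := rfl

lemma hitL_eq (f : H →ₗ[k] k) (x : H) :
    hitL f x = TensorProduct.lid k H (f.rTensor H (comul x)) := rfl

end Hit

section Character
variable {k H : Type*} [Field k] [Ring H] [HopfAlgebra k H]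

lemma rTensor_hitR_comul (f : H →ₗ[k] k) (x : H) :
    (hitR f).rTensor H (comul x) = (hitL f).lTensor H (comul (R := k) x) := by
  have h₁ : ∀ t : H ⊗[k] H, (hitR f).rTensor H t =
      ((TensorProduct.lid k H).toLinearMap ∘ₗ f.rTensor H).lTensor H
        (TensorProduct.assoc k H H H (comul.rTensor H t)) := by
    intro t
    induction t with
    | zero => simp
    | tmul a b =>
      simp only [LinearMap.rTensor_tmul, hitR_eq]
      generalize comul (R := k) a = u
      induction u with
      | zero => simp
      | tmul a b => simp [TensorProduct.smul_tmul]
      | add a b ha hb => simp only [map_add, ha, hb, TensorProduct.add_tmul]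
    | add a b ha hb => simp only [map_add, ha, hb]
  rw [h₁, coassoc_apply, ← LinearMap.comp_apply, ← LinearMap.lTensor_comp]
  rfl

lemma hitR_map_mul (α : H →ₐ[k] k) (x y : H) :
    hitR α.toLinearMap (x * y) = hitR α.toLinearMap x * hitR α.toLinearMap y :=
  map_mul (((Algebra.TensorProduct.rid k k H).toAlgHom.comp
    (Algebra.TensorProduct.map (AlgHom.id k H) α)).comp (Bialgebra.comulAlgHom k H)) x y

lemma hitL_map_mul (α : H →ₐ[k] k) (x y : H) :
    hitL α.toLinearMap (x * y) = hitL α.toLinearMap x * hitL α.toLinearMap y :=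
  map_mul (((Algebra.TensorProduct.lid k H).toAlgHom.comp
    (Algebra.TensorProduct.map α (AlgHom.id k H))).comp (Bialgebra.comulAlgHom k H)) x y

lemma hitR_map_one (α : H →ₐ[k] k) : hitR α.toLinearMap (1 : H) = 1 :=
  map_one (((Algebra.TensorProduct.rid k k H).toAlgHom.comp
    (Algebra.TensorProduct.map (AlgHom.id k H) α)).comp (Bialgebra.comulAlgHom k H))

lemma hitL_map_one (α : H →ₐ[k] k) : hitL α.toLinearMap (1 : H) = 1 :=
  map_one (((Algebra.TensorProduct.lid k H).toAlgHom.comp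
    (Algebra.TensorProduct.map α (AlgHom.id k H))).comp (Bialgebra.comulAlgHom k H))

lemma eq_antipode_of_left_inverse (X : H →ₗ[k] H)
    (h : ∀ x, LinearMap.mul' k H (X.rTensor H (comul x)) = algebraMap k H (counit x)) :
    X = antipode k := by
  have h1 : WithConv.toConv X * WithConv.toConv LinearMap.id = 1 := by
    ext x
    exact h x
  exact WithConv.toConv_injective (left_inv_eq_right_inv h1 LinearMap.id_mul_antipode)

lemma eq_antipode_of_right_inverse (X : H →ₗ[k] H)
    (h : ∀ x, LinearMap.mul' k H (X.lTensor H (comul x)) = algebraMap k H (counit x)) :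
    X = antipode k := by
  have h1 : WithConv.toConv LinearMap.id * WithConv.toConv X = 1 := by
    ext x
    exact h x
  exact WithConv.toConv_injective (left_inv_eq_right_inv LinearMap.antipode_mul_id h1).symm

lemma hitL_antipode_hitR (α : H →ₐ[k] k) (x : H) :
    hitL α.toLinearMap (antipode k (hitR α.toLinearMap x)) = antipode k x := by
  refine LinearMap.congr_fun (eq_antipode_of_left_inverse
    (hitL α.toLinearMap ∘ₗ antipode k ∘ₗ hitR α.toLinearMap) fun x => ?_) x
  rw [LinearMap.rTensor_comp, LinearMap.rTensor_comp, LinearMap.comp_apply, LinearMap.comp_apply,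
    rTensor_hitR_comul]
  have h : ∀ t : H ⊗[k] H, LinearMap.mul' k H ((hitL α.toLinearMap).rTensor H
      ((antipode k).rTensor H ((hitL α.toLinearMap).lTensor H t))) =
      hitL α.toLinearMap (LinearMap.mul' k H ((antipode k).rTensor H t)) := by
    intro t
    induction t with
    | zero => simp
    | tmul a b => simp [hitL_map_mul]
    | add a b ha hb => simp only [map_add, ha, hb]
  rw [h, mul_antipode_rTensor_comul_apply, Algebra.algebraMap_eq_smul_one, map_smul, hitL_map_one]

lemma hitR_antipode_hitL (α : H →ₐ[k] k) (x : H) :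
    hitR α.toLinearMap (antipode k (hitL α.toLinearMap x)) = antipode k x := by
  refine LinearMap.congr_fun (eq_antipode_of_right_inverse
    (hitR α.toLinearMap ∘ₗ antipode k ∘ₗ hitL α.toLinearMap) fun x => ?_) x
  rw [LinearMap.lTensor_comp, LinearMap.lTensor_comp, LinearMap.comp_apply, LinearMap.comp_apply,
    ← rTensor_hitR_comul]
  have h : ∀ t : H ⊗[k] H, LinearMap.mul' k H ((hitR α.toLinearMap).lTensor H
      ((antipode k).lTensor H ((hitR α.toLinearMap).rTensor H t))) =
      hitR α.toLinearMap (LinearMap.mul' k H ((antipode k).lTensor H t)) := by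
    intro t
    induction t with
    | zero => simp
    | tmul a b => simp [hitR_map_mul]
    | add a b ha hb => simp only [map_add, ha, hb]
  rw [h, mul_antipode_lTensor_comul_apply, Algebra.algebraMap_eq_smul_one, map_smul, hitR_map_one]

lemma hitR_antipode_antipode (α : H →ₐ[k] k) (x : H) :
    hitR α.toLinearMap (antipode k (antipode k x)) =
      antipode k (antipode k (hitR α.toLinearMap x)) := by
  rw [← hitL_antipode_hitR α x, hitR_antipode_hitL]

end Character

section LeftIntegral
variable {k H : Type*} [Field k] [Ring H] [HopfAlgebra k H]

lemma one_tmul_mul_comul {L : H} (hL : ∀ a : H, a * L = counit (R := k) a • L) (a : H) :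
    ((1 : H) ⊗ₜ[k] a) * comul (R := k) L = (antipode k a ⊗ₜ[k] (1 : H)) * comul (R := k) L := by
  have h₁ : ∀ t : H ⊗[k] (H ⊗[k] H), LinearMap.mul' k (H ⊗[k] H)
      (TensorProduct.map ((TensorProduct.mk k H H).flip 1 ∘ₗ antipode k) LinearMap.id t) =
      TensorProduct.map (LinearMap.mul' k H ∘ₗ (antipode k).rTensor H) LinearMap.id
        ((TensorProduct.assoc k H H H).symm t) := by
    intro t
    induction t with
    | zero => simp
    | tmul a u =>
      induction u with
      | zero => simp
      | tmul b c => simp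
      | add a b ha hb => simp only [map_add, ha, hb, TensorProduct.tmul_add]
    | add a b ha hb => simp only [map_add, ha, hb]
  have h₂ : LinearMap.mul' k (H ⊗[k] H) (TensorProduct.map
      ((TensorProduct.mk k H H).flip 1 ∘ₗ antipode k) LinearMap.id (comul.lTensor H (comul a))) =
      (1 : H) ⊗ₜ[k] a := by
    rw [h₁, coassoc_symm_apply, ← LinearMap.rTensor_def, ← LinearMap.comp_apply,
      ← LinearMap.rTensor_comp, LinearMap.comp_assoc, mul_antipode_rTensor_comul,
      LinearMap.rTensor_comp, LinearMap.comp_apply, rTensor_counit_comul]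
    simp
  have h₃ : ∀ t : H ⊗[k] H, LinearMap.mul' k (H ⊗[k] H) (TensorProduct.map
      ((TensorProduct.mk k H H).flip 1 ∘ₗ antipode k) LinearMap.id (comul.lTensor H t)) *
        comul (R := k) L =
      (antipode k (TensorProduct.rid k H (counit.lTensor H t)) ⊗ₜ[k] (1 : H)) *
        comul (R := k) L := by
    intro t
    induction t with
    | zero => simp
    | tmul a b =>
      simp [mul_assoc, ← Bialgebra.comul_mul, hL, ← TensorProduct.smul_tmul']
    | add a b ha hb => simp only [map_add, ha, hb, TensorProduct.add_tmul, add_mul]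
  rw [← h₂, h₃]
  simp

lemma comul_mul_tmul_one {L : H} (α : H →ₐ[k] k) (hL : ∀ a : H, L * a = α a • L) (a : H) :
    comul (R := k) L * (a ⊗ₜ[k] (1 : H)) =
      comul (R := k) L * ((1 : H) ⊗ₜ[k] antipode k (hitL α.toLinearMap a)) := by
  have h₁ : ∀ t : (H ⊗[k] H) ⊗[k] H, LinearMap.mul' k (H ⊗[k] H)
      (TensorProduct.map LinearMap.id (TensorProduct.mk k H H 1 ∘ₗ antipode k) t) =
      TensorProduct.map LinearMap.id (LinearMap.mul' k H ∘ₗ (antipode k).lTensor H)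
        (TensorProduct.assoc k H H H t) := by
    intro t
    induction t with
    | zero => simp
    | tmul u a =>
      induction u with
      | zero => simp
      | tmul b c => simp
      | add a b ha hb => simp only [map_add, ha, hb, TensorProduct.add_tmul]
    | add a b ha hb => simp only [map_add, ha, hb]
  have h₂ : LinearMap.mul' k (H ⊗[k] H) (TensorProduct.map LinearMap.id
      (TensorProduct.mk k H H 1 ∘ₗ antipode k) (comul.rTensor H (comul a))) =
      a ⊗ₜ[k] (1 : H) := by
    rw [h₁, coassoc_apply, ← LinearMap.lTensor_def, ← LinearMap.comp_apply,
      ← LinearMap.lTensor_comp, LinearMap.comp_assoc, mul_antipode_lTensor_comul,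
      LinearMap.lTensor_comp, LinearMap.comp_apply, lTensor_counit_comul]
    simp
  have h₃ : ∀ t : H ⊗[k] H, comul (R := k) L * LinearMap.mul' k (H ⊗[k] H)
      (TensorProduct.map LinearMap.id (TensorProduct.mk k H H 1 ∘ₗ antipode k)
        (comul.rTensor H t)) =
      comul (R := k) L * ((1 : H) ⊗ₜ[k]
        antipode k (TensorProduct.lid k H (α.toLinearMap.rTensor H t))) := by
    intro t
    induction t with
    | zero => simp
    | tmul a b =>
      simp [← mul_assoc, ← Bialgebra.comul_mul, hL]
    | add a b ha hb => simp only [map_add, ha, hb, TensorProduct.tmul_add, mul_add]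
  rw [← h₂, h₃]
  rfl

end LeftIntegral

section Existence
variable {k H : Type*} [Field k] [Ring H] [HopfAlgebra k H]

lemma sum_basis_coord_comp {ι V M : Type*} [Fintype ι] [AddCommGroup V] [Module k V]
    [AddCommGroup M] [Module k M] (b : Module.Basis ι k V)
    (Φ : V →ₗ[k] Module.Dual k V →ₗ[k] M) (X Y : V →ₗ[k] V) :
    ∑ i, Φ (X (b i)) (b.coord i ∘ₗ Y) = ∑ i, Φ (X (Y (b i))) (b.coord i) := by
  have h : ∀ i, b.coord i ∘ₗ Y = ∑ j, b.coord i (Y (b j)) • b.coord j := by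
    intro i
    classical
    refine b.ext fun l => ?_
    simp [LinearMap.sum_apply, Finsupp.single_apply]
  have h' : ∀ j, Y (b j) = ∑ i, b.coord i (Y (b j)) • b i := fun j => (b.sum_repr _).symm
  simp_rw [h, map_sum, map_smul]
  rw [Finset.sum_comm]
  refine Finset.sum_congr rfl fun j _ => ?_
  conv_rhs => rw [h' j]
  simp only [map_sum, map_smul, LinearMap.sum_apply, LinearMap.smul_apply]

/-- The map `f ↦ (x ↦ x₁ f(S²(x₂) y))`. -/
noncomputable def twist (y : H) : H →ₗ[k] Module.Dual k H →ₗ[k] H :=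
  LinearMap.mk₂ k (fun x f => hitR (f ∘ₗ LinearMap.mulRight k y ∘ₗ antipode k ∘ₗ antipode k) x)
    (fun _ _ _ => map_add _ _ _) (fun _ _ _ => map_smul _ _ _)
    (fun x f g => by simp [hitR, LinearMap.add_comp, LinearMap.lTensor_add])
    (fun c x f => by simp [hitR, LinearMap.smul_comp, LinearMap.lTensor_smul])

lemma twist_apply (y x : H) (f : Module.Dual k H) : twist y x f =
    hitR (f ∘ₗ LinearMap.mulRight k y ∘ₗ antipode k ∘ₗ antipode k) x := rfl

lemma mul_twist (y a x : H) (f : Module.Dual k H) {ι : Type*} (r : Repr k a ι) :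
    a * twist y x f = ∑ i ∈ r.index,
      twist y (r.left i * x) (f ∘ₗ LinearMap.mulLeft k (antipode k (r.right i))) := by
  have h : ∀ t : H ⊗[k] H, a * TensorProduct.rid k H
      ((f ∘ₗ LinearMap.mulRight k y ∘ₗ antipode k ∘ₗ antipode k).lTensor H t) =
      ∑ i ∈ r.index, TensorProduct.rid k H
        (((f ∘ₗ LinearMap.mulLeft k (antipode k (r.right i))) ∘ₗ
          LinearMap.mulRight k y ∘ₗ antipode k ∘ₗ antipode k).lTensor H
            (comul (r.left i) * t)) := by
    intro t
    induction t with
    | zero => simp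
    | add t s ht hs => simp only [map_add, mul_add, ht, hs, Finset.sum_add_distrib]
    | tmul u v =>
      let ξ : H ⊗[k] H →ₗ[k] k := f ∘ₗ LinearMap.mulRight k y ∘ₗ antipode k ∘ₗ
        LinearMap.mulLeft k (antipode k v) ∘ₗ LinearMap.mul' k H ∘ₗ (antipode k).rTensor H
      let Ξ : H ⊗[k] (H ⊗[k] H) →ₗ[k] H := (TensorProduct.rid k H).toLinearMap ∘ₗ
        TensorProduct.map (LinearMap.mulRight k u) ξ
      have h₁ : ∀ p q : H, TensorProduct.rid k H
          (((f ∘ₗ LinearMap.mulLeft k (antipode k q)) ∘ₗ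
          LinearMap.mulRight k y ∘ₗ antipode k ∘ₗ antipode k).lTensor H
            (comul p * (u ⊗ₜ v))) = Ξ (TensorProduct.assoc k H H H (comul p ⊗ₜ q)) := by
        intro p q
        generalize comul (R := k) p = s
        induction s with
        | zero => simp
        | add t s ht hs => simp only [map_add, add_mul, TensorProduct.add_tmul, ht, hs]
        | tmul b c => simp [Ξ, ξ, antipode_mul_antidistrib, mul_assoc]
      have h₂ : ∑ i ∈ r.index, comul (R := k) (r.left i) ⊗ₜ[k] r.right i =
          comul.rTensor H (comul (R := k) a) := by
        rw [← r.eq]; simp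
      have h₃ : ∀ s : H ⊗[k] H, Ξ (comul.lTensor H s) =
          TensorProduct.rid k H (counit.lTensor H s) * u *
            algebraMap k H (f (antipode k (antipode k v) * y)) := by
        intro s
        induction s with
        | zero => simp
        | add t s ht hs => simp only [map_add, add_mul, ht, hs]
        | tmul b c =>
          simp [Ξ, ξ, Algebra.algebraMap_eq_smul_one, smul_smul, mul_comm]
      simp_rw [h₁]
      rw [← map_sum, ← map_sum, h₂, coassoc_apply, h₃]
      simp [Algebra.algebraMap_eq_smul_one]
  rw [twist_apply, hitR_eq, h]
  simp [twist_apply, hitR_eq]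

lemma isLeftIntegral_sum_twist {ι : Type*} [Fintype ι] (b : Module.Basis ι k H) (y a : H) :
    a * ∑ j, twist y (b j) (b.coord j) = counit (R := k) a • ∑ j, twist y (b j) (b.coord j) := by
  simp_rw [Finset.mul_sum, mul_twist y a _ _ (ℛ k a)]
  rw [Finset.sum_comm]
  have h : ∀ i, ∑ j, twist y ((ℛ k a).left i * b j)
      (b.coord j ∘ₗ LinearMap.mulLeft k (antipode k ((ℛ k a).right i))) =
      ∑ j, twist y ((ℛ k a).left i * antipode k ((ℛ k a).right i) * b j) (b.coord j) := by
    intro i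
    simpa [mul_assoc] using sum_basis_coord_comp b (twist y)
      (LinearMap.mulLeft k ((ℛ k a).left i))
      (LinearMap.mulLeft k (antipode k ((ℛ k a).right i)))
  simp_rw [h]
  rw [Finset.sum_comm, Finset.smul_sum]
  refine Finset.sum_congr rfl fun j _ => ?_
  rw [← LinearMap.sum_apply, ← map_sum, ← Finset.sum_mul, sum_mul_antipode_eq_smul]
  simp

lemma exists_sum_twist_ne_zero [Nontrivial H] {ι : Type*} [Fintype ι] (b : Module.Basis ι k H) :
    ∃ y, ∑ j, twist y (b j) (b.coord j) ≠ 0 := by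
  by_contra! h0
  refine one_ne_zero (α := H) ?_
  let y : H := 1
  let F : ι → H →ₗ[k] k := fun l => b.coord l ∘ₗ LinearMap.mulRight k y ∘ₗ antipode k
  have key : ∀ (f : Module.Dual k H) (z : H),
      ∑ l, F l (twist (b l) z f) = counit (R := k) z * f y := by
    intro f z
    have h : ∀ t : H ⊗[k] H, ∑ l, F l (TensorProduct.rid k H
        ((f ∘ₗ LinearMap.mulRight k (b l) ∘ₗ antipode k ∘ₗ antipode k).lTensor H t)) =
        f (antipode k (LinearMap.mul' k H ((antipode k).lTensor H t)) * y) := by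
      intro t
      induction t with
      | zero => simp
      | add t s ht hs => simp only [map_add, add_mul, Finset.sum_add_distrib, ht, hs]
      | tmul u v =>
        have e : antipode k u * y = ∑ l, b.coord l (antipode k u * y) • b l :=
          (b.sum_repr _).symm
        simp only [LinearMap.lTensor_tmul, LinearMap.mul'_apply, antipode_mul_antidistrib,
          mul_assoc]
        conv_rhs => rw [e]
        simp only [Finset.mul_sum, map_sum, mul_smul_comm, map_smul, smul_eq_mul]
        simp [F, mul_comm]
    simp only [twist_apply, hitR_eq]
    rw [h]
    simp [Algebra.algebraMap_eq_smul_one]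
  have key2 : ∀ (f : Module.Dual k H) (x : H), ∑ l, hitR (F l) (twist (b l) x f) = f y • x := by
    intro f x
    have h : ∀ l, hitR (F l) (twist (b l) x f) = TensorProduct.rid k H
        ((F l ∘ₗ (twist (b l)).flip f).lTensor H (comul x)) := by
      intro l
      rw [twist_apply, hitR_hitR, hitR_eq]
      rfl
    have h2 : ∑ l, F l ∘ₗ (twist (b l)).flip f = f y • counit := by
      ext z
      simpa [mul_comm] using key f z
    simp_rw [h]
    rw [← map_sum, ← LinearMap.sum_apply, ← LinearMap.coe_lTensorHom, ← map_sum, h2]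
    simp
  calc (1 : H) = ∑ j, b.coord j y • b j := (b.sum_repr _).symm
    _ = ∑ j, ∑ l, hitR (F l) (twist (b l) (b j) (b.coord j)) := by simp_rw [key2]
    _ = ∑ l, hitR (F l) (∑ j, twist (b l) (b j) (b.coord j)) := by
      rw [Finset.sum_comm]; simp_rw [map_sum]
    _ = 0 := by simp [h0]

lemma exists_leftIntegral (k H : Type*) [Field k] [Ring H] [HopfAlgebra k H]
    [FiniteDimensional k H] [Nontrivial H] :
    ∃ L : H, L ≠ 0 ∧ ∀ a : H, a * L = counit (R := k) a • L := by
  obtain ⟨y, hy⟩ := exists_sum_twist_ne_zero (Module.finBasis k H)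
  exact ⟨_, hy, isLeftIntegral_sum_twist _ y⟩

end Existence

section Frobenius
variable {k H : Type*} [Field k] [Ring H] [HopfAlgebra k H]

lemma hitL_counit (x : H) : hitL (counit (R := k)) x = x := by
  simp [hitL_eq]

lemma hitR_counit (x : H) : hitR (counit (R := k)) x = x := by
  simp [hitR_eq]

lemma apply_hitR (f g : H →ₗ[k] k) (x : H) : f (hitR g x) = g (hitL f x) := by
  rw [← counit_hitL f (hitR g x), ← hitR_comp_hitL, counit_hitR]

lemma hitL_hitL (f g : H →ₗ[k] k) (x : H) : hitL f (hitL g x) = hitL (f ∘ₗ hitL g) x := by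
  rw [hitL_eq f, comul_hitL, ← LinearMap.comp_apply, ← LinearMap.rTensor_comp, hitL_eq]

lemma hitL_mulLeft {L : H} (f : H →ₗ[k] k) (hL : ∀ a : H, a * L = counit (R := k) a • L) (a : H) :
    hitL (f ∘ₗ LinearMap.mulLeft k (antipode k a)) L = a * hitL f L := by
  have h := congrArg (fun t => TensorProduct.lid k H (f.rTensor H t)) (one_tmul_mul_comul hL a)
  have h₁ : ∀ t : H ⊗[k] H, TensorProduct.lid k H (f.rTensor H (((1 : H) ⊗ₜ[k] a) * t)) =
      a * TensorProduct.lid k H (f.rTensor H t) := by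
    intro t
    induction t with
    | zero => simp
    | tmul a b => simp
    | add a b ha hb => simp only [map_add, mul_add, ha, hb]
  have h₂ : ∀ t : H ⊗[k] H, TensorProduct.lid k H (f.rTensor H ((antipode k a ⊗ₜ[k] (1 : H)) * t)) =
      TensorProduct.lid k H ((f ∘ₗ LinearMap.mulLeft k (antipode k a)).rTensor H t) := by
    intro t
    induction t with
    | zero => simp
    | tmul a b => simp
    | add a b ha hb => simp only [map_add, mul_add, ha, hb]
  simp only [h₁, h₂] at h
  rw [hitL_eq, hitL_eq, h]

lemma hitR_mulLeft {L : H} (f : H →ₗ[k] k) (hL : ∀ a : H, a * L = counit (R := k) a • L) (a : H) :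
    hitR (f ∘ₗ LinearMap.mulLeft k a) L = antipode k a * hitR f L := by
  have h := congrArg (fun t => TensorProduct.rid k H (f.lTensor H t)) (one_tmul_mul_comul hL a)
  have h₁ : ∀ t : H ⊗[k] H, TensorProduct.rid k H (f.lTensor H (((1 : H) ⊗ₜ[k] a) * t)) =
      TensorProduct.rid k H ((f ∘ₗ LinearMap.mulLeft k a).lTensor H t) := by
    intro t
    induction t with
    | zero => simp
    | tmul a b => simp
    | add a b ha hb => simp only [map_add, mul_add, ha, hb]
  have h₂ : ∀ t : H ⊗[k] H, TensorProduct.rid k H (f.lTensor H ((antipode k a ⊗ₜ[k] (1 : H)) * t)) =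
      antipode k a * TensorProduct.rid k H (f.lTensor H t) := by
    intro t
    induction t with
    | zero => simp
    | tmul a b => simp
    | add a b ha hb => simp only [map_add, mul_add, ha, hb]
  simp only [h₁, h₂] at h
  rw [hitR_eq, hitR_eq, h]

lemma hitR_mulRight {L : H} (f : H →ₗ[k] k) (α : H →ₐ[k] k) (hL : ∀ a : H, L * a = α a • L)
    (a : H) :
    hitR (f ∘ₗ LinearMap.mulRight k (antipode k (hitL α.toLinearMap a))) L = hitR f L * a := by
  have h := congrArg (fun t => TensorProduct.rid k H (f.lTensor H t)) (comul_mul_tmul_one α hL a)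
  have h₁ : ∀ t : H ⊗[k] H, TensorProduct.rid k H (f.lTensor H (t * (a ⊗ₜ[k] (1 : H)))) =
      TensorProduct.rid k H (f.lTensor H t) * a := by
    intro t
    induction t with
    | zero => simp
    | tmul a b => simp
    | add a b ha hb => simp only [map_add, add_mul, ha, hb]
  have h₂ : ∀ (c : H) (t : H ⊗[k] H),
      TensorProduct.rid k H (f.lTensor H (t * ((1 : H) ⊗ₜ[k] c))) =
      TensorProduct.rid k H ((f ∘ₗ LinearMap.mulRight k c).lTensor H t) := by
    intro c t
    induction t with
    | zero => simp
    | tmul a b => simp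
    | add a b ha hb => simp only [map_add, add_mul, ha, hb]
  simp only [h₁, h₂] at h
  rw [hitR_eq, hitR_eq, h]

lemma hitL_mulRight {L : H} (f : H →ₗ[k] k) (α : H →ₐ[k] k) (hL : ∀ a : H, L * a = α a • L)
    (a : H) :
    hitL (f ∘ₗ LinearMap.mulRight k a) L = hitL f L * antipode k (hitL α.toLinearMap a) := by
  have h := congrArg (fun t => TensorProduct.lid k H (f.rTensor H t)) (comul_mul_tmul_one α hL a)
  have h₁ : ∀ t : H ⊗[k] H, TensorProduct.lid k H (f.rTensor H (t * (a ⊗ₜ[k] (1 : H)))) =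
      TensorProduct.lid k H ((f ∘ₗ LinearMap.mulRight k a).rTensor H t) := by
    intro t
    induction t with
    | zero => simp
    | tmul a b => simp
    | add a b ha hb => simp only [map_add, add_mul, ha, hb]
  have h₂ : ∀ (c : H) (t : H ⊗[k] H),
      TensorProduct.lid k H (f.rTensor H (t * ((1 : H) ⊗ₜ[k] c))) =
      TensorProduct.lid k H (f.rTensor H t) * c := by
    intro c t
    induction t with
    | zero => simp
    | tmul a b => simp
    | add a b ha hb => simp only [map_add, add_mul, ha, hb]
  simp only [h₁, h₂] at h
  rw [hitL_eq, hitL_eq, h]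

/-- The map `f ↦ x₁ f(x₂)`. -/
noncomputable def hitRHom (x : H) : Module.Dual k H →ₗ[k] H where
  toFun f := hitR f x
  map_add' f g := by simp [hitR_eq, LinearMap.lTensor_add]
  map_smul' c f := by simp [hitR_eq, LinearMap.lTensor_smul]

/-- The map `f ↦ f(x₁) x₂`. -/
noncomputable def hitLHom (x : H) : Module.Dual k H →ₗ[k] H where
  toFun f := hitL f x
  map_add' f g := by simp [hitL_eq, LinearMap.rTensor_add]
  map_smul' c f := by simp [hitL_eq, LinearMap.rTensor_smul]

lemma sum_hitR_hitR_mulLeft {ι : Type*} [Fintype ι] (b : Module.Basis ι k H) (f : H →ₗ[k] k)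
    (x : H) : ∑ i, hitR (b.coord i ∘ₗ antipode k) (hitR (f ∘ₗ LinearMap.mulLeft k (b i)) x) =
      f 1 • x := by
  have h : ∑ i, (b.coord i ∘ₗ antipode k) ∘ₗ hitR (f ∘ₗ LinearMap.mulLeft k (b i)) =
      f 1 • counit (R := k) (A := H) := by
    ext z
    have h₁ : ∀ t : H ⊗[k] H, ∑ i, b.coord i (antipode k (TensorProduct.rid k H
        ((f ∘ₗ LinearMap.mulLeft k (b i)).lTensor H t))) =
        f (LinearMap.mul' k H ((antipode k).rTensor H t)) := by
      intro t
      induction t with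
      | zero => simp
      | tmul u v =>
        have e : antipode k u = ∑ l, b.coord l (antipode k u) • b l := (b.sum_repr _).symm
        simp only [LinearMap.rTensor_tmul, LinearMap.mul'_apply]
        conv_rhs => rw [e]
        simp only [Finset.sum_mul, map_sum, smul_mul_assoc, map_smul, smul_eq_mul]
        simp [mul_comm]
      | add a b ha hb => simp only [map_add, Finset.sum_add_distrib, ha, hb]
    simp only [LinearMap.sum_apply, LinearMap.comp_apply, hitR_eq, h₁]
    simp [Algebra.algebraMap_eq_smul_one, mul_comm]
  simp_rw [hitR_hitR]
  change ∑ i, hitRHom x _ = _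
  rw [← map_sum, h, map_smul]
  exact congrArg _ (hitR_counit x)

variable [FiniteDimensional k H]

lemma hitRHom_injective {L : H} (hL : ∀ a : H, a * L = counit (R := k) a • L) (h0 : L ≠ 0) :
    Function.Injective (hitRHom (k := k) L) := by
  have h1 : ∀ f : H →ₗ[k] k, hitR f L = 0 → f 1 = 0 := by
    intro f hf
    have := sum_hitR_hitR_mulLeft (Module.finBasis k H) f L
    simp_rw [hitR_mulLeft f hL, hf] at this
    simpa [h0] using this.symm
  refine (injective_iff_map_eq_zero _).2 fun f hf => ?_
  ext a
  have := h1 (f ∘ₗ LinearMap.mulLeft k a) (by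
    rw [hitR_mulLeft f hL]
    change _ * hitRHom L f = _
    rw [hf, mul_zero])
  simpa using this

lemma hitRHom_surjective {L : H} (hL : ∀ a : H, a * L = counit (R := k) a • L) (h0 : L ≠ 0) :
    Function.Surjective (hitRHom (k := k) L) :=
  (LinearMap.injective_iff_surjective_of_finrank_eq_finrank
    Subspace.dual_finrank_eq).1 (hitRHom_injective hL h0)

lemma hitLHom_injective {L : H} (hL : ∀ a : H, a * L = counit (R := k) a • L) (h0 : L ≠ 0) :
    Function.Injective (hitLHom (k := k) L) := by
  refine (injective_iff_map_eq_zero _).2 fun f hf => ?_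
  ext x
  obtain ⟨g, rfl⟩ := hitRHom_surjective hL h0 x
  change f (hitR g L) = 0
  rw [apply_hitR]
  change g (hitLHom L f) = 0
  rw [hf, map_zero]

lemma hitLHom_surjective {L : H} (hL : ∀ a : H, a * L = counit (R := k) a • L) (h0 : L ≠ 0) :
    Function.Surjective (hitLHom (k := k) L) :=
  (LinearMap.injective_iff_surjective_of_finrank_eq_finrank
    Subspace.dual_finrank_eq).1 (hitLHom_injective hL h0)

end Frobenius

/-- A left integral `Λ` together with a functional `lam` normalised by `lam(Λ₁) Λ₂ = 1`. -/
structure IntegralPair (k H : Type*) [Field k] [Ring H] [HopfAlgebra k H] where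
  /-- the left integral -/
  Λ : H
  /-- the functional -/
  lam : H →ₗ[k] k
  mul_Λ : ∀ a : H, a * Λ = counit (R := k) a • Λ
  hitL_lam_Λ : hitL lam Λ = 1

lemma exists_integralPair (k H : Type*) [Field k] [Ring H] [HopfAlgebra k H]
    [FiniteDimensional k H] [Nontrivial H] : Nonempty (IntegralPair k H) := by
  obtain ⟨L, h0, hL⟩ := exists_leftIntegral k H
  obtain ⟨f, hf⟩ := hitLHom_surjective hL h0 1
  exact ⟨⟨L, f, hL, hf⟩⟩

namespace IntegralPair
variable {k H : Type*} [Field k] [Ring H] [HopfAlgebra k H]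

lemma lam_Λ (P : IntegralPair k H) : P.lam P.Λ = 1 := by
  rw [← counit_hitL, P.hitL_lam_Λ, Bialgebra.counit_one]

lemma Λ_ne_zero (P : IntegralPair k H) : P.Λ ≠ 0 := by
  intro h
  have := P.lam_Λ
  rw [h, map_zero] at this
  exact zero_ne_one this

lemma hitL_lam_antipode (P : IntegralPair k H) (a : H) :
    hitL (P.lam ∘ₗ LinearMap.mulLeft k (antipode k a)) P.Λ = a := by
  rw [hitL_mulLeft P.lam P.mul_Λ, P.hitL_lam_Λ, mul_one]

lemma antipode_injective (P : IntegralPair k H) :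
    Function.Injective (antipode k : H →ₗ[k] H) := by
  intro a b h
  rw [← P.hitL_lam_antipode a, h, P.hitL_lam_antipode b]

variable [FiniteDimensional k H]

lemma antipode_surjective (P : IntegralPair k H) :
    Function.Surjective (antipode k : H →ₗ[k] H) :=
  LinearMap.injective_iff_surjective.1 P.antipode_injective

lemma ext_dual (P : IntegralPair k H) {f g : H →ₗ[k] k} (h : hitL f P.Λ = hitL g P.Λ) : f = g :=
  hitLHom_injective P.mul_Λ P.Λ_ne_zero h

lemma exists_hitR (P : IntegralPair k H) (x : H) : ∃ f : H →ₗ[k] k, hitR f P.Λ = x :=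
  hitRHom_surjective P.mul_Λ P.Λ_ne_zero x

lemma hitL_lam (P : IntegralPair k H) (x : H) : hitL P.lam x = P.lam x • (1 : H) := by
  rw [← sub_eq_zero, ← Module.forall_dual_apply_eq_zero_iff k]
  intro f
  have h : f ∘ₗ hitL P.lam = f 1 • P.lam := by
    refine P.ext_dual ?_
    rw [← hitL_hitL, P.hitL_lam_Λ]
    change hitL f 1 = hitLHom P.Λ (f 1 • P.lam)
    rw [map_smul]
    change _ = _ • hitL _ _
    rw [P.hitL_lam_Λ, hitL_eq, Bialgebra.comul_one, Algebra.TensorProduct.one_def]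
    simp
  have := LinearMap.congr_fun h x
  simp only [LinearMap.comp_apply, LinearMap.smul_apply, smul_eq_mul] at this
  rw [map_sub, this, map_smul, smul_eq_mul, mul_comm, sub_self]

lemma eq_smul_Λ (P : IntegralPair k H) {L : H} (hL : ∀ a : H, a * L = counit (R := k) a • L) :
    L = P.lam L • P.Λ := by
  have hinj : Function.Injective ((LinearMap.mul k H).compr₂ P.lam) := by
    refine (injective_iff_map_eq_zero _).2 fun x hx => ?_
    obtain ⟨a, rfl⟩ := P.antipode_surjective x
    have h : P.lam ∘ₗ LinearMap.mulLeft k (antipode k a) = 0 := by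
      ext y
      exact LinearMap.congr_fun hx y
    have h2 := P.hitL_lam_antipode a
    rw [h] at h2
    rw [← h2]
    simp [hitL_eq]
  have hsurj := (LinearMap.injective_iff_surjective_of_finrank_eq_finrank
    Subspace.dual_finrank_eq.symm).1 hinj
  obtain ⟨x, hx⟩ := hsurj counit
  obtain ⟨a, rfl⟩ := P.antipode_surjective x
  have h : P.lam ∘ₗ LinearMap.mulLeft k (antipode k a) = counit := by
    ext y
    exact LinearMap.congr_fun hx y
  have h1 : P.Λ = a := by
    have := P.hitL_lam_antipode a
    rwa [h, hitL_counit] at this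
  have h2 := hitL_mulLeft P.lam hL a
  rwa [h, hitL_counit, P.hitL_lam, mul_smul_comm, mul_one, ← h1] at h2

/-- The character `α` with `Λ a = α(a) Λ`. -/
noncomputable def α (P : IntegralPair k H) : H →ₐ[k] k :=
  have h : ∀ a, P.Λ * a = P.lam (P.Λ * a) • P.Λ := fun a => P.eq_smul_Λ fun b => by
    rw [← mul_assoc, P.mul_Λ, smul_mul_assoc]
  AlgHom.ofLinearMap (P.lam ∘ₗ LinearMap.mulLeft k P.Λ) (by simp [P.lam_Λ]) fun a b => by
    simp only [LinearMap.comp_apply, LinearMap.mulLeft_apply]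
    rw [← mul_assoc, h a, smul_mul_assoc, map_smul, map_smul, P.lam_Λ]
    simp

lemma Λ_mul (P : IntegralPair k H) (a : H) : P.Λ * a = P.α a • P.Λ :=
  P.eq_smul_Λ fun b => by rw [← mul_assoc, P.mul_Λ, smul_mul_assoc]

/-- The distinguished group-like element `Λ₁ lam(Λ₂)`. -/
noncomputable def g (P : IntegralPair k H) : H := hitR P.lam P.Λ

lemma hitR_lam (P : IntegralPair k H) (x : H) : hitR P.lam x = P.lam x • P.g := by
  rw [← sub_eq_zero, ← Module.forall_dual_apply_eq_zero_iff k]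
  intro f
  have h : P.lam ∘ₗ hitL f = P.lam (hitL f P.Λ) • P.lam := by
    refine P.ext_dual ?_
    rw [← hitL_hitL, P.hitL_lam]
    change _ = hitLHom P.Λ _
    rw [map_smul]
    change _ = _ • hitL _ _
    rw [P.hitL_lam_Λ]
  have := LinearMap.congr_fun h x
  simp only [LinearMap.comp_apply, LinearMap.smul_apply, smul_eq_mul] at this
  rw [map_sub, apply_hitR, this, map_smul, g, apply_hitR, smul_eq_mul, mul_comm, sub_self]

lemma isGroupLikeElem_g (P : IntegralPair k H) : IsGroupLikeElem k P.g where
  counit_eq_one := by rw [g, counit_hitR, P.lam_Λ]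
  comul_eq_tmul_self := by
    have h : hitR P.lam = LinearMap.toSpanSingleton k H P.g ∘ₗ P.lam := by
      ext x
      simp [P.hitR_lam]
    have h2 : ∀ t : H ⊗[k] H, (LinearMap.toSpanSingleton k H P.g ∘ₗ P.lam).lTensor H t =
        TensorProduct.rid k H (P.lam.lTensor H t) ⊗ₜ[k] P.g := by
      intro t
      induction t with
      | zero => simp
      | tmul a b => simp [TensorProduct.tmul_smul, TensorProduct.smul_tmul']
      | add a b ha hb => simp only [map_add, ha, hb, TensorProduct.add_tmul]
    conv_lhs => rw [g, comul_hitR, h, h2, ← hitR_eq]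
    rfl

lemma lam_mul (P : IntegralPair k H) (x a : H) :
    P.lam (x * a) = P.lam (antipode k (antipode k (hitL P.α.toLinearMap a)) * x) := by
  obtain ⟨f, rfl⟩ := P.exists_hitR x
  have h1 := apply_hitR (P.lam ∘ₗ LinearMap.mulRight k a) f P.Λ
  have h2 := apply_hitR (P.lam ∘ₗ LinearMap.mulLeft k
    (antipode k (antipode k (hitL P.α.toLinearMap a)))) f P.Λ
  rw [hitL_mulRight P.lam P.α P.Λ_mul, P.hitL_lam_Λ, one_mul] at h1
  rw [P.hitL_lam_antipode] at h2
  simpa using h1.trans h2.symm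

/-- Radford's formula. -/
lemma g_mul (P : IntegralPair k H) (x : H) :
    P.g * hitR P.α.toLinearMap x =
      antipode k (antipode k (antipode k (antipode k (hitL P.α.toLinearMap x)))) * P.g := by
  rw [g, ← hitR_mulRight P.lam P.α P.Λ_mul, ← hitR_comp_hitL]
  have h : P.lam ∘ₗ LinearMap.mulRight k
      (antipode k (hitR P.α.toLinearMap (hitL P.α.toLinearMap x))) =
      P.lam ∘ₗ LinearMap.mulLeft k (antipode k (antipode k (antipode k
        (hitL P.α.toLinearMap x)))) := by
    ext y
    simp only [LinearMap.comp_apply, LinearMap.mulRight_apply, LinearMap.mulLeft_apply]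
    rw [P.lam_mul, hitL_antipode_hitR]
  rw [h, hitR_mulLeft _ P.mul_Λ]

end IntegralPair
namespace IntegralPair
variable {k H : Type*} [Field k] [Ring H] [HopfAlgebra k H] [FiniteDimensional k H]

/-- The inverse of the antipode. -/
noncomputable def antipodeInv (P : IntegralPair k H) : H →ₗ[k] H :=
  (LinearEquiv.ofBijective (antipode k) ⟨P.antipode_injective, P.antipode_surjective⟩).symm

lemma antipode_antipodeInv (P : IntegralPair k H) (x : H) : antipode k (P.antipodeInv x) = x :=
  (LinearEquiv.ofBijective (antipode k)
    ⟨P.antipode_injective, P.antipode_surjective⟩).apply_symm_apply x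

lemma antipodeInv_mul (P : IntegralPair k H) (x y : H) :
    P.antipodeInv (x * y) = P.antipodeInv y * P.antipodeInv x := by
  refine P.antipode_injective ?_
  simp only [antipode_mul_antidistrib, P.antipode_antipodeInv]

/-- The inverse square of the antipode. -/
noncomputable def D (P : IntegralPair k H) : Module.End k H := P.antipodeInv ∘ₗ P.antipodeInv

lemma antipode_D (P : IntegralPair k H) (x : H) : antipode k (P.D x) = P.antipodeInv x :=
  P.antipode_antipodeInv _

lemma trace_eq (P : IntegralPair k H) (T : Module.End k H) :
    LinearMap.trace k H T = P.lam (LinearMap.mul' k H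
      (TensorProduct.map (antipode k ∘ₗ T) LinearMap.id
        (TensorProduct.comm k H H (comul P.Λ)))) := by
  let A : H ⊗[k] H →ₗ[k] Module.End k H := TensorProduct.lift <| LinearMap.mk₂ k
    (fun x y => (P.lam ∘ₗ LinearMap.mulRight k x ∘ₗ antipode k ∘ₗ T).smulRight y)
    (fun x x' y => by ext; simp [mul_add, add_smul])
    (fun c x y => by ext; simp [mul_smul])
    (fun x y y' => by ext; simp)
    (fun c x y => by ext; exact smul_comm _ _ _)
  have h1 : A (comul P.Λ) = T := by
    ext a
    have h : ∀ t : H ⊗[k] H, A t a = TensorProduct.lid k H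
        ((P.lam ∘ₗ LinearMap.mulLeft k (antipode k (T a))).rTensor H t) := by
      intro t
      induction t with
      | zero => simp
      | tmul a b => simp [A]
      | add a b ha hb => simp only [map_add, LinearMap.add_apply, ha, hb]
    rw [h, ← hitL_eq, P.hitL_lam_antipode]
  have h2 : ∀ t : H ⊗[k] H, LinearMap.trace k H (A t) = P.lam (LinearMap.mul' k H
      (TensorProduct.map (antipode k ∘ₗ T) LinearMap.id (TensorProduct.comm k H H t))) := by
    intro t
    induction t with
    | zero => simp
    | tmul a b => simp [A]
    | add a b ha hb => simp only [map_add, ha, hb]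
  rw [← h2, h1]

lemma mul_antipodeInv_comm_comul (P : IntegralPair k H) (x : H) :
    LinearMap.mul' k H (TensorProduct.map P.antipodeInv LinearMap.id
      (TensorProduct.comm k H H (comul x))) = counit (R := k) x • (1 : H) := by
  refine P.antipode_injective ?_
  have h : ∀ t : H ⊗[k] H, antipode k (LinearMap.mul' k H (TensorProduct.map P.antipodeInv
      LinearMap.id (TensorProduct.comm k H H t))) =
      LinearMap.mul' k H ((antipode k).rTensor H t) := by
    intro t
    induction t with
    | zero => simp
    | tmul a b => simp [antipode_mul_antidistrib, P.antipode_antipodeInv]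
    | add a b ha hb => simp only [map_add, ha, hb]
  rw [h, mul_antipode_rTensor_comul_apply, Algebra.algebraMap_eq_smul_one, map_smul, antipode_one]

lemma trace_D_mulRight (P : IntegralPair k H) (a : H) :
    LinearMap.trace k H (P.D * LinearMap.mulRight k a) =
      counit (R := k) P.Λ * P.lam (P.antipodeInv a) := by
  have h : ∀ t : H ⊗[k] H, LinearMap.mul' k H (TensorProduct.map
      (antipode k ∘ₗ (P.D * LinearMap.mulRight k a)) LinearMap.id
        (TensorProduct.comm k H H t)) = P.antipodeInv a * LinearMap.mul' k H
      (TensorProduct.map P.antipodeInv LinearMap.id (TensorProduct.comm k H H t)) := by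
    intro t
    induction t with
    | zero => simp
    | tmul a b => simp [P.antipode_D, P.antipodeInv_mul, mul_assoc]
    | add a b ha hb => simp only [map_add, mul_add, ha, hb]
  rw [P.trace_eq, h, P.mul_antipodeInv_comm_comul]
  simp

lemma trace_D_hitR (P : IntegralPair k H) (f : H →ₗ[k] k) :
    LinearMap.trace k H (P.D * hitR f) = f P.Λ * P.lam 1 := by
  have h : ∀ t : H ⊗[k] H, TensorProduct.map
      (antipode k ∘ₗ (P.D * hitR f)) LinearMap.id (TensorProduct.comm k H H t) =
      TensorProduct.map P.antipodeInv LinearMap.id (TensorProduct.comm k H H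
        ((hitR f).lTensor H t)) := by
    intro t
    induction t with
    | zero => simp
    | tmul a b => simp [P.antipode_D]
    | add a b ha hb => simp only [map_add, ha, hb]
  rw [P.trace_eq, h, ← comul_hitR, P.mul_antipodeInv_comm_comul, counit_hitR]
  simp

/-- Maschke's theorem. -/
lemma isSemisimpleRing (P : IntegralPair k H) (h0 : counit (R := k) P.Λ ≠ 0) :
    IsSemisimpleRing H := by
  refine (isSemisimpleModule_iff H H).2 ⟨fun W => ?_⟩
  obtain ⟨π₀, hπ₀⟩ := (W.restrictScalars k).subtype.exists_leftInverse_of_injective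
    (Submodule.ker_subtype _)
  let E : H ⊗[k] H →ₗ[k] Module.End k H := TensorProduct.lift <| LinearMap.mk₂ k
    (fun x y => LinearMap.mulLeft k x ∘ₗ (W.restrictScalars k).subtype ∘ₗ π₀ ∘ₗ
      LinearMap.mulLeft k y)
    (fun x x' y => by ext; simp [add_mul])
    (fun c x y => by ext; simp)
    (fun x y y' => by ext; simp [mul_add, add_mul])
    (fun c x y => by ext; simp)
  have hW : ∀ (t : H ⊗[k] H) v, E t v ∈ W := by
    intro t v
    induction t with
    | zero => simp
    | tmul x y => exact W.smul_mem x (π₀ (y * v)).2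
    | add a b ha hb => rw [map_add]; exact W.add_mem ha hb
  have hmul : ∀ (t : H ⊗[k] H) (a v : H), a * E t v = E ((a ⊗ₜ[k] (1 : H)) * t) v := by
    intro t a v
    induction t with
    | zero => simp
    | tmul x y => simp [E]
    | add a b ha hb => simp only [map_add, mul_add, LinearMap.add_apply, ha, hb]
  have hmul' : ∀ (t : H ⊗[k] H) (a v : H), E t (a * v) = E (t * ((1 : H) ⊗ₜ[k] a)) v := by
    intro t a v
    induction t with
    | zero => simp
    | tmul x y => simp [E]
    | add a b ha hb => simp only [map_add, add_mul, LinearMap.add_apply, ha, hb]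
  have hE : ∀ (t : H ⊗[k] H), ∀ w ∈ W, E t w = LinearMap.mul' k H t * w := by
    intro t w hw
    induction t with
    | zero => simp
    | tmul x y =>
      have := LinearMap.congr_fun hπ₀ ⟨y * w, W.smul_mem y hw⟩
      have h2 : π₀ (y * w) = ⟨y * w, W.smul_mem y hw⟩ := this
      simp [E, h2, mul_assoc]
    | add a b ha hb => simp only [map_add, add_mul, LinearMap.add_apply, ha, hb]
  let e : H ⊗[k] H := (antipode k).lTensor H (comul P.Λ)
  have he : ∀ a : H, (a ⊗ₜ[k] (1 : H)) * e = e * ((1 : H) ⊗ₜ[k] a) := by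
    intro a
    obtain ⟨b, rfl⟩ := P.antipode_surjective a
    have h1 : ∀ t : H ⊗[k] H, (antipode k b ⊗ₜ[k] (1 : H)) * (antipode k).lTensor H t =
        (antipode k).lTensor H ((antipode k b ⊗ₜ[k] (1 : H)) * t) := by
      intro t
      induction t with
      | zero => simp
      | tmul x y => simp
      | add a b ha hb => simp only [map_add, mul_add, ha, hb]
    have h2 : ∀ t : H ⊗[k] H, (antipode k).lTensor H t * ((1 : H) ⊗ₜ[k] antipode k b) =
        (antipode k).lTensor H (((1 : H) ⊗ₜ[k] b) * t) := by
      intro t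
      induction t with
      | zero => simp
      | tmul x y => simp [antipode_mul_antidistrib]
      | add a b ha hb => simp only [map_add, mul_add, add_mul, ha, hb]
    rw [h1, h2, one_tmul_mul_comul P.mul_Λ]
  let π : H →ₗ[H] W :=
    { toFun := fun v => ⟨(counit (R := k) P.Λ)⁻¹ • E e v,
        (W.restrictScalars k).smul_mem _ (hW e v)⟩
      map_add' := fun v w => by ext; simp
      map_smul' := fun a v => by
        ext
        simp only [smul_eq_mul, RingHom.id_apply, Submodule.coe_smul, mul_smul_comm]
        rw [hmul', ← he, hmul] }
  refine ⟨LinearMap.ker π, LinearMap.isCompl_of_proj fun w => ?_⟩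
  ext
  change (counit (R := k) P.Λ)⁻¹ • E e w = w
  rw [hE _ _ w.2, mul_antipode_lTensor_comul_apply, Algebra.algebraMap_eq_smul_one,
    smul_mul_assoc, one_mul, inv_smul_smul₀ h0]

end IntegralPair

section RootsOfUnity
open Polynomial
variable {k : Type*} [Field k] [CharZero k]

lemma eq_of_sum_mul_pow_eq_zero {r : ℕ} (hr : r.Prime) {ζ : k} (hζ : IsPrimitiveRoot ζ r)
    (c : ℕ → ℤ) (h : ∑ i ∈ Finset.range r, (c i : k) * ζ ^ i = 0) :
    ∀ i < r, c i = c 0 := by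
  have : Fact r.Prime := ⟨hr⟩
  let P : ℚ[X] := ∑ i ∈ Finset.range r, C (c i : ℚ) * X ^ i
  have hcoeff : ∀ i < r, P.coeff i = c i := by
    intro i hi
    simp [P, Polynomial.finsetSum_coeff, Polynomial.coeff_X_pow, hi]
  have hP : aeval ζ P = 0 := by
    simpa [P] using h
  have hdvd : cyclotomic r ℚ ∣ P := by
    rw [cyclotomic_eq_minpoly_rat hζ hr.pos]
    exact minpoly.dvd ℚ ζ hP
  obtain ⟨Q, hQ⟩ := hdvd
  have hcoeffc : ∀ i < r, (cyclotomic r ℚ).coeff i = 1 := by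
    intro i hi
    simp [cyclotomic_prime, Polynomial.finsetSum_coeff, Polynomial.coeff_X_pow, hi]
  have hdeg : P.degree < r := by
    refine (degree_lt_iff_coeff_zero _ _).2 fun m hm => ?_
    simp [P, Polynomial.finsetSum_coeff, Polynomial.coeff_X_pow, hm.not_gt]
  have hQ0 : Q = C (Q.coeff 0) := by
    by_cases h0 : Q = 0
    · simp [h0]
    refine eq_C_of_natDegree_eq_zero ?_
    have h1 : P.natDegree = (r - 1) + Q.natDegree := by
      rw [hQ, natDegree_mul (cyclotomic_ne_zero r ℚ) h0, natDegree_cyclotomic,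
        Nat.totient_prime hr]
    have hP0 : P ≠ 0 := by
      rw [hQ]; exact mul_ne_zero (cyclotomic_ne_zero r ℚ) h0
    have h2 := (natDegree_lt_iff_degree_lt hP0).2 hdeg
    have := hr.two_le
    omega
  have hall : ∀ i < r, (c i : ℚ) = Q.coeff 0 := by
    intro i hi
    rw [← hcoeff i hi, hQ, hQ0, coeff_mul_C, hcoeffc i hi]
    simp
  intro i hi
  have := (hall i hi).trans (hall 0 hr.pos).symm
  exact_mod_cast this

lemma eq_one_of_sum_eq_card {n : ℕ} (hn : 0 < n) (s : Multiset k) (hs : ∀ a ∈ s, a ^ n = 1)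
    (hsum : s.sum = s.card) : ∀ a ∈ s, a = 1 := by
  let F := algebraicClosure ℚ k
  have hmem : ∀ a ∈ s, a ∈ F := by
    intro a ha
    refine mem_algebraicClosure_iff.2 ⟨X ^ n - 1, ?_, by simp [hs a ha]⟩
    exact (monic_X_pow_sub_C (1 : ℚ) hn.ne').ne_zero
  have : Algebra.IsAlgebraic ℚ F := algebraicClosure.isAlgebraic ℚ k
  let φ : F →ₐ[ℚ] ℂ := IsAlgClosed.lift
  lift s to Multiset F using hmem
  have hsum' : s.sum = s.card := by
    refine (algebraMap F k).injective ?_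
    rw [map_multiset_sum]
    rw [map_natCast, ← Multiset.card_map]
    exact hsum
  have hs' : ∀ a ∈ s, a ^ n = 1 := by
    intro a ha
    exact Subtype.ext (by simpa using hs a (Multiset.mem_map_of_mem _ ha))
  have hnorm : ∀ a ∈ s, ‖φ a‖ = 1 := by
    intro a ha
    refine Complex.norm_eq_one_of_pow_eq_one ?_ hn.ne'
    rw [← map_pow, hs' a ha, map_one]
  have hre : (s.map fun a => (φ a).re).sum = (s.map fun _ => (1 : ℝ)).sum := by
    have := congrArg (fun x => (φ x).re) hsum'
    simp only [map_multiset_sum, map_natCast, Complex.natCast_re] at this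
    have h2 : (s.map φ).sum.re = (s.map fun a => (φ a).re).sum := by
      have := map_multiset_sum Complex.reAddGroupHom (s.map φ)
      simpa using this
    rw [← h2, this]
    simp
  have hall : ∀ a ∈ s, (φ a).re = 1 := by
    by_contra! hne
    obtain ⟨a, ha, hne⟩ := hne
    have hle : ∀ a ∈ s, (φ a).re ≤ 1 := fun a ha => hnorm a ha ▸ Complex.re_le_norm _
    exact (Multiset.sum_lt_sum hle ⟨a, ha, lt_of_le_of_ne (hle a ha) hne⟩).ne hre
  intro a ha
  obtain ⟨b, hb, rfl⟩ := Multiset.mem_map.1 ha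
  have h1 : φ b = 1 := by
    have h2 := hnorm b hb
    have h3 := hall b hb
    rw [← h2] at h3
    have h4 : (φ b).re = ‖φ b‖ := h3
    rw [Complex.re_eq_norm] at h4
    have := Complex.eq_re_of_ofReal_le h4
    rw [this, hall b hb]
    simp
  have : b = 1 := φ.toRingHom.injective (by simpa using h1)
  simp [this]

lemma prime_le_card {r : ℕ} (hr : r.Prime) (hodd : Odd r) {ζ : k} (hζ : IsPrimitiveRoot ζ r)
    (s : Multiset k) (hs : ∀ a ∈ s, a ^ (2 * r) = 1) (hsum : s.sum = 0) (hcard : Odd s.card) :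
    r ≤ s.card := by
  have : NeZero r := ⟨hr.ne_zero⟩
  have hform : ∀ t : Multiset k, (∀ a ∈ t, a ^ (2 * r) = 1) → ∃ d d' : ℕ → ℕ,
      t.sum = ∑ i ∈ Finset.range r, ((d i : k) - d' i) * ζ ^ i ∧
      t.card = ∑ i ∈ Finset.range r, (d i + d' i) := by
    intro t
    induction t using Multiset.induction with
    | empty => exact fun _ => ⟨0, 0, by simp⟩
    | cons a t ih =>
      intro h
      obtain ⟨d, d', h1, h2⟩ := ih fun b hb => h b (Multiset.mem_cons_of_mem hb)
      have ha := h a (Multiset.mem_cons_self a t)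
      rw [mul_comm, pow_mul, sq_eq_one_iff] at ha
      rcases ha with ha | ha
      · obtain ⟨i, hi, rfl⟩ := hζ.eq_pow_of_pow_eq_one ha
        refine ⟨d + Pi.single i 1, d', ?_, ?_⟩
        · simp [h1, add_mul, sub_mul, Finset.sum_add_distrib, Pi.single_apply, hi]
          ring
        · simp [h2, Finset.sum_add_distrib, Pi.single_apply, hi]
          ring
      · obtain ⟨i, hi, hia⟩ := hζ.eq_pow_of_pow_eq_one
          (show (-a) ^ r = 1 by rw [hodd.neg_pow, ha, neg_neg])
        obtain rfl : a = -ζ ^ i := by rw [hia, neg_neg]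
        refine ⟨d, d' + Pi.single i 1, ?_, ?_⟩
        · simp [h1, add_mul, sub_mul, Finset.sum_add_distrib, Pi.single_apply, hi]
          ring
        · simp [h2, Finset.sum_add_distrib, Pi.single_apply, hi]
          ring
  obtain ⟨d, d', h1, h2⟩ := hform s hs
  have hc := eq_of_sum_mul_pow_eq_zero hr hζ (fun i => (d i : ℤ) - d' i) (by
    rw [← hsum, h1]; simp)
  have hc0 : d 0 ≠ d' 0 := by
    intro h0
    have : ∀ i ∈ Finset.range r, d i + d' i = 2 * d' i := by
      intro i hi
      have := hc i (Finset.mem_range.1 hi)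
      omega
    rw [h2, Finset.sum_congr rfl this, ← Finset.mul_sum] at hcard
    exact (Nat.not_odd_iff_even.2 (even_two_mul _)) hcard
  rw [h2]
  calc r = ∑ i ∈ Finset.range r, 1 := by simp
    _ ≤ _ := Finset.sum_le_sum fun i hi => by
      have := hc i (Finset.mem_range.1 hi)
      omega

end RootsOfUnity

section FiniteOrder
variable {k V : Type*} [Field k] [AddCommGroup V] [Module k V] [FiniteDimensional k V]

lemma pow_eq_one_of_mem_roots_charpoly {T : Module.End k V} {n : ℕ} (hT : T ^ n = 1) {a : k}
    (ha : a ∈ T.charpoly.roots) : a ^ n = 1 := by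
  have h1 := (Module.End.hasEigenvalue_iff_isRoot_charpoly T a).2 (Polynomial.isRoot_of_mem_roots ha)
  obtain ⟨v, hv⟩ := h1.exists_hasEigenvector
  have h2 := hv.pow_apply n
  rw [hT, Module.End.one_apply] at h2
  have h3 : (a ^ n - 1) • v = 0 := by rw [sub_smul, one_smul, ← h2, sub_self]
  exact sub_eq_zero.1 ((smul_eq_zero.1 h3).resolve_right hv.2)

variable [IsAlgClosed k]

lemma card_roots_charpoly (T : Module.End k V) :
    T.charpoly.roots.card = Module.finrank k V := by
  rw [← LinearMap.charpoly_natDegree T, (IsAlgClosed.splits T.charpoly).natDegree_eq_card_roots]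

lemma sum_roots_charpoly (T : Module.End k V) : T.charpoly.roots.sum = LinearMap.trace k V T :=
  (Module.End.trace_eq_sum_roots_charpoly_of_splits (IsAlgClosed.splits _)).symm

variable [CharZero k]

open Polynomial in
lemma eq_one_of_trace_eq_finrank {T : Module.End k V} {n : ℕ} (hn : 0 < n) (hT : T ^ n = 1)
    (htr : LinearMap.trace k V T = Module.finrank k V) : T = 1 := by
  have h1 : ∀ a ∈ T.charpoly.roots, a = 1 := by
    refine eq_one_of_sum_eq_card hn _ (fun a ha => pow_eq_one_of_mem_roots_charpoly hT ha) ?_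
    rw [card_roots_charpoly, sum_roots_charpoly, htr]
  have h2 : T.charpoly = (X - C 1) ^ Module.finrank k V := by
    rw [(IsAlgClosed.splits T.charpoly).eq_prod_roots_of_monic T.charpoly_monic,
      Multiset.eq_replicate.2 ⟨card_roots_charpoly T, h1⟩]
    simp
  have h3 : IsNilpotent (T - algebraMap k _ 1) := by
    refine ⟨Module.finrank k V, ?_⟩
    have := T.aeval_self_charpoly
    rw [h2] at this
    simpa using this
  have h4 : (T - algebraMap k _ 1).IsSemisimple := by
    rw [Module.End.isSemisimple_sub_algebraMap_iff]
    refine Module.End.isSemisimple_of_squarefree_aeval_eq_zero (p := X ^ n - C 1) ?_ (by simp [hT])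
    refine (separable_X_pow_sub_C (1 : k) ?_ one_ne_zero).squarefree
    exact_mod_cast hn.ne'
  have := Module.End.eq_zero_of_isNilpotent_isSemisimple h3 h4
  simpa [sub_eq_zero] using this

lemma prime_le_finrank {D : Module.End k V} {r : ℕ} (hr : r.Prime) (hodd : Odd r)
    (hD : D ^ (2 * r) = 1) (htr : LinearMap.trace k V D = 0) (hV : Odd (Module.finrank k V)) :
    r ≤ Module.finrank k V := by
  have : NeZero (r : k) := ⟨by exact_mod_cast hr.ne_zero⟩
  obtain ⟨ζ, hζ⟩ := HasEnoughRootsOfUnity.exists_primitiveRoot k r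
  rw [← card_roots_charpoly D] at hV ⊢
  exact prime_le_card hr hodd hζ _ (fun a ha => pow_eq_one_of_mem_roots_charpoly hD ha)
    ((sum_roots_charpoly D).trans htr) hV

/-- An endomorphism of finite order all of whose powers have trace `0` or `finrank k V`. -/
lemma finrank_fixed_mul_orderOf {T : Module.End k V} (hfin : 0 < orderOf T)
    (htr : ∀ i, LinearMap.trace k V (T ^ i) ^ 2 =
      Module.finrank k V * LinearMap.trace k V (T ^ i))
    {W : Submodule k V} (hW : ∀ x, x ∈ W ↔ T x = x) :
    Module.finrank k W * orderOf T = Module.finrank k V ∧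
    ∀ (D : Module.End k V) (hD : ∀ x ∈ W, D x ∈ W),
      (∀ i, LinearMap.trace k V (D * T ^ i) = 0) → LinearMap.trace k W (D.restrict hD) = 0 := by
  set n := orderOf T with hn
  have hn0 : (n : k) ≠ 0 := by exact_mod_cast hfin.ne'
  let e : Module.End k V := (n : k)⁻¹ • ∑ i ∈ Finset.range n, T ^ i
  have hTe : T * e = e := by
    have h := mul_geom_sum T n
    rw [pow_orderOf_eq_one, sub_self, sub_mul, one_mul, sub_eq_zero] at h
    rw [mul_smul_comm, h]
  have hpow : ∀ x ∈ W, ∀ i, (T ^ i) x = x := by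
    intro x hx i
    induction i with
    | zero => simp
    | succ i ih => rw [pow_succ, Module.End.mul_apply, (hW x).1 hx, ih]
  have he : LinearMap.IsProj W e := by
    refine ⟨fun x => (hW _).2 (LinearMap.congr_fun hTe x), fun x hx => ?_⟩
    simp only [e, LinearMap.smul_apply, LinearMap.sum_apply, hpow x hx]
    simp [← Nat.cast_smul_eq_nsmul k, smul_smul, hn0]
  refine ⟨?_, fun D hD h => ?_⟩
  · have h1 := he.trace
    have h2 : ∀ i ∈ Finset.range n, i ≠ 0 → LinearMap.trace k V (T ^ i) = 0 := by
      intro i hi hi0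
      by_contra h0
      have h3 : LinearMap.trace k V (T ^ i) = Module.finrank k V :=
        mul_right_cancel₀ h0 (by rw [← sq, htr i])
      have h4 := eq_one_of_trace_eq_finrank hfin
        (by rw [← pow_mul, mul_comm, pow_mul, pow_orderOf_eq_one, one_pow]) h3
      exact hi0 (Nat.eq_zero_of_dvd_of_lt (orderOf_dvd_of_pow_eq_one h4) (Finset.mem_range.1 hi))
    rw [map_smul, map_sum, Finset.sum_eq_single_of_mem 0 (Finset.mem_range.2 hfin) h2, pow_zero,
      LinearMap.trace_one, smul_eq_mul, inv_mul_eq_iff_eq_mul₀ hn0] at h1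
    rw [mul_comm]
    exact_mod_cast h1.symm
  · have h1 : LinearMap.trace k V (D * e) = 0 := by
      simp [e, Finset.mul_sum, h]
    have h2 : D * e = (D ∘ₗ W.subtype) ∘ₗ LinearMap.codRestrict W e he.map_mem := rfl
    rw [← h1, h2, LinearMap.trace_comp_comm']
    congr 1
    ext x
    exact (he.map_id _ (hD x x.2)).symm

end FiniteOrder

section Lagrange
variable {k H : Type*} [Field k] [Ring H] [HopfAlgebra k H]

/-- The map `x ⊗ y ↦ x y₁ ⊗ y₂`. -/
noncomputable def galoisL : H ⊗[k] H →ₗ[k] H ⊗[k] H :=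
  (LinearMap.mul' k H).rTensor H ∘ₗ (TensorProduct.assoc k H H H).symm.toLinearMap ∘ₗ
    comul.lTensor H

lemma galoisL_tmul (x y : H) :
    galoisL (x ⊗ₜ[k] y) = (x ⊗ₜ[k] (1 : H)) * comul (R := k) y := by
  simp only [galoisL, LinearMap.comp_apply, LinearMap.lTensor_tmul, LinearEquiv.coe_coe]
  generalize comul (R := k) y = t
  induction t with
  | zero => simp
  | tmul a b => simp
  | add a b ha hb => simp only [TensorProduct.tmul_add, map_add, mul_add, ha, hb]

/-- The map `x ⊗ y ↦ x₁ ⊗ x₂ y`. -/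
noncomputable def galoisR : H ⊗[k] H →ₗ[k] H ⊗[k] H :=
  (LinearMap.mul' k H).lTensor H ∘ₗ (TensorProduct.assoc k H H H).toLinearMap ∘ₗ
    comul.rTensor H

lemma galoisR_tmul (x y : H) :
    galoisR (x ⊗ₜ[k] y) = comul (R := k) x * ((1 : H) ⊗ₜ[k] y) := by
  simp only [galoisR, LinearMap.comp_apply, LinearMap.rTensor_tmul, LinearEquiv.coe_coe]
  generalize comul (R := k) x = t
  induction t with
  | zero => simp
  | tmul a b => simp
  | add a b ha hb => simp only [TensorProduct.add_tmul, map_add, add_mul, ha, hb]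

lemma galoisL_surjective : Function.Surjective (galoisL : H ⊗[k] H →ₗ[k] H ⊗[k] H) := by
  suffices h : ∀ t : H ⊗[k] H, t ∈ LinearMap.range (galoisL (k := k) (H := H)) from h
  intro t
  induction t with
  | zero => exact zero_mem _
  | add a b ha hb => exact add_mem ha hb
  | tmul x y =>
    have h1 : ∀ s : H ⊗[k] H, galoisL ((x ⊗ₜ[k] (1 : H)) * (antipode k).rTensor H s) =
        (x ⊗ₜ[k] (1 : H)) * TensorProduct.map (LinearMap.mul' k H ∘ₗ (antipode k).rTensor H)
          LinearMap.id ((TensorProduct.assoc k H H H).symm (comul.lTensor H s)) := by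
      intro s
      induction s with
      | zero => simp
      | add a b ha hb => simp only [map_add, mul_add, ha, hb]
      | tmul a b =>
        simp only [LinearMap.rTensor_tmul, LinearMap.lTensor_tmul, galoisL_tmul,
          Algebra.TensorProduct.tmul_mul_tmul, one_mul]
        generalize comul (R := k) b = u
        induction u with
        | zero => simp
        | tmul a b => simp [mul_assoc]
        | add a b ha hb => simp only [TensorProduct.tmul_add, map_add, mul_add, ha, hb]
    refine ⟨(x ⊗ₜ[k] (1 : H)) * (antipode k).rTensor H (comul (R := k) y), ?_⟩
    rw [h1, coassoc_symm_apply, ← LinearMap.rTensor_def, ← LinearMap.comp_apply,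
      ← LinearMap.rTensor_comp, LinearMap.comp_assoc, mul_antipode_rTensor_comul,
      LinearMap.rTensor_comp, LinearMap.comp_apply, rTensor_counit_comul]
    simp

lemma galoisR_surjective : Function.Surjective (galoisR : H ⊗[k] H →ₗ[k] H ⊗[k] H) := by
  suffices h : ∀ t : H ⊗[k] H, t ∈ LinearMap.range (galoisR (k := k) (H := H)) from h
  intro t
  induction t with
  | zero => exact zero_mem _
  | add a b ha hb => exact add_mem ha hb
  | tmul x y =>
    have h1 : ∀ s : H ⊗[k] H, galoisR ((antipode k).lTensor H s * ((1 : H) ⊗ₜ[k] y)) =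
        TensorProduct.map LinearMap.id (LinearMap.mul' k H ∘ₗ (antipode k).lTensor H)
          (TensorProduct.assoc k H H H (comul.rTensor H s)) * ((1 : H) ⊗ₜ[k] y) := by
      intro s
      induction s with
      | zero => simp
      | add a b ha hb => simp only [map_add, add_mul, ha, hb]
      | tmul a b =>
        simp only [LinearMap.rTensor_tmul, LinearMap.lTensor_tmul, galoisR_tmul,
          Algebra.TensorProduct.tmul_mul_tmul, mul_one]
        generalize comul (R := k) a = u
        induction u with
        | zero => simp
        | tmul a b => simp [mul_assoc]
        | add a b ha hb => simp only [TensorProduct.add_tmul, map_add, add_mul, ha, hb]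
    refine ⟨(antipode k).lTensor H (comul (R := k) x) * ((1 : H) ⊗ₜ[k] y), ?_⟩
    rw [h1, coassoc_apply, ← LinearMap.lTensor_def, ← LinearMap.comp_apply,
      ← LinearMap.lTensor_comp, LinearMap.comp_assoc, mul_antipode_lTensor_comul,
      LinearMap.lTensor_comp, LinearMap.comp_apply, lTensor_counit_comul]
    simp

lemma exists_hitR_pow (χ : H →ₐ[k] k) (n : ℕ) :
    ∃ χ' : H →ₐ[k] k, (hitR χ.toLinearMap : Module.End k H) ^ n = hitR χ'.toLinearMap := by
  induction n with
  | zero =>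
    refine ⟨Bialgebra.counitAlgHom k H, LinearMap.ext fun x => ?_⟩
    exact (hitR_counit x).symm
  | succ n ih =>
    obtain ⟨χ', h⟩ := ih
    refine ⟨AlgHom.ofLinearMap (χ'.toLinearMap ∘ₗ hitR χ.toLinearMap)
      (by simp [hitR_map_one]) (fun x y => by simp [hitR_map_mul]), LinearMap.ext fun x => ?_⟩
    rw [pow_succ, h]
    exact hitR_hitR _ _ x

variable [FiniteDimensional k H]

lemma trace_mul_trace_of_surjective {T T' A B : Module.End k H} {Ψ : H ⊗[k] H →ₗ[k] H ⊗[k] H}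
    (hΨ : Function.Surjective Ψ)
    (h : ∀ x y : H, Ψ (A x ⊗ₜ[k] B y) = TensorProduct.map T T' (Ψ (x ⊗ₜ[k] y))) :
    LinearMap.trace k H T * LinearMap.trace k H T' =
      LinearMap.trace k H A * LinearMap.trace k H B := by
  let e : H ⊗[k] H ≃ₗ[k] H ⊗[k] H :=
    LinearEquiv.ofBijective Ψ ⟨LinearMap.injective_iff_surjective.2 hΨ, hΨ⟩
  have h2 : e.conj (TensorProduct.map A B) = TensorProduct.map T T' := by
    have h3 : Ψ ∘ₗ TensorProduct.map A B = TensorProduct.map T T' ∘ₗ Ψ :=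
      TensorProduct.ext' h
    refine LinearMap.ext fun t => ?_
    have := LinearMap.congr_fun h3 (e.symm t)
    refine this.trans ?_
    exact congrArg _ (e.apply_symm_apply t)
  rw [← LinearMap.trace_tensorProduct', ← LinearMap.trace_tensorProduct', ← h2,
    LinearMap.trace_conj']

lemma trace_mulRight_sq {u : H} (hu : IsGroupLikeElem k u) :
    LinearMap.trace k H (LinearMap.mulRight k u) ^ 2 =
      Module.finrank k H * LinearMap.trace k H (LinearMap.mulRight k u) := by
  rw [sq, ← LinearMap.trace_one]
  refine trace_mul_trace_of_surjective galoisL_surjective fun x y => ?_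
  simp only [Module.End.one_apply, LinearMap.mulRight_apply, galoisL_tmul, Bialgebra.comul_mul,
    hu.comul_eq_tmul_self, ← mul_assoc]
  generalize (x ⊗ₜ[k] (1 : H)) * comul (R := k) y = t
  induction t with
  | zero => simp
  | tmul a b => simp
  | add a b ha hb => simp only [map_add, add_mul, ha, hb]

lemma trace_hitR_sq (χ : H →ₐ[k] k) :
    LinearMap.trace k H (hitR χ.toLinearMap) ^ 2 =
      Module.finrank k H * LinearMap.trace k H (hitR χ.toLinearMap) := by
  rw [sq, ← LinearMap.trace_one]
  refine (trace_mul_trace_of_surjective galoisR_surjective fun x y => ?_).symm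
  simp only [galoisR_tmul, comul_hitR]
  generalize comul (R := k) x = t
  induction t with
  | zero => simp
  | tmul a b => simp [hitR_map_mul]
  | add a b ha hb => simp only [map_add, add_mul, ha, hb]

lemma orderOf_mulRight_pos {u : H} (hu : IsGroupLikeElem k u) :
    0 < orderOf (LinearMap.mulRight k u : Module.End k H) := by
  have : Finite (GroupLike k H) := (linearIndep_groupLikeVal (R := k) (A := H)).finite
  let v : GroupLike k H := ⟨u, hu⟩
  obtain ⟨n, hn, h⟩ := (isOfFinOrder_of_finite v).exists_pow_eq_one
  refine orderOf_pos_iff.2 (isOfFinOrder_iff_pow_eq_one.2 ⟨n, hn, ?_⟩)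
  have h2 : u ^ n = 1 := congrArg GroupLike.val h
  rw [LinearMap.pow_mulRight, h2]
  exact LinearMap.mulRight_one k H

lemma orderOf_hitR_pos (χ : H →ₐ[k] k) (hinj : Function.Injective (hitR χ.toLinearMap)) :
    0 < orderOf (hitR χ.toLinearMap : Module.End k H) := by
  have : Finite (H →ₐ[k] k) := (linearIndependent_algHom_toLinearMap k H k).finite
  choose X hX using exists_hitR_pow χ
  obtain ⟨i, j, hij, h⟩ := Finite.exists_ne_map_eq_of_infinite X
  wlog hlt : i < j generalizing i j
  · exact this j i hij.symm h.symm (lt_of_le_of_ne (not_lt.1 hlt) hij.symm)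
  refine orderOf_pos_iff.2 (isOfFinOrder_iff_pow_eq_one.2 ⟨j - i, Nat.sub_pos_of_lt hlt, ?_⟩)
  have h1 : (hitR χ.toLinearMap : Module.End k H) ^ i * hitR χ.toLinearMap ^ (j - i) =
      hitR χ.toLinearMap ^ i := by
    rw [← pow_add, Nat.add_sub_cancel' hlt.le, hX, hX, h]
  refine LinearMap.ext fun x => ?_
  refine (Module.End.iterate_injective hinj i) ?_
  exact LinearMap.congr_fun h1 x

end Lagrange
section
variable {k V : Type*} [Field k] [IsAlgClosed k] [AddCommGroup V] [Module k V]
  [FiniteDimensional k V]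

lemma finrank_ne_one_of_trace_eq_zero {D : Module.End k V} {n : ℕ} (hn : 0 < n)
    (hD : D ^ n = 1) (htr : LinearMap.trace k V D = 0) : Module.finrank k V ≠ 1 := by
  rw [← card_roots_charpoly D]
  intro h
  obtain ⟨a, ha⟩ := Multiset.card_eq_one.1 h
  have h1 := sum_roots_charpoly D
  rw [ha, htr, Multiset.sum_singleton] at h1
  have h2 := pow_eq_one_of_mem_roots_charpoly hD (a := a) (by simp [ha])
  rw [h1, zero_pow hn.ne'] at h2
  exact zero_ne_one h2

end

section
variable {k H : Type*} [Field k] [Ring H] [HopfAlgebra k H]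

lemma hitL_antipode_antipode (α : H →ₐ[k] k) (x : H) :
    hitL α.toLinearMap (antipode k (antipode k x)) =
      antipode k (antipode k (hitL α.toLinearMap x)) := by
  rw [← hitR_antipode_hitL α x, hitL_antipode_hitR]

lemma hitL_pow_eq_one (f : H →ₗ[k] k) {n : ℕ} (h : (hitR f : Module.End k H) ^ n = 1) :
    (hitL f : Module.End k H) ^ n = 1 := by
  have key : ∀ n : ℕ, ∃ f' : H →ₗ[k] k, (hitR f : Module.End k H) ^ n = hitR f' ∧
      (hitL f : Module.End k H) ^ n = hitL f' := by
    intro n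
    induction n with
    | zero => exact ⟨counit, LinearMap.ext fun x => (hitR_counit x).symm,
        LinearMap.ext fun x => (hitL_counit x).symm⟩
    | succ n ih =>
      obtain ⟨f', h1, h2⟩ := ih
      refine ⟨f' ∘ₗ hitR f, ?_, ?_⟩
      · rw [pow_succ, h1]
        exact LinearMap.ext fun x => hitR_hitR _ _ x
      · have h3 : f' ∘ₗ hitR f = f ∘ₗ hitL f' := LinearMap.ext fun x => apply_hitR _ _ x
        rw [pow_succ', h2, h3]
        exact LinearMap.ext fun x => hitL_hitL _ _ x
  obtain ⟨f', h1, h2⟩ := key n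
  have h3 : f' = counit := LinearMap.ext fun x => by
    rw [← counit_hitR f' x, ← h1, h, Module.End.one_apply]
  rw [h2, h3]
  exact LinearMap.ext fun x => hitL_counit x

lemma hitR_of_isGroupLikeElem (f : H →ₗ[k] k) {u : H} (hu : IsGroupLikeElem k u) :
    hitR f u = f u • u := by
  rw [hitR_eq, hu.comul_eq_tmul_self]
  simp

end

namespace IntegralPair
variable {k H : Type*} [Field k] [Ring H] [HopfAlgebra k H]

/-- Right multiplication by the distinguished group-like element. -/
noncomputable def G (P : IntegralPair k H) : Module.End k H := LinearMap.mulRight k P.g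

lemma G_pow (P : IntegralPair k H) (n : ℕ) : P.G ^ n = LinearMap.mulRight k (P.g ^ n) :=
  LinearMap.pow_mulRight ..

lemma g_pow (P : IntegralPair k H) {n : ℕ} (h : P.G ^ n = 1) : P.g ^ n = 1 := by
  simpa [G_pow] using LinearMap.congr_fun h 1

variable [FiniteDimensional k H]

/-- The hit action of the distinguished character. -/
noncomputable def R (P : IntegralPair k H) : Module.End k H := hitR P.α.toLinearMap

lemma antipode_antipode_D (P : IntegralPair k H) (x : H) : antipode k (antipode k (P.D x)) = x := by
  rw [P.antipode_D, P.antipode_antipodeInv]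

lemma D_antipode_antipode (P : IntegralPair k H) (x : H) : P.D (antipode k (antipode k x)) = x :=
  P.antipode_injective (P.antipode_injective (P.antipode_antipode_D _))

lemma D_isGroupLikeElem (P : IntegralPair k H) {u : H} (hu : IsGroupLikeElem k u) : P.D u = u := by
  conv_lhs => rw [← hu.antipode_antipode]
  exact P.D_antipode_antipode u

lemma D_mul (P : IntegralPair k H) (x y : H) : P.D (x * y) = P.D x * P.D y := by
  simp [D, P.antipodeInv_mul]

lemma D_G (P : IntegralPair k H) (x : H) : P.D (P.G x) = P.G (P.D x) := by
  simp [G, D_mul, P.D_isGroupLikeElem P.isGroupLikeElem_g]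

lemma D_R (P : IntegralPair k H) (x : H) : P.D (P.R x) = P.R (P.D x) := by
  obtain ⟨y, rfl⟩ : ∃ y, antipode k (antipode k y) = x := ⟨_, P.antipode_antipode_D x⟩
  rw [R, hitR_antipode_antipode, P.D_antipode_antipode, P.D_antipode_antipode]

lemma D_pow (P : IntegralPair k H) {n : ℕ}
    (h : ((antipode k : Module.End k H) ^ 4) ^ n = 1) : P.D ^ (2 * n) = 1 := by
  have h1 : P.D * (antipode k : Module.End k H) ^ 2 = 1 :=
    LinearMap.ext fun x => P.D_antipode_antipode x
  have h2 : (antipode k : Module.End k H) ^ 2 * P.D = 1 :=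
    LinearMap.ext fun x => P.antipode_antipode_D x
  have h3 : Commute P.D ((antipode k : Module.End k H) ^ 2) := h1.trans h2.symm
  have h4 := h3.mul_pow (2 * n)
  rw [h1, one_pow, ← pow_mul, ← mul_assoc, pow_mul _ (2 * 2) n, h, mul_one] at h4
  exact h4.symm

lemma trace_D_G_pow (P : IntegralPair k H) (h0 : counit (R := k) P.Λ = 0) (i : ℕ) :
    LinearMap.trace k H (P.D * P.G ^ i) = 0 := by
  rw [G_pow, P.trace_D_mulRight, h0, zero_mul]

lemma trace_D_R_pow (P : IntegralPair k H) (h0 : counit (R := k) P.Λ = 0) (i : ℕ) :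
    LinearMap.trace k H (P.D * P.R ^ i) = 0 := by
  obtain ⟨χ, hχ⟩ := exists_hitR_pow P.α i
  rw [R, hχ, P.trace_D_hitR]
  suffices h : χ P.Λ = 0 by simp [h]
  by_contra h
  have h1 := congrArg χ (P.mul_Λ P.Λ)
  rw [h0, zero_smul, map_zero, map_mul] at h1
  exact h (mul_self_eq_zero.1 h1)

lemma R_injective (P : IntegralPair k H) : Function.Injective P.R := by
  intro x y h
  refine P.antipode_injective ?_
  rw [← hitL_antipode_hitR P.α x, ← hitL_antipode_hitR P.α y]
  exact congrArg (fun z => hitL P.α.toLinearMap (antipode k z)) h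

lemma antipode_pow_four_pow (P : IntegralPair k H) {n : ℕ} (hG : P.G ^ n = 1) (hR : P.R ^ n = 1) :
    ((antipode k : Module.End k H) ^ 4) ^ n = 1 := by
  have hg := P.isGroupLikeElem_g
  have hg1 : P.g * antipode k P.g = 1 := hg.mul_antipode_cancel
  have hg2 : antipode k P.g * P.g = 1 := hg.antipode_mul_cancel
  let c : Module.End k H := LinearMap.mulLeft k P.g * LinearMap.mulRight k (antipode k P.g)
  let L : Module.End k H := hitL P.α.toLinearMap
  let S4 : Module.End k H := antipode k ^ 4
  have h1 : S4 * L = c * P.R := by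
    ext x
    change antipode k (antipode k (antipode k (antipode k (hitL P.α.toLinearMap x)))) =
      P.g * (hitR P.α.toLinearMap x * antipode k P.g)
    rw [← mul_assoc, P.g_mul, mul_assoc, hg1, mul_one]
  have h2 : Commute S4 L := by
    ext x
    change antipode k (antipode k (antipode k (antipode k (hitL P.α.toLinearMap x)))) =
      hitL P.α.toLinearMap (antipode k (antipode k (antipode k (antipode k x))))
    rw [hitL_antipode_antipode, hitL_antipode_antipode]
  have h3 : Commute c P.R := by
    ext x
    change P.g * (hitR P.α.toLinearMap x * antipode k P.g) =
      hitR P.α.toLinearMap (P.g * (x * antipode k P.g))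
    rw [hitR_map_mul, hitR_map_mul, hitR_of_isGroupLikeElem _ hg,
      hitR_of_isGroupLikeElem _ hg.antipode]
    have h4 : P.α (antipode k P.g) * P.α P.g = 1 := by rw [← map_mul, hg2, map_one]
    simp [smul_smul, h4]
  have hc : c ^ n = 1 := by
    have h5 : Commute (LinearMap.mulLeft k P.g) (LinearMap.mulRight k (antipode k P.g)) :=
      LinearMap.ext fun x => (mul_assoc _ _ _).symm
    have h6 : (antipode k P.g) ^ n = 1 := by
      have h7 : Commute (antipode k P.g) P.g := hg2.trans hg1.symm
      have := h7.mul_pow n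
      rwa [hg2, one_pow, P.g_pow hG, mul_one, eq_comm] at this
    rw [h5.mul_pow, LinearMap.pow_mulRight, LinearMap.pow_mulLeft, h6, P.g_pow hG]
    ext x
    simp
  have h8 := h2.mul_pow n
  rw [h1, h3.mul_pow, hc, hR, hitL_pow_eq_one _ hR, mul_one, mul_one] at h8
  exact h8.symm

lemma coe_pow_apply (P : IntegralPair k H) {W : Submodule k H} {D : Module.End k W}
    (hD : ∀ x, (D x : H) = P.D x) {n : ℕ} (h : P.D ^ n = 1) : D ^ n = 1 := by
  have h1 : ∀ (n : ℕ) (x : W), ((D ^ n) x : H) = (P.D ^ n) x := by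
    intro n
    induction n with
    | zero => simp
    | succ n ih => intro x; rw [pow_succ, pow_succ, Module.End.mul_apply, ih, hD]; rfl
  refine LinearMap.ext fun x => Subtype.ext ?_
  rw [h1, h]
  rfl

variable [IsAlgClosed k] [CharZero k]

/-- The submodule of fixed points of an endomorphism. -/
def fixed (T : Module.End k H) : Submodule k H := LinearMap.eqLocus T LinearMap.id

lemma fixed_G (P : IntegralPair k H) (h0 : counit (R := k) P.Λ = 0) :
    Module.finrank k (fixed P.G) * orderOf P.G = Module.finrank k H ∧
    ∃ D : Module.End k (fixed P.G), (∀ x, (D x : H) = P.D x) ∧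
      LinearMap.trace k (fixed P.G) D = 0 := by
  have h := finrank_fixed_mul_orderOf (orderOf_mulRight_pos P.isGroupLikeElem_g)
    (fun i => by
      rw [LinearMap.pow_mulRight]
      exact trace_mulRight_sq P.isGroupLikeElem_g.pow) (W := fixed P.G) (fun x => Iff.rfl)
  have hD : ∀ x ∈ fixed P.G, P.D x ∈ fixed P.G := fun x hx => by
    change P.G (P.D x) = P.D x
    rw [← P.D_G]
    exact congrArg P.D hx
  exact ⟨h.1, _, fun x => rfl, h.2 P.D hD (P.trace_D_G_pow h0)⟩

lemma fixed_R (P : IntegralPair k H) (h0 : counit (R := k) P.Λ = 0) :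
    Module.finrank k (fixed P.R) * orderOf P.R = Module.finrank k H ∧
    ∃ D : Module.End k (fixed P.R), (∀ x, (D x : H) = P.D x) ∧
      LinearMap.trace k (fixed P.R) D = 0 := by
  have h := finrank_fixed_mul_orderOf (orderOf_hitR_pos P.α P.R_injective)
    (fun i => by
      obtain ⟨χ, hχ⟩ := exists_hitR_pow P.α i
      rw [hχ]
      exact trace_hitR_sq χ) (W := fixed P.R) (fun x => Iff.rfl)
  have hD : ∀ x ∈ fixed P.R, P.D x ∈ fixed P.R := fun x hx => by
    change P.R (P.D x) = P.D x
    rw [← P.D_R]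
    exact congrArg P.D hx
  exact ⟨h.1, _, fun x => rfl, h.2 P.D hD (P.trace_D_R_pow h0)⟩

lemma orderOf_mul_orderOf_ne (P : IntegralPair k H) (h0 : counit (R := k) P.Λ = 0)
    (hcop : (orderOf P.G).Coprime (orderOf P.R)) :
    orderOf P.G * orderOf P.R ≠ Module.finrank k H := by
  intro hmul
  obtain ⟨hdim, D, hD, htr⟩ := P.fixed_R h0
  have hbpos : 0 < orderOf P.R := orderOf_hitR_pos P.α P.R_injective
  have hapos : 0 < orderOf P.G := orderOf_mulRight_pos P.isGroupLikeElem_g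
  have hrank : Module.finrank k (fixed P.R) = orderOf P.G :=
    Nat.eq_of_mul_eq_mul_right hbpos (hdim.trans hmul.symm)
  have hg := P.isGroupLikeElem_g
  have hgne : P.g ≠ 0 := hg.ne_zero
  have hα : P.α P.g = 1 := by
    have h1 : P.α P.g ^ orderOf P.G = 1 := by
      rw [← map_pow, P.g_pow (pow_orderOf_eq_one _), map_one]
    have h2 : P.α P.g ^ orderOf P.R = 1 := by
      have h3 : ∀ n, (P.R ^ n) P.g = P.α P.g ^ n • P.g := by
        intro n
        induction n with
        | zero => simp
        | succ n ih =>
          rw [pow_succ, Module.End.mul_apply, R, hitR_of_isGroupLikeElem _ hg, map_smul, ← R, ih,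
            smul_smul, pow_succ']
          rfl
      have h4 := h3 (orderOf P.R)
      rw [pow_orderOf_eq_one, Module.End.one_apply] at h4
      have h5 : (P.α P.g ^ orderOf P.R - 1) • P.g = 0 := by
        rw [sub_smul, one_smul, ← h4, sub_self]
      exact sub_eq_zero.1 ((smul_eq_zero.1 h5).resolve_right hgne)
    exact orderOf_eq_one_iff.1 (Nat.eq_one_of_dvd_coprimes hcop (orderOf_dvd_of_pow_eq_one h1)
      (orderOf_dvd_of_pow_eq_one h2))
  have hmem : ∀ i : ℕ, P.g ^ i ∈ fixed P.R := by
    intro i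
    change P.R (P.g ^ i) = P.g ^ i
    rw [R, hitR_of_isGroupLikeElem _ hg.pow]
    change P.α (P.g ^ i) • _ = _
    rw [map_pow, hα, one_pow, one_smul]
  have hinj : Function.Injective fun i : Fin (orderOf P.G) =>
      (⟨P.g ^ (i : ℕ), hg.pow⟩ : GroupLike k H) := by
    intro i j hij
    have h1 : P.g ^ (i : ℕ) = P.g ^ (j : ℕ) := congrArg GroupLike.val hij
    refine Fin.ext (pow_injOn_Iio_orderOf (x := P.G) i.2 j.2 ?_)
    change P.G ^ (i : ℕ) = P.G ^ (j : ℕ)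
    rw [G_pow, G_pow, h1]
  have hli : LinearIndependent k fun i : Fin (orderOf P.G) =>
      (⟨P.g ^ (i : ℕ), hmem i⟩ : fixed P.R) := by
    refine LinearIndependent.of_comp (fixed P.R).subtype ?_
    exact (linearIndep_groupLikeVal (R := k) (A := H)).comp _ hinj
  have : Nonempty (Fin (orderOf P.G)) := ⟨⟨0, hapos⟩⟩
  let b := basisOfLinearIndependentOfCardEqFinrank hli (by rw [hrank, Fintype.card_fin])
  have hD1 : D = LinearMap.id := by
    refine b.ext fun i => Subtype.ext ?_
    rw [hD]
    simp only [b, coe_basisOfLinearIndependentOfCardEqFinrank, LinearMap.id_apply]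
    exact P.D_isGroupLikeElem hg.pow
  rw [hD1, LinearMap.trace_id, hrank] at htr
  exact hapos.ne' (by exact_mod_cast htr)

lemma antipode_pow_four_ne_one (P : IntegralPair k H) (h0 : counit (R := k) P.Λ = 0)
    (hodd : Odd (Module.finrank k H)) : (antipode k : Module.End k H) ^ 4 ≠ 1 := by
  intro h
  obtain ⟨r, hr, hrp⟩ := Nat.exists_infinite_primes (Module.finrank k H + 3)
  have htr := P.trace_D_G_pow h0 0
  rw [pow_zero, mul_one] at htr
  have := prime_le_finrank hrp (hrp.odd_of_ne_two (by omega))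
    (P.D_pow (n := r) (by rw [h, one_pow])) htr hodd
  omega

lemma antipode_pow_four_pow_prime (P : IntegralPair k H) (h0 : counit (R := k) P.Λ = 0)
    {p q : ℕ} (hp : p.Prime) (hq : q.Prime) (hpodd : Odd p) (hqodd : Odd q) (hpq : p ≤ q)
    (hdim : Module.finrank k H = p * q) : ((antipode k : Module.End k H) ^ 4) ^ p = 1 := by
  obtain ⟨hGdim, DG, hDG, htrG⟩ := P.fixed_G h0
  obtain ⟨hRdim, DR, hDR, htrR⟩ := P.fixed_R h0
  have hne := P.orderOf_mul_orderOf_ne h0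
  have hpow : ∀ n, orderOf P.G ∣ n → orderOf P.R ∣ n →
      ((antipode k : Module.End k H) ^ 4) ^ n = 1 := fun n h1 h2 =>
    P.antipode_pow_four_pow (orderOf_dvd_iff_pow_eq_one.1 h1) (orderOf_dvd_iff_pow_eq_one.1 h2)
  have hpos : 0 < p * q := Nat.mul_pos hp.pos hq.pos
  rw [hdim] at hGdim hRdim hne
  have hDpq := P.D_pow (hpow (p * q) (Dvd.intro_left _ hGdim) (Dvd.intro_left _ hRdim))
  have hG1 := finrank_ne_one_of_trace_eq_zero (Nat.mul_pos two_pos hpos)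
    (P.coe_pow_apply hDG hDpq) htrG
  have hR1 := finrank_ne_one_of_trace_eq_zero (Nat.mul_pos two_pos hpos)
    (P.coe_pow_apply hDR hDpq) htrR
  have hoddpq : Odd (p * q) := hpodd.mul hqodd
  have hGle : ((antipode k : Module.End k H) ^ 4) ^ q = 1 → q ≤ Module.finrank k (fixed P.G) :=
    fun h => prime_le_finrank hq hqodd (P.coe_pow_apply hDG (P.D_pow h)) htrG
      (Nat.odd_mul.1 (hGdim ▸ hoddpq)).1
  have hRle : ((antipode k : Module.End k H) ^ 4) ^ q = 1 → q ≤ Module.finrank k (fixed P.R) :=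
    fun h => prime_le_finrank hq hqodd (P.coe_pow_apply hDR (P.D_pow h)) htrR
      (Nat.odd_mul.1 (hRdim ▸ hoddpq)).1
  generalize Module.finrank k (fixed P.G) = m at *
  generalize Module.finrank k (fixed P.R) = m' at *
  have hcases : ∀ m n : ℕ, m * n = p * q → m ≠ 1 → n ∣ p ∨ (n = q ∧ m = p) := by
    intro m n h h1
    obtain ⟨y, z, hy, hz, hyz⟩ := (Nat.dvd_mul).1 (Dvd.intro _ h : m ∣ p * q)
    have hmpos : 0 < m := Nat.pos_of_mul_pos_right (h ▸ hpos)
    rcases (Nat.dvd_prime hq).1 hz with rfl | rfl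
    · rcases (Nat.dvd_prime hp).1 hy with rfl | rfl
      · omega
      · right
        obtain rfl : y = m := by omega
        exact ⟨Nat.eq_of_mul_eq_mul_left hmpos h, rfl⟩
    · left
      refine ⟨y, ?_⟩
      refine Nat.eq_of_mul_eq_mul_right hq.pos ?_
      rw [← h, ← hyz]
      ring
  by_cases heq : p = q
  · subst heq
    have h : ∀ m n : ℕ, m * n = p * p → m ≠ 1 → n ∣ p := fun m n h h1 =>
      (hcases m n h h1).elim id fun h => h.1 ▸ dvd_rfl
    exact hpow p (h _ _ hGdim hG1) (h _ _ hRdim hR1)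
  have hcop : p.Coprime q := (Nat.coprime_primes hp hq).2 heq
  rcases hcases _ _ hGdim hG1 with hG | ⟨hG, rfl⟩ <;>
    rcases hcases _ _ hRdim hR1 with hR | ⟨hR, hm⟩
  · exact hpow p hG hR
  · rcases (Nat.dvd_prime hp).1 hG with h | h
    · have := hRle (hpow q (h ▸ one_dvd q) hR.dvd)
      omega
    · exact absurd (by rw [h, hR]) (hne (by rw [h, hR]; exact hcop))
  · rcases (Nat.dvd_prime hp).1 hR with h | h
    · have := hGle (hpow q hG.dvd (h ▸ one_dvd q))
      omega
    · exact absurd (by rw [h, hG, mul_comm]) (hne (by rw [h, hG]; exact hcop.symm))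
  · have := hGle (hpow q hG.dvd hR.dvd)
    omega

end IntegralPair
end HopfPQ

/-- Proposition 5.2(i). If `H` is a non-semisimple Hopf algebra of dimension
`p q`, where `p ≤ q` are odd primes, over an algebraically closed field of characteristic `0`,
then the order of `S⁴` is `p`. -/
theorem stmt1 (k : Type*) [Field k] [IsAlgClosed k] [CharZero k]
    (p q : ℕ) (hp : p.Prime) (hq : q.Prime) (hpodd : Odd p) (hqodd : Odd q) (hpq : p ≤ q)
    (H : Type*) [Ring H] [HopfAlgebra k H] [FiniteDimensional k H]
    (hdim : Module.finrank k H = p * q) (hss : ¬ IsSemisimpleRing H) :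
    orderOf ((HopfAlgebra.antipode (R := k) (A := H) : Module.End k H) ^ 4) = p := by
  have : Nontrivial H := Module.nontrivial_of_finrank_pos (R := k)
    (hdim ▸ Nat.mul_pos hp.pos hq.pos)
  obtain ⟨P⟩ := HopfPQ.exists_integralPair k H
  have h0 : Coalgebra.counit (R := k) P.Λ = 0 := by
    by_contra h
    exact hss (P.isSemisimpleRing h)
  have : Fact p.Prime := ⟨hp⟩
  exact orderOf_eq_prime (P.antipode_pow_four_pow_prime h0 hp hq hpodd hqodd hpq hdim)
    (P.antipode_pow_four_ne_one h0 (hdim ▸ hpodd.mul hqodd))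
end

section
/- Let H be a non-semisimple Hopf algebra over k of dimension pq, where p ≤ q are odd primes. Then the index of H equals p. -/
open scoped TensorProduct

namespace HopfAlgebra

open Coalgebra WithConv

section Convolution

variable {k H C : Type*} [CommSemiring k] [Semiring H] [HopfAlgebra k H] [Semiring C] [Algebra k C]

/-- A functional, regarded as a linear map into the scalars of an algebra. -/
def scalarMap (C : Type*) [Semiring C] [Algebra k C] (f : H →ₗ[k] k) : H →ₗ[k] C :=
  Algebra.linearMap k C ∘ₗ f

@[simp] lemma scalarMap_apply (f : H →ₗ[k] k) (x : H) :
    scalarMap C f x = algebraMap k C (f x) := rfl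

/-- The operator `x ↦ x₁ f(x₂)`. -/
noncomputable def rightHit (f : H →ₗ[k] k) : H →ₗ[k] H :=
  (toConv LinearMap.id * toConv (scalarMap H f)).ofConv

/-- The operator `x ↦ f(x₁) x₂`. -/
noncomputable def leftHit (f : H →ₗ[k] k) : H →ₗ[k] H :=
  (toConv (scalarMap H f) * toConv LinearMap.id).ofConv

lemma rightHit_apply (f : H →ₗ[k] k) {ι : Type*} {x : H} (r : Repr k x ι) :
    rightHit f x = ∑ i ∈ r.index, f (r.right i) • r.left i := by
  have := r.convMul_apply (toConv LinearMap.id) (toConv (scalarMap H f))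
  simpa [rightHit, Algebra.smul_def, Algebra.commutes] using this

lemma leftHit_apply (f : H →ₗ[k] k) {ι : Type*} {x : H} (r : Repr k x ι) :
    leftHit f x = ∑ i ∈ r.index, f (r.left i) • r.right i := by
  have := r.convMul_apply (toConv (scalarMap H f)) (toConv LinearMap.id)
  simpa [leftHit, Algebra.smul_def] using this

lemma comp_rightHit (φ : H →ₗ[k] C) (f : H →ₗ[k] k) :
    toConv (φ ∘ₗ rightHit f) = toConv φ * toConv (scalarMap C f) := by
  ext x
  rw [(ℛ k x).convMul_apply]
  simp only [LinearMap.comp_apply, rightHit_apply f (ℛ k x), map_sum, map_smul]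
  simp [Algebra.smul_def, Algebra.commutes]

lemma comp_leftHit (φ : H →ₗ[k] C) (f : H →ₗ[k] k) :
    toConv (φ ∘ₗ leftHit f) = toConv (scalarMap C f) * toConv φ := by
  ext x
  rw [(ℛ k x).convMul_apply]
  simp only [LinearMap.comp_apply, leftHit_apply f (ℛ k x), map_sum, map_smul]
  simp [Algebra.smul_def]

lemma scalarMap_mul (f g : WithConv (H →ₗ[k] k)) :
    toConv (scalarMap C (f * g).ofConv) =
      toConv (scalarMap C f.ofConv) * toConv (scalarMap C g.ofConv) := by
  ext x
  rw [(ℛ k x).convMul_apply]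
  simp [(ℛ k x).convMul_apply]

lemma scalarMap_counit : toConv (scalarMap C (counit (R := k) (A := H))) = 1 := rfl

lemma rightHit_counit : rightHit (counit (R := k) (A := H)) = LinearMap.id := by
  simp [rightHit, scalarMap_counit]

lemma leftHit_counit : leftHit (counit (R := k) (A := H)) = LinearMap.id := by
  simp [leftHit, scalarMap_counit]

lemma rightHit_comp_rightHit (f g : WithConv (H →ₗ[k] k)) :
    rightHit f.ofConv ∘ₗ rightHit g.ofConv = rightHit (f * g).ofConv := by
  apply toConv_injective
  rw [comp_rightHit, rightHit, rightHit, scalarMap_mul]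
  simp [mul_assoc]

lemma leftHit_comp_leftHit (f g : WithConv (H →ₗ[k] k)) :
    leftHit f.ofConv ∘ₗ leftHit g.ofConv = leftHit (g * f).ofConv := by
  apply toConv_injective
  rw [comp_leftHit, leftHit, leftHit, scalarMap_mul]
  simp [mul_assoc]

lemma leftHit_comp_rightHit (f g : H →ₗ[k] k) :
    leftHit f ∘ₗ rightHit g = rightHit g ∘ₗ leftHit f := by
  apply toConv_injective
  rw [comp_leftHit, comp_rightHit, leftHit, rightHit]
  simp [mul_assoc]

/-- The inclusion of the left tensor factor is convolution inverse to its composite with the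
antipode, and similarly for every algebra map. -/
lemma algHom_mul_comp_antipode (F : H →ₐ[k] C) :
    toConv F.toLinearMap * toConv (F.toLinearMap ∘ₗ antipode k) = 1 := by
  have h := LinearMap.algHom_comp_convMul_distrib F (toConv LinearMap.id) (toConv (antipode k (A := H)))
  rw [LinearMap.id_mul_antipode] at h
  rw [← toConv_ofConv (toConv F.toLinearMap * _)]
  simp only [LinearMap.comp_id] at h
  rw [← h]
  ext x
  simp

lemma comp_antipode_mul_algHom (F : H →ₐ[k] C) :
    toConv (F.toLinearMap ∘ₗ antipode k) * toConv F.toLinearMap = 1 := by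
  have h := LinearMap.algHom_comp_convMul_distrib F (toConv (antipode k (A := H))) (toConv LinearMap.id)
  rw [LinearMap.antipode_mul_id] at h
  rw [← toConv_ofConv (toConv _ * toConv F.toLinearMap)]
  simp only [LinearMap.comp_id] at h
  rw [← h]
  ext x
  simp

lemma comul_eq_includeLeft_mul_includeRight :
    toConv (comul (R := k) (A := H)) =
      toConv (Algebra.TensorProduct.includeLeft (R := k) (S := k) (A := H) (B := H)).toLinearMap *
      toConv (Algebra.TensorProduct.includeRight (R := k) (A := H) (B := H)).toLinearMap := by
  ext x
  rw [(ℛ k x).convMul_apply]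
  simp [(ℛ k x).eq]

/-- `(S(a₁) ⊗ 1) Δ(a₂) = 1 ⊗ a`. -/
lemma sum_antipode_tmul_mul_comul {ι : Type*} {a : H} (r : Repr k a ι) :
    ∑ i ∈ r.index, (antipode k (r.left i) ⊗ₜ[k] (1 : H)) * comul (r.right i) = 1 ⊗ₜ[k] a := by
  have h := comp_antipode_mul_algHom
    (Algebra.TensorProduct.includeLeft (R := k) (S := k) (A := H) (B := H))
  have h2 := congrArg (toConv ((Algebra.TensorProduct.includeLeft (R := k) (S := k) (A := H)
    (B := H)).toLinearMap ∘ₗ antipode k) * ·) (comul_eq_includeLeft_mul_includeRight (k := k) (H := H))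
  simp only [← mul_assoc, h, one_mul] at h2
  have h3 := congrArg (fun φ => φ.ofConv a) h2
  simpa [r.convMul_apply] using h3

/-- `Δ(a₁) (1 ⊗ S(a₂)) = a ⊗ 1`. -/
lemma sum_comul_mul_tmul_antipode {ι : Type*} {a : H} (r : Repr k a ι) :
    ∑ i ∈ r.index, comul (r.left i) * ((1 : H) ⊗ₜ[k] antipode k (r.right i)) = a ⊗ₜ[k] 1 := by
  have h := algHom_mul_comp_antipode
    (Algebra.TensorProduct.includeRight (R := k) (A := H) (B := H))
  have h2 := congrArg (· * toConv ((Algebra.TensorProduct.includeRight (R := k) (A := H)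
    (B := H)).toLinearMap ∘ₗ antipode k)) (comul_eq_includeLeft_mul_includeRight (k := k) (H := H))
  simp only [mul_assoc, h, mul_one] at h2
  have h3 := congrArg (fun φ => φ.ofConv a) h2
  simpa [r.convMul_apply] using h3

end Convolution

section Characters

variable {k H : Type*} [CommSemiring k] [Semiring H] [HopfAlgebra k H]

/-- `x ↦ x₁ β(x₂)` as an algebra map, for an algebra map `β`. -/
noncomputable def rightHitAlgHom (β : H →ₐ[k] k) : H →ₐ[k] H :=
  (Algebra.TensorProduct.lift (AlgHom.id k H) ((Algebra.ofId k H).comp β)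
    fun _ _ => (Algebra.commutes _ _).symm).comp (Bialgebra.comulAlgHom k H)

/-- `x ↦ β(x₁) x₂` as an algebra map, for an algebra map `β`. -/
noncomputable def leftHitAlgHom (β : H →ₐ[k] k) : H →ₐ[k] H :=
  (Algebra.TensorProduct.lift ((Algebra.ofId k H).comp β) (AlgHom.id k H)
    fun _ _ => Algebra.commutes _ _).comp (Bialgebra.comulAlgHom k H)

lemma toLinearMap_rightHitAlgHom (β : H →ₐ[k] k) :
    (rightHitAlgHom β).toLinearMap = rightHit β.toLinearMap := by
  ext x
  rw [rightHit_apply _ (ℛ k x)]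
  simp only [rightHitAlgHom, AlgHom.toLinearMap_apply, AlgHom.comp_apply,
    Bialgebra.comulAlgHom_apply, ← (ℛ k x).eq, map_sum]
  refine Finset.sum_congr rfl fun i _ => (Algebra.TensorProduct.lift_tmul _ _ _ _ _).trans ?_
  simp [Algebra.smul_def, Algebra.commutes, Algebra.ofId_apply]

lemma toLinearMap_leftHitAlgHom (β : H →ₐ[k] k) :
    (leftHitAlgHom β).toLinearMap = leftHit β.toLinearMap := by
  ext x
  rw [leftHit_apply _ (ℛ k x)]
  simp only [leftHitAlgHom, AlgHom.toLinearMap_apply, AlgHom.comp_apply,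
    Bialgebra.comulAlgHom_apply, ← (ℛ k x).eq, map_sum]
  refine Finset.sum_congr rfl fun i _ => (Algebra.TensorProduct.lift_tmul _ _ _ _ _).trans ?_
  simp [Algebra.smul_def, Algebra.ofId_apply]

lemma rightHit_mul (β : H →ₐ[k] k) (x y : H) :
    rightHit β.toLinearMap (x * y) = rightHit β.toLinearMap x * rightHit β.toLinearMap y := by
  simp only [← toLinearMap_rightHitAlgHom, AlgHom.toLinearMap_apply, map_mul]

lemma leftHit_mul (β : H →ₐ[k] k) (x y : H) :
    leftHit β.toLinearMap (x * y) = leftHit β.toLinearMap x * leftHit β.toLinearMap y := by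
  simp only [← toLinearMap_leftHitAlgHom, AlgHom.toLinearMap_apply, map_mul]

/-- The inverse `β ∘ S` of an algebra map `β : H → k` in the convolution algebra. -/
noncomputable def charInv (β : H →ₐ[k] k) : H →ₐ[k] k :=
  AlgHom.ofLinearMap (β.toLinearMap ∘ₗ antipode k) (by simp)
    fun x y => by simp [antipode_mul_antidistrib, mul_comm]

lemma mul_charInv (β : H →ₐ[k] k) :
    toConv β.toLinearMap * toConv (charInv β).toLinearMap = 1 :=
  algHom_mul_comp_antipode β

lemma charInv_mul (β : H →ₐ[k] k) :
    toConv (charInv β).toLinearMap * toConv β.toLinearMap = 1 :=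
  comp_antipode_mul_algHom β

lemma charInv_charInv (β : H →ₐ[k] k) : charInv (charInv β) = β := by
  apply AlgHom.toLinearMap_injective
  apply toConv_injective
  exact (left_inv_eq_right_inv (mul_charInv β) (mul_charInv (charInv β))).symm

lemma scalarMap_charInv_mul (C : Type*) [Semiring C] [Algebra k C] (β : H →ₐ[k] k) :
    toConv (scalarMap C (charInv β).toLinearMap) * toConv (scalarMap C β.toLinearMap) = 1 := by
  have h := scalarMap_mul (C := C) (toConv (charInv β).toLinearMap) (toConv β.toLinearMap)
  rw [charInv_mul] at h
  exact h.symm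

lemma leftHit_comp_antipode (β : H →ₐ[k] k) :
    leftHit β.toLinearMap ∘ₗ antipode k = antipode k ∘ₗ rightHit (charInv β).toLinearMap := by
  apply toConv_injective
  refine (left_inv_eq_right_inv (a := toConv (leftHit β.toLinearMap)) ?_ ?_).symm
  · rw [comp_rightHit, leftHit, toConv_ofConv, mul_assoc, ← mul_assoc (toConv (scalarMap H _)),
      scalarMap_charInv_mul, one_mul, LinearMap.antipode_mul_id]
  · rw [← toLinearMap_leftHitAlgHom]
    exact algHom_mul_comp_antipode _

lemma rightHit_comp_antipode (β : H →ₐ[k] k) :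
    rightHit β.toLinearMap ∘ₗ antipode k = antipode k ∘ₗ leftHit (charInv β).toLinearMap := by
  apply toConv_injective
  refine (left_inv_eq_right_inv (a := toConv (rightHit β.toLinearMap)) ?_ ?_).symm
  · rw [comp_leftHit, rightHit, toConv_ofConv, mul_assoc, ← mul_assoc (toConv (antipode k)),
      LinearMap.antipode_mul_id, one_mul, scalarMap_charInv_mul]
  · rw [← toLinearMap_rightHitAlgHom]
    exact algHom_mul_comp_antipode _

lemma rightHit_antipode_antipode (β : H →ₐ[k] k) (x : H) :
    rightHit β.toLinearMap (antipode k (antipode k x)) =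
      antipode k (antipode k (rightHit β.toLinearMap x)) := by
  have h1 := LinearMap.congr_fun (rightHit_comp_antipode β) (antipode k x)
  have h2 := LinearMap.congr_fun (leftHit_comp_antipode (charInv β)) x
  rw [charInv_charInv] at h2
  simp only [LinearMap.comp_apply] at h1 h2
  rw [h1, h2]

lemma leftHit_antipode_antipode (β : H →ₐ[k] k) (x : H) :
    leftHit β.toLinearMap (antipode k (antipode k x)) =
      antipode k (antipode k (leftHit β.toLinearMap x)) := by
  have h1 := LinearMap.congr_fun (leftHit_comp_antipode β) (antipode k x)
  have h2 := LinearMap.congr_fun (rightHit_comp_antipode (charInv β)) x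
  rw [charInv_charInv] at h2
  simp only [LinearMap.comp_apply] at h1 h2
  rw [h1, h2]

lemma leftHit_charInv_leftHit (β : H →ₐ[k] k) (x : H) :
    leftHit (charInv β).toLinearMap (leftHit β.toLinearMap x) = x := by
  have h := leftHit_comp_leftHit (toConv (charInv β).toLinearMap) (toConv β.toLinearMap)
  rw [mul_charInv] at h
  exact LinearMap.congr_fun (h.trans leftHit_counit) x

lemma leftHit_leftHit_charInv (β : H →ₐ[k] k) (x : H) :
    leftHit β.toLinearMap (leftHit (charInv β).toLinearMap x) = x := by
  simpa [charInv_charInv] using leftHit_charInv_leftHit (charInv β) x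

/-- `S(β(x₁) x₂) x₃ = β(x) 1`. -/
lemma sum_antipode_leftHit_mul (β : H →ₗ[k] k) {ι : Type*} {x : H} (r : Repr k x ι) :
    ∑ i ∈ r.index, antipode k (leftHit β (r.left i)) * r.right i = β x • 1 := by
  have h : toConv (antipode k ∘ₗ leftHit β) * toConv LinearMap.id = toConv (scalarMap H β) := by
    rw [comp_leftHit, mul_assoc, LinearMap.antipode_mul_id, mul_one]
  have h2 := congrArg (fun φ => φ.ofConv x) h
  simpa [r.convMul_apply, Algebra.algebraMap_eq_smul_one] using h2

/-- `Δ(x₁ β(x₂)) = x₁ ⊗ x₂ β(x₃)`. -/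
lemma comul_rightHit (β : H →ₐ[k] k) (x : H) :
    comul (R := k) (rightHit β.toLinearMap x) =
      (rightHit β.toLinearMap).lTensor H (comul x) := by
  have h : toConv (comul (R := k) ∘ₗ rightHit β.toLinearMap) =
      toConv ((Algebra.TensorProduct.map (AlgHom.id k H) (rightHitAlgHom β)).toLinearMap ∘ₗ
        comul (R := k) (A := H)) := by
    rw [comp_rightHit]
    have h1 := LinearMap.algHom_comp_convMul_distrib
      (Algebra.TensorProduct.map (AlgHom.id k H) (rightHitAlgHom β))
      (toConv (Algebra.TensorProduct.includeLeft (R := k) (S := k) (A := H) (B := H)).toLinearMap)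
      (toConv (Algebra.TensorProduct.includeRight (R := k) (A := H) (B := H)).toLinearMap)
    rw [← comul_eq_includeLeft_mul_includeRight] at h1
    simp only at h1
    rw [h1, comul_eq_includeLeft_mul_includeRight, mul_assoc, toConv_ofConv]
    congr 1
    · ext; simp
    · rw [← comp_rightHit, ← toLinearMap_rightHitAlgHom]
      ext; simp
  have h2 := congrArg (fun φ => φ.ofConv x) h
  simp only [LinearMap.comp_apply] at h2
  rw [h2, ← toLinearMap_rightHitAlgHom]
  rfl

lemma counit_rightHit (f : H →ₗ[k] k) (x : H) : counit (R := k) (rightHit f x) = f x := by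
  have h := congrArg (fun φ => φ.ofConv x) (comp_rightHit (counit (R := k) (A := H)) f)
  have h1 : toConv (counit (R := k) (A := H)) = 1 := rfl
  rw [h1, one_mul] at h
  simpa using h

end Characters
section Contraction

variable {k H : Type*} [CommSemiring k] [Semiring H] [HopfAlgebra k H]

/-- `x ⊗ y ↦ f(x) y`. -/
noncomputable def contractLeft (f : H →ₗ[k] k) : H ⊗[k] H →ₗ[k] H :=
  (TensorProduct.lid k H).toLinearMap ∘ₗ f.rTensor H

/-- `x ⊗ y ↦ f(y) x`. -/
noncomputable def contractRight (f : H →ₗ[k] k) : H ⊗[k] H →ₗ[k] H :=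
  (TensorProduct.rid k H).toLinearMap ∘ₗ f.lTensor H

@[simp] lemma contractLeft_tmul (f : H →ₗ[k] k) (x y : H) :
    contractLeft f (x ⊗ₜ y) = f x • y := by simp [contractLeft]

@[simp] lemma contractRight_tmul (f : H →ₗ[k] k) (x y : H) :
    contractRight f (x ⊗ₜ y) = f y • x := by simp [contractRight]

lemma contractLeft_comul (f : H →ₗ[k] k) (x : H) : contractLeft f (comul x) = leftHit f x := by
  rw [leftHit_apply f (ℛ k x)]
  conv_lhs => rw [← (ℛ k x).eq]
  simp

lemma contractRight_comul (f : H →ₗ[k] k) (x : H) : contractRight f (comul x) = rightHit f x := by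
  rw [rightHit_apply f (ℛ k x)]
  conv_lhs => rw [← (ℛ k x).eq]
  simp

lemma contractLeft_mul_right (f : H →ₗ[k] k) (t : H ⊗[k] H) (b : H) :
    contractLeft f (t * (1 ⊗ₜ b)) = contractLeft f t * b := by
  induction t with
  | zero => simp
  | tmul x y => simp
  | add x y hx hy => simp [add_mul, hx, hy]

lemma contractLeft_mul_left (f : H →ₗ[k] k) (t : H ⊗[k] H) (b : H) :
    contractLeft f ((1 ⊗ₜ b) * t) = b * contractLeft f t := by
  induction t with
  | zero => simp
  | tmul x y => simp
  | add x y hx hy => simp [mul_add, hx, hy]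

lemma contractRight_mul_right (f : H →ₗ[k] k) (t : H ⊗[k] H) (b : H) :
    contractRight f (t * (b ⊗ₜ 1)) = contractRight f t * b := by
  induction t with
  | zero => simp
  | tmul x y => simp
  | add x y hx hy => simp [add_mul, hx, hy]

lemma contractRight_mul_left (f : H →ₗ[k] k) (t : H ⊗[k] H) (b : H) :
    contractRight f ((b ⊗ₜ 1) * t) = b * contractRight f t := by
  induction t with
  | zero => simp
  | tmul x y => simp
  | add x y hx hy => simp [mul_add, hx, hy]

lemma contractLeft_mul_tmul_one (f : H →ₗ[k] k) (t : H ⊗[k] H) (b : H) :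
    contractLeft f (t * (b ⊗ₜ 1)) = contractLeft (f ∘ₗ LinearMap.mulRight k b) t := by
  induction t with
  | zero => simp
  | tmul x y => simp
  | add x y hx hy => simp [add_mul, hx, hy]

lemma contractLeft_tmul_one_mul (f : H →ₗ[k] k) (t : H ⊗[k] H) (b : H) :
    contractLeft f ((b ⊗ₜ 1) * t) = contractLeft (f ∘ₗ LinearMap.mulLeft k b) t := by
  induction t with
  | zero => simp
  | tmul x y => simp
  | add x y hx hy => simp [mul_add, hx, hy]

lemma contractRight_mul_one_tmul (f : H →ₗ[k] k) (t : H ⊗[k] H) (b : H) :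
    contractRight f (t * (1 ⊗ₜ b)) = contractRight (f ∘ₗ LinearMap.mulRight k b) t := by
  induction t with
  | zero => simp
  | tmul x y => simp
  | add x y hx hy => simp [add_mul, hx, hy]

lemma contractRight_one_tmul_mul (f : H →ₗ[k] k) (t : H ⊗[k] H) (b : H) :
    contractRight f ((1 ⊗ₜ b) * t) = contractRight (f ∘ₗ LinearMap.mulLeft k b) t := by
  induction t with
  | zero => simp
  | tmul x y => simp
  | add x y hx hy => simp [mul_add, hx, hy]

end Contraction

section Integrals

variable {k H : Type*} [Field k] [Ring H] [HopfAlgebra k H]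

lemma apply_leftHit (f l : Module.Dual k H) (x : H) : f (leftHit l x) = conv l f x := by
  have h := congrArg (fun φ => φ.ofConv x) (comp_leftHit f l)
  exact h

lemma apply_rightHit (f l : Module.Dual k H) (x : H) : f (rightHit l x) = conv f l x := by
  have h := congrArg (fun φ => φ.ofConv x) (comp_rightHit f l)
  exact h

lemma leftHit_of_isRightIntegralDual {l : Module.Dual k H} (hl : IsRightIntegralDual k l) (x : H) :
    leftHit l x = l x • 1 := by
  rw [← sub_eq_zero, ← Module.forall_dual_apply_eq_zero_iff k]
  intro f
  rw [map_sub, apply_leftHit, hl f]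
  simp [mul_comm]

lemma rightHit_of_conv_eq {l : Module.Dual k H} {g : H}
    (hl : ∀ f : Module.Dual k H, conv f l = f g • l) (x : H) :
    rightHit l x = l x • g := by
  rw [← sub_eq_zero, ← Module.forall_dual_apply_eq_zero_iff k]
  intro f
  rw [map_sub, apply_rightHit, hl f]
  simp [mul_comm]

/-- `λ(x₁ y) x₂ = λ(x y₁) S(y₂)` for a right integral `λ` of the dual. -/
lemma leftHit_comp_mulRight {l : Module.Dual k H} (hl : IsRightIntegralDual k l) (x : H)
    {ι : Type*} {y : H} (r : Repr k y ι) :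
    leftHit (l ∘ₗ LinearMap.mulRight k y) x =
      ∑ i ∈ r.index, l (x * r.left i) • antipode k (r.right i) := by
  rw [← contractLeft_comul, ← contractLeft_mul_tmul_one, ← sum_comul_mul_tmul_antipode r,
    Finset.mul_sum, map_sum]
  refine Finset.sum_congr rfl fun i _ => ?_
  rw [← mul_assoc, ← Bialgebra.comul_mul, contractLeft_mul_right, contractLeft_comul,
    leftHit_of_isRightIntegralDual hl, smul_mul_assoc, one_mul]

variable [FiniteDimensional k H]

lemma eq_zero_of_forall_integral_mul_eq_zero {l : Module.Dual k H}
    (hl : IsRightIntegralDual k l) (hl0 : l ≠ 0) {x : H} (hx : ∀ y, l (x * y) = 0) : x = 0 := by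
  obtain ⟨y, hy⟩ : ∃ y, l y ≠ 0 := by
    by_contra! h
    exact hl0 (LinearMap.ext h)
  let b := Module.finBasis k H
  let G i : WithConv (H →ₗ[k] k) := toConv (l ∘ₗ LinearMap.mulRight k (b i))
  let K i : WithConv (H →ₗ[k] k) := toConv (b.coord i ∘ₗ LinearMap.mulRight k y ∘ₗ antipode k)
  have hG i : leftHit (G i).ofConv x = 0 := by
    refine (leftHit_comp_mulRight hl x (ℛ k (b i))).trans ?_
    simp [hx]
  have hsum : ∀ z, (∑ i, leftHit (G i * K i).ofConv z) = l y • z := by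
    have h1 : ∑ i, G i * K i = l y • (1 : WithConv (H →ₗ[k] k)) := by
      ext z
      have h2 : l ((∑ j ∈ (ℛ k z).index, (ℛ k z).left j * antipode k ((ℛ k z).right j)) * y) =
          l y * counit z := by
        rw [sum_mul_antipode_eq_smul]; simp [mul_comm]
      have h3 : (∑ i, G i * K i) z = l ((∑ j ∈ (ℛ k z).index,
          (ℛ k z).left j * antipode k ((ℛ k z).right j)) * y) := by
        have h4 : (∑ i, G i * K i) z = ∑ i, (G i * K i) z := by
          change (∑ i, G i * K i).ofConv z = _
          rw [ofConv_sum, LinearMap.sum_apply]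
        rw [h4]
        simp_rw [(ℛ k z).convMul_apply]
        rw [Finset.sum_comm, Finset.sum_mul, map_sum]
        refine Finset.sum_congr rfl fun j _ => ?_
        conv_rhs => rw [mul_assoc, ← b.sum_repr (antipode k ((ℛ k z).right j) * y),
          Finset.mul_sum, map_sum]
        refine Finset.sum_congr rfl fun i _ => ?_
        simp [G, K, mul_comm]
      rw [h3, h2]
      simp
    intro z
    have h5 (w : H) : ∑ i, (G i * K i).ofConv w = l y * counit w := by
      rw [← LinearMap.sum_apply, ← ofConv_sum, h1]
      simp
    simp_rw [leftHit_apply _ (ℛ k z)]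
    rw [Finset.sum_comm]
    simp_rw [← Finset.sum_smul, h5, mul_smul]
    rw [← Finset.smul_sum, sum_counit_smul]
  have h0 : ∑ i, leftHit (G i * K i).ofConv x = 0 := by
    refine Finset.sum_eq_zero fun i _ => ?_
    rw [← leftHit_comp_leftHit, LinearMap.comp_apply, hG, map_zero]
  rw [hsum] at h0
  exact (smul_eq_zero.mp h0).resolve_left hy

end Integrals
section IntegralData

variable {k H : Type*} [Field k] [Ring H] [HopfAlgebra k H]

/-- A right integral `l` of `H*` with distinguished group-like element `g`, together with a
left integral `L` of `H`, normalized by `l(x L) = ε(x)`, with distinguished character `α`. -/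
structure IntegralData (l : Module.Dual k H) (g L : H) (α : H →ₐ[k] k) : Prop where
  isGroupLikeElem : IsGroupLikeElem k g
  leftHit_eq : ∀ x, leftHit l x = l x • 1
  rightHit_eq : ∀ x, rightHit l x = l x • g
  apply_mul_integral : ∀ x, l (x * L) = counit (R := k) x
  mul_integral : ∀ a, a * L = counit (R := k) a • L
  integral_mul : ∀ a, L * a = α a • L
  exists_eq : ∀ f : Module.Dual k H, ∃ y, ∀ t, f t = l (t * y)

lemma isGroupLikeElem_of_isGroupLike {a : H} (ha : IsGroupLike k a) : IsGroupLikeElem k a := by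
  refine ⟨?_, ha.2⟩
  have h := congrArg (TensorProduct.lid k H) (rTensor_counit_comul (R := k) a)
  rw [ha.2] at h
  simp only [LinearMap.rTensor_tmul, TensorProduct.lid_tmul, one_smul] at h
  have h2 : (counit (R := k) a - 1) • a = 0 := by rw [sub_smul, h, one_smul, sub_self]
  exact sub_eq_zero.mp ((smul_eq_zero.mp h2).resolve_right ha.1)

variable [FiniteDimensional k H]

lemma exists_integralData {g : H} (hg : IsDistinguishedGroupLike k g) :
    ∃ (l : Module.Dual k H) (L : H) (α : H →ₐ[k] k), IntegralData l g L α := by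
  obtain ⟨hgl, l, hl0, hl, hlg⟩ := hg
  let B : H →ₗ[k] Module.Dual k H := (LinearMap.mul k H).compr₂ l
  have hB (x y : H) : B x y = l (x * y) := rfl
  have hdim : Module.finrank k H = Module.finrank k (Module.Dual k H) :=
    Subspace.dual_finrank_eq.symm
  have hinj : Function.Injective B := by
    rw [injective_iff_map_eq_zero]
    intro x hx
    exact eq_zero_of_forall_integral_mul_eq_zero hl hl0 fun y => by rw [← hB, hx]; rfl
  have hsurj : Function.Surjective B :=
    (LinearMap.injective_iff_surjective_of_finrank_eq_finrank hdim).mp hinj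
  have hzero : ∀ y, (∀ x, l (x * y) = 0) → y = 0 := by
    intro y hy
    rw [← Module.forall_dual_apply_eq_zero_iff k]
    intro f
    obtain ⟨x, rfl⟩ := hsurj f
    exact hy x
  have hinj' : Function.Injective B.flip := by
    rw [injective_iff_map_eq_zero]
    intro y hy
    exact hzero y fun x => by rw [← hB, ← LinearMap.flip_apply, hy]; rfl
  have hex : ∀ f : Module.Dual k H, ∃ y, ∀ t, f t = l (t * y) := by
    intro f
    obtain ⟨y, rfl⟩ := (LinearMap.injective_iff_surjective_of_finrank_eq_finrank hdim).mp hinj' f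
    exact ⟨y, fun t => rfl⟩
  obtain ⟨L, hL⟩ := hex counit
  have hmulL (a : H) : a * L = counit (R := k) a • L := by
    rw [← sub_eq_zero]
    refine hzero _ fun x => ?_
    rw [mul_sub, map_sub, ← mul_assoc, ← hL, mul_smul_comm, map_smul, ← hL]
    simp [mul_comm]
  have hLL : l L = 1 := by rw [← one_mul L, ← hL, Bialgebra.counit_one]
  have hLmul (a : H) : L * a = l (L * a) • L := by
    rw [← sub_eq_zero]
    refine hzero _ fun x => ?_
    rw [mul_sub, map_sub, ← mul_assoc, hmulL, mul_smul_comm, hmulL]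
    simp [hLL, mul_comm]
  refine ⟨l, L, AlgHom.ofLinearMap (B L) (by rw [hB, mul_one, hLL]) fun x y => ?_, ?_⟩
  · rw [hB, hB, hB, ← mul_assoc, hLmul x, smul_mul_assoc, map_smul, map_smul, hLL]
    simp
  · exact ⟨isGroupLikeElem_of_isGroupLike hgl, leftHit_of_isRightIntegralDual hl,
      rightHit_of_conv_eq hlg, fun x => (hL x).symm, hmulL, hLmul, hex⟩

end IntegralData

section Radford

variable {k H : Type*} [Field k] [Ring H] [HopfAlgebra k H]
  {l : Module.Dual k H} {g L : H} {α : H →ₐ[k] k}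

namespace IntegralData

lemma apply_integral (D : IntegralData l g L α) : l L = 1 := by
  simpa using D.apply_mul_integral 1

/-- `(1 ⊗ a) Δ(Λ) = (S(a) ⊗ 1) Δ(Λ)`. -/
lemma one_tmul_mul_comul (D : IntegralData l g L α) (a : H) :
    ((1 : H) ⊗ₜ[k] a) * comul L = (antipode k a ⊗ₜ[k] (1 : H)) * comul L := by
  have h := sum_antipode_tmul_mul_comul (ℛ k a)
  have h2 : ∑ i ∈ (ℛ k a).index, counit (R := k) ((ℛ k a).right i) • (ℛ k a).left i = a := by
    rw [← rightHit_apply counit (ℛ k a), rightHit_counit, LinearMap.id_apply]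
  rw [← h, Finset.sum_mul]
  conv_rhs => rw [← h2, map_sum, TensorProduct.sum_tmul, Finset.sum_mul]
  refine Finset.sum_congr rfl fun i _ => ?_
  rw [mul_assoc, ← Bialgebra.comul_mul, D.mul_integral]
  simp [← TensorProduct.smul_tmul']

/-- `Δ(Λ) (a ⊗ 1) = Δ(Λ) (1 ⊗ S(α(a₁) a₂))`. -/
lemma comul_mul_tmul_one (D : IntegralData l g L α) (a : H) :
    comul L * (a ⊗ₜ[k] (1 : H)) =
      comul L * ((1 : H) ⊗ₜ[k] antipode k (leftHit α.toLinearMap a)) := by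
  rw [← sum_comul_mul_tmul_antipode (ℛ k a), leftHit_apply _ (ℛ k a), map_sum,
    TensorProduct.tmul_sum, Finset.mul_sum, Finset.mul_sum]
  refine Finset.sum_congr rfl fun i _ => ?_
  rw [← mul_assoc, ← Bialgebra.comul_mul, D.integral_mul]
  simp

/-- `Λ₁ λ(x Λ₂) = S(x) g`. -/
lemma rightHit_mulLeft (D : IntegralData l g L α) (x : H) :
    rightHit (l ∘ₗ LinearMap.mulLeft k x) L = antipode k x * g := by
  rw [← contractRight_comul, ← contractRight_one_tmul_mul, D.one_tmul_mul_comul,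
    contractRight_mul_left, contractRight_comul, D.rightHit_eq, D.apply_integral, one_smul]

/-- `Λ₁ λ(Λ₂ S(x)) = g (α⁻¹(x₁) x₂)`. -/
lemma rightHit_mulRight (D : IntegralData l g L α) (x : H) :
    rightHit (l ∘ₗ LinearMap.mulRight k (antipode k x)) L =
      g * leftHit (charInv α).toLinearMap x := by
  have h := D.comul_mul_tmul_one (leftHit (charInv α).toLinearMap x)
  rw [leftHit_leftHit_charInv] at h
  rw [← contractRight_comul, ← contractRight_mul_one_tmul, ← h,
    contractRight_mul_right, contractRight_comul, D.rightHit_eq, D.apply_integral, one_smul]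

/-- `λ(S(x) Λ₁) Λ₂ = x`. -/
lemma leftHit_mulLeft (D : IntegralData l g L α) (x : H) :
    leftHit (l ∘ₗ LinearMap.mulLeft k (antipode k x)) L = x := by
  rw [← contractLeft_comul, ← contractLeft_tmul_one_mul, ← D.one_tmul_mul_comul,
    contractLeft_mul_left, contractLeft_comul, D.leftHit_eq, D.apply_integral, one_smul, mul_one]

/-- `λ(Λ₁ x) Λ₂ = S(α(x₁) x₂)`. -/
lemma leftHit_mulRight (D : IntegralData l g L α) (x : H) :
    leftHit (l ∘ₗ LinearMap.mulRight k x) L = antipode k (leftHit α.toLinearMap x) := by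
  rw [← contractLeft_comul, ← contractLeft_mul_tmul_one, D.comul_mul_tmul_one,
    contractLeft_mul_right, contractLeft_comul, D.leftHit_eq, D.apply_integral, one_smul, one_mul]

lemma antipode_surjective (D : IntegralData l g L α) :
    Function.Surjective (antipode k (A := H)) := by
  intro w
  obtain ⟨y, hy⟩ := D.exists_eq (l ∘ₗ LinearMap.mulLeft k (antipode k w))
  have h : l ∘ₗ LinearMap.mulLeft k (antipode k w) = l ∘ₗ LinearMap.mulRight k y :=
    LinearMap.ext hy
  exact ⟨leftHit α.toLinearMap y, by rw [← D.leftHit_mulRight, ← h, D.leftHit_mulLeft]⟩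

/-- Radford's formula for the fourth power of the antipode. -/
lemma radford (D : IntegralData l g L α) (w : H) :
    antipode k (leftHit α.toLinearMap (antipode k (leftHit α.toLinearMap
      (antipode k g * antipode k (antipode k w) * g)))) = w := by
  obtain ⟨y, hy⟩ := D.exists_eq (l ∘ₗ LinearMap.mulLeft k (antipode k w))
  have h : l ∘ₗ LinearMap.mulLeft k (antipode k w) = l ∘ₗ LinearMap.mulRight k y :=
    LinearMap.ext hy
  obtain ⟨z, rfl⟩ := D.antipode_surjective y
  have h1 : antipode k (leftHit α.toLinearMap (antipode k z)) = w := by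
    rw [← D.leftHit_mulRight, ← h, D.leftHit_mulLeft]
  have h2 : antipode k (antipode k w) * g = g * leftHit (charInv α).toLinearMap z := by
    rw [← D.rightHit_mulLeft, h, D.rightHit_mulRight]
  rw [mul_assoc, h2, ← mul_assoc, D.isGroupLikeElem.antipode_mul_cancel, one_mul,
    leftHit_leftHit_charInv, h1]

end IntegralData

end Radford
section AntipodeOrder

variable {k H : Type*} [Field k] [Ring H] [HopfAlgebra k H]

variable (k H) in
/-- The square of the antipode, as a linear endomorphism. -/
noncomputable def antipodeSq : Module.End k H := (antipode k : H →ₗ[k] H) ∘ₗ antipode k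

@[simp] lemma antipodeSq_apply (x : H) : antipodeSq k H x = antipode k (antipode k x) := rfl

lemma antipode_pow_four_mul (n : ℕ) :
    (antipode k : Module.End k H) ^ (4 * n) = antipodeSq k H ^ (2 * n) := by
  have h : antipodeSq k H = (antipode k : Module.End k H) ^ 2 := (pow_two _).symm
  rw [h, ← pow_mul]
  congr 1
  ring

lemma antipodeSq_mul (x y : H) : antipodeSq k H (x * y) = antipodeSq k H x * antipodeSq k H y := by
  simp [antipode_mul_antidistrib]

lemma commute_antipodeSq_mulLeft {c : H} (hc : IsGroupLikeElem k c) :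
    Commute (antipodeSq k H) (LinearMap.mulLeft k c) := by
  refine LinearMap.ext fun x => ?_
  simp only [Module.End.mul_apply, LinearMap.mulLeft_apply, antipodeSq_mul]
  simp [hc.antipode_antipode]

lemma commute_antipodeSq_mulRight {c : H} (hc : IsGroupLikeElem k c) :
    Commute (antipodeSq k H) (LinearMap.mulRight k c) := by
  refine LinearMap.ext fun x => ?_
  simp only [Module.End.mul_apply, LinearMap.mulRight_apply, antipodeSq_mul]
  simp [hc.antipode_antipode]

lemma commute_antipodeSq_rightHit (β : H →ₐ[k] k) :
    Commute (antipodeSq k H) (rightHit β.toLinearMap) :=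
  LinearMap.ext fun x => (rightHit_antipode_antipode β x).symm

lemma commute_antipodeSq_leftHit (β : H →ₐ[k] k) :
    Commute (antipodeSq k H) (leftHit β.toLinearMap) :=
  LinearMap.ext fun x => (leftHit_antipode_antipode β x).symm

lemma rightHit_groupLike (β : H →ₗ[k] k) {c : H} (hc : IsGroupLikeElem k c) :
    rightHit β c = β c • c := by
  rw [← contractRight_comul, hc.comul_eq_tmul_self, contractRight_tmul]

lemma leftHit_groupLike (β : H →ₗ[k] k) {c : H} (hc : IsGroupLikeElem k c) :
    leftHit β c = β c • c := by
  rw [← contractLeft_comul, hc.comul_eq_tmul_self, contractLeft_tmul]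

lemma rightHit_pow (f : H →ₗ[k] k) (n : ℕ) :
    (rightHit f : Module.End k H) ^ n = rightHit ((toConv f) ^ n).ofConv := by
  induction n with
  | zero => exact rightHit_counit.symm
  | succ n ih => rw [pow_succ, ih, pow_succ]; exact rightHit_comp_rightHit _ (toConv f)

lemma leftHit_pow (f : H →ₗ[k] k) (n : ℕ) :
    (leftHit f : Module.End k H) ^ n = leftHit ((toConv f) ^ n).ofConv := by
  induction n with
  | zero => exact leftHit_counit.symm
  | succ n ih => rw [pow_succ, ih, pow_succ']; exact leftHit_comp_leftHit _ (toConv f)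

lemma charInv_pow_eq_one {β : H →ₐ[k] k} {n : ℕ} (h : toConv β.toLinearMap ^ n = 1) :
    toConv (charInv β).toLinearMap ^ n = 1 := by
  let u : (WithConv (H →ₗ[k] k))ˣ := ⟨toConv β.toLinearMap, toConv (charInv β).toLinearMap,
    mul_charInv β, charInv_mul β⟩
  have hu : u ^ n = 1 := Units.ext h
  have hu' : u⁻¹ ^ n = 1 := by rw [inv_pow, hu, inv_one]
  exact congrArg Units.val hu'

lemma antipode_groupLike_pow_eq_one {c : H} (hc : IsGroupLikeElem k c) {n : ℕ} (h : c ^ n = 1) :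
    (antipode k c) ^ n = 1 := by
  let u : Hˣ := ⟨c, antipode k c, hc.mul_antipode_cancel, hc.antipode_mul_cancel⟩
  have hu : u ^ n = 1 := Units.ext h
  have hu' : u⁻¹ ^ n = 1 := by rw [inv_pow, hu, inv_one]
  exact congrArg Units.val hu'

variable {l : Module.Dual k H} {g L : H} {α : H →ₐ[k] k}

/-- `S⁴ = 1` up to the commuting twists by the distinguished group-like elements. -/
lemma IntegralData.antipodeSq_pow_eq_one (D : IntegralData l g L α) {n : ℕ} (hg : g ^ n = 1)
    (hα : toConv α.toLinearMap ^ n = 1) : antipodeSq k H ^ (2 * n) = 1 := by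
  have hG := D.isGroupLikeElem
  have hG' : IsGroupLikeElem k (antipode k g) := hG.antipode
  let T := antipodeSq k H
  let A : Module.End k H := rightHit (charInv α).toLinearMap
  let B : Module.End k H := leftHit α.toLinearMap
  let M : Module.End k H := LinearMap.mulLeft k (antipode k g)
  let N : Module.End k H := LinearMap.mulRight k g
  have hTA : Commute T A := commute_antipodeSq_rightHit _
  have hTB : Commute T B := commute_antipodeSq_leftHit _
  have hTM : Commute T M := commute_antipodeSq_mulLeft hG'
  have hTN : Commute T N := commute_antipodeSq_mulRight hG
  have hAB : Commute A B := (leftHit_comp_rightHit _ _).symm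
  have hMN : Commute M N := LinearMap.ext fun x => by simp [M, N, mul_assoc]
  have hinv : α g * α (antipode k g) = 1 := by
    rw [← map_mul, hG.mul_antipode_cancel, map_one]
  have hinv' : (charInv α) g * (charInv α) (antipode k g) = 1 := by
    rw [← map_mul, hG.mul_antipode_cancel, map_one]
  have hBMN : Commute B (M * N) := LinearMap.ext fun x => by
    simp only [B, M, N, Module.End.mul_apply, LinearMap.mulLeft_apply, LinearMap.mulRight_apply,
      leftHit_mul, leftHit_groupLike _ hG, leftHit_groupLike _ hG', AlgHom.toLinearMap_apply]
    simp only [smul_mul_assoc, mul_smul_comm, smul_smul]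
    rw [hinv, one_smul]
  have hAMN : Commute A (M * N) := LinearMap.ext fun x => by
    simp only [A, M, N, Module.End.mul_apply, LinearMap.mulLeft_apply, LinearMap.mulRight_apply,
      rightHit_mul, rightHit_groupLike _ hG, rightHit_groupLike _ hG', AlgHom.toLinearMap_apply]
    simp only [smul_mul_assoc, mul_smul_comm, smul_smul]
    rw [hinv', one_smul]
  have hrad : (A * B * (M * N)) * T ^ 2 = 1 := by
    have h1 : A * B * T * (M * N) * T = 1 := LinearMap.ext fun w => by
      have hr := D.radford w
      have e1 (x : H) : antipode k (leftHit α.toLinearMap x) = A (antipode k x) := by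
        have := LinearMap.congr_fun (rightHit_comp_antipode (charInv α)) x
        rw [charInv_charInv] at this
        exact this.symm
      have e2 (x : H) : antipode k (A x) = B (antipode k x) :=
        (LinearMap.congr_fun (leftHit_comp_antipode α) x).symm
      rw [e1, e1, e2, mul_assoc] at hr
      exact hr
    have h2 : Commute T (M * N) := hTM.mul_right hTN
    calc A * B * (M * N) * T ^ 2 = A * B * ((M * N) * T) * T := by simp only [pow_two, mul_assoc]
      _ = 1 := by rw [← h2.eq, ← mul_assoc]; exact h1
  have hcomm : Commute (A * B * (M * N)) (T ^ 2) :=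
    (((hTA.mul_right hTB).mul_right (hTM.mul_right hTN)).pow_left 2).symm
  have hpow := hcomm.mul_pow n
  have hone : (A * B * (M * N)) ^ n = 1 := by
    rw [(hAMN.mul_left hBMN).mul_pow, hAB.mul_pow, hMN.mul_pow]
    have hA : A ^ n = 1 := by
      rw [rightHit_pow, charInv_pow_eq_one hα]; exact rightHit_counit
    have hB : B ^ n = 1 := by
      rw [leftHit_pow, hα]; exact leftHit_counit
    have hM : M ^ n = 1 := by
      rw [LinearMap.pow_mulLeft, antipode_groupLike_pow_eq_one hG hg]; exact LinearMap.mulLeft_one _ _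
    have hN : N ^ n = 1 := by
      rw [LinearMap.pow_mulRight, hg]; exact LinearMap.mulRight_one _ _
    simp [hA, hB, hM, hN]
  rw [hrad, hone, one_pow, one_mul, ← pow_mul] at hpow
  exact hpow.symm

end AntipodeOrder
section Maschke

variable {k H : Type*} [Field k] [Ring H] [HopfAlgebra k H]
  {l : Module.Dual k H} {g L : H} {α : H →ₐ[k] k}

/-- Maschke's theorem: a Hopf algebra with an integral of nonzero counit is semisimple. -/
lemma IntegralData.isSemisimpleRing (D : IntegralData l g L α) (hL : counit (R := k) L ≠ 0) :
    IsSemisimpleRing H := by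
  refine (isSemisimpleModule_iff H H).mpr ⟨fun I => ?_⟩
  obtain ⟨π, hπ⟩ := (I.restrictScalars k).subtype.exists_leftInverse_of_injective
    (LinearMap.ker_eq_bot.mpr Subtype.val_injective)
  let P : H →ₗ[k] H := (I.restrictScalars k).subtype ∘ₗ π
  have hPmem x : P x ∈ I := (π x).2
  have hPeq x (hx : x ∈ I) : P x = x :=
    congrArg Subtype.val (LinearMap.congr_fun hπ ⟨x, hx⟩)
  let Φ (m : H) : H ⊗[k] H →ₗ[k] H := LinearMap.mul' k H ∘ₗ
    TensorProduct.map LinearMap.id (P ∘ₗ LinearMap.mulRight k m ∘ₗ antipode k)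
  have hΦ m x y : Φ m (x ⊗ₜ y) = x * P (antipode k y * m) := rfl
  have hΦl m b t : Φ m ((b ⊗ₜ 1) * t) = b * Φ m t := by
    induction t with
    | zero => simp
    | tmul x y => simp [hΦ, mul_assoc]
    | add x y hx hy => simp [mul_add, hx, hy]
  have hΦr m a t : Φ m ((1 ⊗ₜ a) * t) = Φ (antipode k a * m) t := by
    induction t with
    | zero => simp
    | tmul x y => simp [hΦ, mul_assoc, antipode_mul_antidistrib]
    | add x y hx hy => simp [mul_add, hx, hy]
  have hΦsum m : Φ m (comul L) =
      ∑ i ∈ (ℛ k L).index, (ℛ k L).left i * P (antipode k ((ℛ k L).right i) * m) := by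
    conv_lhs => rw [← (ℛ k L).eq]
    simp [hΦ]
  have hΦmem m : Φ m (comul L) ∈ I := by
    rw [hΦsum]
    exact sum_mem fun i _ => I.smul_mem _ (hPmem _)
  let f : H →ₗ[H] I :=
    { toFun m := (counit (R := k) L)⁻¹ • ⟨Φ m (comul L), hΦmem m⟩
      map_add' m m' := by
        rw [← smul_add]
        congr 1
        apply Subtype.ext
        simp only [hΦsum, Submodule.coe_add, mul_add, map_add, Finset.sum_add_distrib]
      map_smul' b m := by
        obtain ⟨a, rfl⟩ := D.antipode_surjective b
        rw [RingHom.id_apply, smul_comm]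
        congr 1
        apply Subtype.ext
        simp only [Submodule.coe_smul, smul_eq_mul]
        rw [← hΦr, D.one_tmul_mul_comul, hΦl] }
  refine ⟨_, LinearMap.isCompl_of_proj (f := f) fun x => ?_⟩
  apply Subtype.ext
  change (counit (R := k) L)⁻¹ • Φ x (comul L) = x
  have : Φ x (comul L) = counit (R := k) L • (x : H) := by
    rw [hΦsum, ← smul_one_mul, ← sum_mul_antipode_eq_smul (ℛ k L), Finset.sum_mul]
    refine Finset.sum_congr rfl fun i _ => ?_
    rw [hPeq (_ * (x : H)) (I.smul_mem _ x.2), mul_assoc]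
  rw [this, smul_smul, inv_mul_cancel₀ hL, one_smul]

lemma IntegralData.counit_eq_zero (D : IntegralData l g L α) (hss : ¬ IsSemisimpleRing H) :
    counit (R := k) L = 0 := by
  by_contra h
  exact hss (D.isSemisimpleRing h)

lemma IntegralData.algHom_eq_zero (D : IntegralData l g L α) (hss : ¬ IsSemisimpleRing H)
    (β : H →ₐ[k] k) : β L = 0 := by
  by_contra h
  have h1 (a : H) : β a = counit (R := k) a := by
    have := congrArg β (D.mul_integral a)
    rw [map_mul, map_smul, smul_eq_mul] at this
    exact mul_right_cancel₀ h this
  exact h ((h1 L).trans (D.counit_eq_zero hss))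

end Maschke

section Trace

variable {k H : Type*} [Field k] [Ring H] [HopfAlgebra k H] [FiniteDimensional k H]
  {l : Module.Dual k H} {g L : H} {α : H →ₐ[k] k}

/-- `Tr(φ ∘ S) = λ(φ(Λ₁ g⁻¹) Λ₂)`. -/
lemma IntegralData.trace_comp_antipode (D : IntegralData l g L α) (φ : H →ₗ[k] H) {ι : Type*}
    (r : Repr k L ι) : LinearMap.trace k H (φ ∘ₗ antipode k) =
      ∑ i ∈ r.index, l (φ (r.left i * antipode k g) * r.right i) := by
  have h : φ ∘ₗ antipode k = ∑ i ∈ r.index, LinearMap.smulRight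
      (l ∘ₗ LinearMap.mulRight k (r.right i)) (φ (r.left i * antipode k g)) := by
    ext x
    have h1 : antipode k x = (antipode k x * g) * antipode k g := by
      rw [mul_assoc, D.isGroupLikeElem.mul_antipode_cancel, mul_one]
    rw [LinearMap.comp_apply, h1, ← D.rightHit_mulLeft, rightHit_apply _ r, Finset.sum_mul]
    simp [LinearMap.sum_apply]
  rw [h, map_sum]
  refine Finset.sum_congr rfl fun i _ => ?_
  rw [LinearMap.trace_smulRight]
  simp

lemma IntegralData.trace_antipodeSq_mul_mulLeft (D : IntegralData l g L α)
    (hss : ¬ IsSemisimpleRing H) (c : H) :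
    LinearMap.trace k H (antipodeSq k H * LinearMap.mulLeft k c) = 0 := by
  have h : antipodeSq k H * LinearMap.mulLeft k c =
      (antipode k ∘ₗ LinearMap.mulRight k (antipode k c)) ∘ₗ antipode k := by
    ext x
    simp [antipode_mul_antidistrib]
  rw [h, D.trace_comp_antipode _ (ℛ k L)]
  have h2 : ∑ i ∈ (ℛ k L).index, antipode k ((ℛ k L).left i) * (ℛ k L).right i = 0 := by
    rw [sum_antipode_mul_eq_smul, D.counit_eq_zero hss, zero_smul]
  have h3 := congrArg (fun z => l (antipode k (antipode k g * antipode k c) * z)) h2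
  simp only [Finset.mul_sum, map_sum, mul_zero, map_zero] at h3
  rw [← h3]
  refine Finset.sum_congr rfl fun i _ => ?_
  simp [antipode_mul_antidistrib, mul_assoc]

lemma IntegralData.trace_antipodeSq_mul_rightHit (D : IntegralData l g L α)
    (hss : ¬ IsSemisimpleRing H) (β : H →ₐ[k] k) :
    LinearMap.trace k H (antipodeSq k H * rightHit β.toLinearMap) = 0 := by
  have hG' : IsGroupLikeElem k (antipode k g) := D.isGroupLikeElem.antipode
  have h : antipodeSq k H * rightHit β.toLinearMap =
      (antipode k ∘ₗ leftHit (charInv β).toLinearMap) ∘ₗ antipode k := by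
    rw [LinearMap.comp_assoc, leftHit_comp_antipode, charInv_charInv]
    rfl
  rw [h, D.trace_comp_antipode _ (ℛ k L)]
  have h2 := sum_antipode_leftHit_mul (charInv β).toLinearMap (ℛ k L)
  rw [AlgHom.toLinearMap_apply, D.algHom_eq_zero hss, zero_smul] at h2
  have h3 := congrArg (fun z => l (antipode k (leftHit (charInv β).toLinearMap (antipode k g)) * z)) h2
  simp only [Finset.mul_sum, map_sum, mul_zero, map_zero] at h3
  rw [← h3]
  refine Finset.sum_congr rfl fun i _ => ?_
  simp [antipode_mul_antidistrib, mul_assoc, leftHit_mul]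

end Trace
end HopfAlgebra

namespace FiniteOrderEnd

open Finset

section Average

variable {k V : Type*} [Field k] [AddCommGroup V] [Module k V]

/-- The average of the powers `X⁰, …, X^(d-1)` of an endomorphism. -/
noncomputable def avg (X : Module.End k V) (d : ℕ) : Module.End k V :=
  (d : k)⁻¹ • ∑ t ∈ range d, X ^ t

lemma commute_avg {T X : Module.End k V} (h : Commute T X) (d : ℕ) : Commute T (avg X d) :=
  (Commute.sum_right _ _ _ fun t _ => h.pow_right t).smul_right _

lemma mul_avg {X : Module.End k V} {d : ℕ} (hX : X ^ d = 1) : X * avg X d = avg X d := by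
  rw [avg, mul_smul_comm, mul_sum]
  congr 1
  have h1 := sum_range_succ (fun t => X ^ t) d
  have h2 := sum_range_succ' (fun t => X ^ t) d
  rw [h1, hX, pow_zero] at h2
  simp only [← pow_succ']
  exact (add_right_cancel h2).symm

lemma pow_mul_avg {X : Module.End k V} {d : ℕ} (hX : X ^ d = 1) (t : ℕ) :
    X ^ t * avg X d = avg X d := by
  induction t with
  | zero => simp
  | succ t ih => rw [pow_succ, mul_assoc, mul_avg hX, ih]

lemma trace_mul_avg (T X : Module.End k V) (d : ℕ)
    (h : ∀ t < d, LinearMap.trace k V (T * X ^ t) = 0) : LinearMap.trace k V (T * avg X d) = 0 := by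
  rw [avg, mul_smul_comm, map_smul, mul_sum, map_sum,
    sum_eq_zero fun t ht => h t (mem_range.mp ht), smul_zero]

lemma exists_trace_eq_natCast [FiniteDimensional k V] {E : Module.End k V} (hE : IsIdempotentElem E) :
    ∃ m : ℕ, LinearMap.trace k V E = m :=
  ⟨_, (LinearMap.IsIdempotentElem.isProj_range E hE).trace⟩

variable [CharZero k]

lemma isIdempotentElem_avg {X : Module.End k V} {d : ℕ} (hd : 0 < d) (hX : X ^ d = 1) :
    IsIdempotentElem (avg X d) := by
  have hd' : (d : k) ≠ 0 := Nat.cast_ne_zero.mpr hd.ne'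
  unfold IsIdempotentElem
  nth_rewrite 1 [avg]
  rw [smul_mul_assoc, sum_mul]
  simp_rw [pow_mul_avg hX]
  rw [sum_const, card_range, ← Nat.cast_smul_eq_nsmul k, smul_smul, inv_mul_cancel₀ hd', one_smul]

lemma avg_apply_of_apply_eq {X : Module.End k V} {d : ℕ} (hd : 0 < d) {v : V} (hv : X v = v) :
    avg X d v = v := by
  have hd' : (d : k) ≠ 0 := Nat.cast_ne_zero.mpr hd.ne'
  have h (t : ℕ) : (X ^ t) v = v := by
    induction t with
    | zero => rfl
    | succ t ih => rw [pow_succ, Module.End.mul_apply, hv, ih]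
  simp only [avg, LinearMap.smul_apply, LinearMap.sum_apply, h, sum_const, card_range]
  rw [← Nat.cast_smul_eq_nsmul k, smul_smul, inv_mul_cancel₀ hd', one_smul]

lemma trace_avg [FiniteDimensional k V] (X : Module.End k V) {d : ℕ} (hd : 0 < d)
    (h : ∀ t, 0 < t → t < d → LinearMap.trace k V (X ^ t) = 0) :
    (d : k) * LinearMap.trace k V (avg X d) = Module.finrank k V := by
  have hd' : (d : k) ≠ 0 := Nat.cast_ne_zero.mpr hd.ne'
  rw [avg, map_smul, map_sum, sum_eq_single_of_mem 0 (mem_range.mpr hd)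
    fun t ht h0 => h t (Nat.pos_of_ne_zero h0) (mem_range.mp ht), pow_zero, LinearMap.trace_one,
    smul_eq_mul, mul_inv_cancel_left₀ hd']

lemma sum_avg_smul (T : Module.End k V) {d : ℕ} {ζ : k} (hd : 0 < d) (hζ : IsPrimitiveRoot ζ d) :
    ∑ j ∈ range d, avg (ζ⁻¹ ^ j • T) d = 1 := by
  have hd' : (d : k) ≠ 0 := Nat.cast_ne_zero.mpr hd.ne'
  simp only [avg, smul_pow]
  rw [← smul_sum, sum_comm]
  simp_rw [← sum_smul]
  rw [sum_eq_single_of_mem 0 (mem_range.mpr hd)]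
  · simp [smul_smul, inv_mul_cancel₀ hd']
  · intro t ht h0
    have ht' := mem_range.mp ht
    have hne : (ζ⁻¹) ^ t ≠ 1 := hζ.inv.pow_ne_one_of_pos_of_lt h0 ht'
    have : ∑ j ∈ range d, (ζ⁻¹ ^ j) ^ t = 0 := by
      simp_rw [← pow_mul, mul_comm _ t, pow_mul]
      rw [geom_sum_eq hne, ← pow_mul, mul_comm, pow_mul, hζ.inv.pow_eq_one, one_pow, sub_self,
        zero_div]
    rw [this, zero_smul]

variable [FiniteDimensional k V]

/-- The multiplicities of the eigenvalues of an endomorphism `T` of order dividing `d` on the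
range of an idempotent commuting with it. -/
lemma exists_multiplicities {T E : Module.End k V} (hTE : Commute T E) (hE : IsIdempotentElem E)
    {d : ℕ} {ζ : k} (hd : 0 < d) (hζ : IsPrimitiveRoot ζ d) (hT : T ^ d = 1) :
    ∃ m : ℕ → ℕ, LinearMap.trace k V E = ∑ j ∈ range d, (m j : k) ∧
      LinearMap.trace k V (T * E) = ∑ j ∈ range d, (m j : k) * ζ ^ j ∧
      ((∀ j, 0 < j → j < d → m j = 0) → T * E = E) := by
  have hζ0 : ζ ≠ 0 := hζ.ne_zero hd.ne'
  let Q (j : ℕ) : Module.End k V := avg (ζ⁻¹ ^ j • T) d * E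
  have hXd (j : ℕ) : (ζ⁻¹ ^ j • T) ^ d = 1 := by
    rw [smul_pow, hT, ← pow_mul, mul_comm, pow_mul, hζ.inv.pow_eq_one, one_pow, one_smul]
  have hQ (j : ℕ) : IsIdempotentElem (Q j) :=
    (isIdempotentElem_avg hd (hXd j)).mul_of_commute
      (commute_avg (hTE.symm.smul_right _) d).symm hE
  have hTQ (j : ℕ) : T * Q j = ζ ^ j • Q j := by
    have h := congrArg (ζ ^ j • ·) (mul_avg (hXd j))
    simp only [smul_mul_assoc, smul_smul] at h
    rw [← mul_pow, mul_inv_cancel₀ hζ0, one_pow, one_smul] at h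
    rw [← mul_assoc, h, smul_mul_assoc]
  have hsum : ∑ j ∈ range d, Q j = E := by rw [← sum_mul, sum_avg_smul T hd hζ, one_mul]
  have hTE' : T * E = ∑ j ∈ range d, ζ ^ j • Q j := by
    nth_rewrite 1 [← hsum]
    simp_rw [mul_sum, hTQ]
  choose m hm using fun j => exists_trace_eq_natCast (hQ j)
  refine ⟨m, ?_, ?_, fun h => ?_⟩
  · rw [← hsum, map_sum]
    exact sum_congr rfl fun j _ => hm j
  · rw [hTE', map_sum]
    exact sum_congr rfl fun j _ => by rw [map_smul, hm, smul_eq_mul, mul_comm]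
  · have h0 (j : ℕ) (h1 : j ∈ range d) (h2 : j ≠ 0) : Q j = 0 := by
      apply LinearMap.IsIdempotentElem.eq_zero_of_trace_eq_zero (hQ j)
      rw [hm, h j (Nat.pos_of_ne_zero h2) (mem_range.mp h1), Nat.cast_zero]
    rw [hTE', sum_eq_single_of_mem 0 (mem_range.mpr hd) fun j h1 h2 => by rw [h0 j h1 h2, smul_zero]]
    rw [← hsum, sum_eq_single_of_mem 0 (mem_range.mpr hd) h0, pow_zero, one_smul]

/-- If the range of an idempotent is spanned by vectors fixed by `T`, then `T` is the identity
there. -/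
lemma mul_eq_of_fixed {T E : Module.End k V} (hE : IsIdempotentElem E) {r : ℕ}
    (htr : LinearMap.trace k V E = r) {v : Fin r → V} (hv : LinearIndependent k v)
    (hEv : ∀ i, E (v i) = v i) (hTv : ∀ i, T (v i) = v i) : T * E = E := by
  have hfin : Module.finrank k (LinearMap.range E) = r := by
    have h := (LinearMap.IsIdempotentElem.isProj_range E hE).trace
    rw [htr] at h
    exact_mod_cast h.symm
  have hspan : Submodule.span k (Set.range v) = LinearMap.range E := by
    refine Submodule.eq_of_le_of_finrank_eq ?_ ?_
    · rw [Submodule.span_le]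
      rintro _ ⟨i, rfl⟩
      exact ⟨v i, hEv i⟩
    · rw [finrank_span_eq_card hv, hfin, Fintype.card_fin]
  have hle : Submodule.span k (Set.range v) ≤ LinearMap.eqLocus T LinearMap.id := by
    rw [Submodule.span_le]
    rintro _ ⟨i, rfl⟩
    exact hTv i
  refine LinearMap.ext fun x => ?_
  exact hle (hspan ▸ LinearMap.mem_range_self E x)

end Average

open Finset Polynomial

section RootsOfUnity

variable {k : Type*} [Field k] [CharZero k]

lemma cyclotomic_dvd_of_aeval_eq_zero {d : ℕ} {ζ : k} (hd : 0 < d) (hζ : IsPrimitiveRoot ζ d)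
    {F : ℤ[X]} (hF : aeval ζ F = 0) : cyclotomic d ℤ ∣ F := by
  rw [cyclotomic_eq_minpoly hζ hd]
  exact minpoly.isIntegrallyClosed_dvd (hζ.isIntegral hd) hF

lemma eq_zero_of_sum_mul_pow_eq_sum {d : ℕ} {ζ : k} (hd : 0 < d) (hζ : IsPrimitiveRoot ζ d)
    {m : ℕ → ℕ} (h : ∑ j ∈ range d, (m j : k) * ζ ^ j = ∑ j ∈ range d, (m j : k))
    {j : ℕ} (hj : 0 < j) (hjd : j < d) : m j = 0 := by
  let F : ℤ[X] := ∑ j ∈ range d, (C (m j : ℤ) * X ^ j - C (m j : ℤ))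
  have hF : aeval ζ F = 0 := by
    simp only [F, map_sum, map_sub, map_mul, map_pow, aeval_X, aeval_C]
    simpa [sum_sub_distrib, sub_eq_zero] using h
  obtain ⟨G, hG⟩ := cyclotomic_dvd_of_aeval_eq_zero hd hζ hF
  have hz := Complex.isPrimitiveRoot_exp d hd.ne'
  set z := Complex.exp (2 * Real.pi * Complex.I / d) with hzdef
  have hFz : aeval z F = 0 := by
    have h0 : aeval z (cyclotomic d ℤ) = 0 := by
      rw [cyclotomic_eq_minpoly hz hd, minpoly.aeval]
    rw [hG, map_mul, h0, zero_mul]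
  have hnorm (i : ℕ) : ‖z ^ i‖ = 1 := by
    rw [norm_pow, hz.norm'_eq_one hd.ne', one_pow]
  have hre : ∑ i ∈ range d, (m i : ℝ) * (1 - (z ^ i).re) = 0 := by
    have h1 := congrArg Complex.re hFz
    simp only [F, map_sum, map_sub, map_mul, map_pow, aeval_X, aeval_C] at h1
    simp only [algebraMap_int_eq, Int.coe_castRingHom, Int.cast_natCast, Complex.re_sum,
      Complex.sub_re, Complex.natCast_re, Complex.zero_re] at h1
    rw [← neg_eq_zero, ← sum_neg_distrib, ← h1]
    refine sum_congr rfl fun i _ => ?_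
    simp only [Complex.mul_re, Complex.natCast_re, Complex.natCast_im]
    ring
  have hle (i : ℕ) : (z ^ i).re ≤ 1 := (hnorm i) ▸ Complex.re_le_norm _
  have hzero := (sum_eq_zero_iff_of_nonneg fun i _ =>
    mul_nonneg (Nat.cast_nonneg (m i)) (sub_nonneg.mpr (hle i))).mp hre j (mem_range.mpr hjd)
  rcases mul_eq_zero.mp hzero with h0 | h0
  · exact_mod_cast h0
  · exfalso
    have hre1 : (z ^ j).re = 1 := (sub_eq_zero.mp h0).symm
    have h1 : z ^ j = 1 := by
      have h2 := Complex.sq_norm (z ^ j)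
      rw [hnorm, Complex.normSq_apply, hre1] at h2
      apply Complex.ext
      · simpa using hre1
      · simp only [Complex.one_im]; nlinarith
    exact hz.pow_ne_one_of_pos_of_lt hj.ne' hjd h1

lemma coeff_eq_coeff_of_sum_eq_zero {q : ℕ} (hq : q.Prime) {ω : k} (hω : IsPrimitiveRoot ω q)
    {b : ℕ → ℤ} (h : ∑ j ∈ range q, (b j : k) * ω ^ j = 0) : ∃ c, ∀ j < q, b j = c := by
  let F : ℤ[X] := ∑ j ∈ range q, C (b j) * X ^ j
  have hF : aeval ω F = 0 := by
    simpa [F, map_sum] using h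
  have hcoeff (j : ℕ) (hj : j < q) : F.coeff j = b j := by
    simp [F, coeff_X_pow, hj]
  obtain ⟨G, hG⟩ := cyclotomic_dvd_of_aeval_eq_zero hq.pos hω hF
  have hΦ : cyclotomic q ℤ = ∑ i ∈ range q, X ^ i := by
    have := Fact.mk hq
    exact cyclotomic_prime ℤ q
  have hdeg : G.natDegree = 0 := by
    by_cases hG0 : G = 0
    · simp [hG0]
    have h1 : F.natDegree ≤ q - 1 := by
      refine natDegree_sum_le_of_forall_le _ _ fun j hj => ?_
      exact (natDegree_C_mul_X_pow_le _ _).trans (by have := mem_range.mp hj; omega)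
    rw [hG, (cyclotomic.monic q ℤ).natDegree_mul' hG0, natDegree_cyclotomic,
      Nat.totient_prime hq] at h1
    omega
  obtain ⟨c, rfl⟩ := natDegree_eq_zero.mp hdeg
  refine ⟨c, fun j hj => ?_⟩
  rw [← hcoeff j hj, hG, hΦ]
  simp [coeff_X_pow, hj]

lemma le_of_sum_mul_pow_eq_zero {q : ℕ} (hq : q.Prime) (hodd : Odd q) {ζ : k}
    (hζ : IsPrimitiveRoot ζ (2 * q)) {m : ℕ → ℕ}
    (h : ∑ j ∈ range (2 * q), (m j : k) * ζ ^ j = 0)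
    (hr : Odd (∑ j ∈ range (2 * q), m j)) : q ≤ ∑ j ∈ range (2 * q), m j := by
  have hζq : ζ ^ q = -1 := by
    have h1 : (ζ ^ q) ^ 2 = 1 := by rw [← pow_mul, mul_comm, hζ.pow_eq_one]
    have h2 : ζ ^ q ≠ 1 := hζ.pow_ne_one_of_pos_of_lt hq.pos.ne' (by have := hq.pos; omega)
    exact (sq_eq_one_iff.mp h1).resolve_left h2
  have hω : IsPrimitiveRoot (-ζ) q := by
    have : ζ ^ (q + 1) = -ζ := by rw [pow_succ, hζq, neg_one_mul]
    rw [← this]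
    obtain ⟨s, hs⟩ := hodd
    have h2 : q + 1 = (s + 1) * 2 := by omega
    have h3 : IsPrimitiveRoot (ζ ^ 2) q := hζ.pow (by have := hq.pos; omega) rfl
    rw [h2, mul_comm, pow_mul]
    refine h3.pow_of_coprime _ ?_
    have h4 : q = 2 * (s + 1) - 1 := by omega
    refine Nat.Coprime.symm ((Nat.Prime.coprime_iff_not_dvd hq).mpr fun hdvd => ?_)
    have := Nat.le_of_dvd (by omega) hdvd
    have := hq.two_le
    omega
  let b (j : ℕ) : ℤ := (-1) ^ j * ((m j : ℤ) - m (q + j))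
  have hb : ∑ j ∈ range q, (b j : k) * (-ζ) ^ j = 0 := by
    rw [← h, two_mul, sum_range_add, ← sum_add_distrib]
    refine sum_congr rfl fun j _ => ?_
    have h1 : ((-1 : k) ^ j) * (-1) ^ j = 1 := by rw [← mul_pow]; simp
    rw [neg_pow ζ, pow_add, hζq]
    push_cast [b]
    linear_combination ((m j : k) - m (q + j)) * ζ ^ j * h1
  obtain ⟨c, hc⟩ := coeff_eq_coeff_of_sum_eq_zero hq hω hb
  have hpar (j : ℕ) : Even (b j + (m j + m (q + j) : ℕ)) := by
    rcases neg_one_pow_eq_or ℤ j with h1 | h1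
    · refine ⟨m j, ?_⟩; simp only [b, h1]; push_cast; ring
    · refine ⟨m (q + j), ?_⟩; simp only [b, h1]; push_cast; ring
  have hsum : ∑ j ∈ range (2 * q), m j = ∑ j ∈ range q, (m j + m (q + j)) := by
    rw [two_mul, sum_range_add, sum_add_distrib]
  have hc0 : c ≠ 0 := by
    rintro rfl
    refine (Nat.not_even_iff_odd.mpr hr) ?_
    rw [hsum]
    refine Finset.even_sum _ fun j hj => ?_
    have h1 := hpar j
    rw [hc j (mem_range.mp hj), zero_add] at h1
    exact_mod_cast h1
  rw [hsum]
  calc q = ∑ j ∈ range q, 1 := by simp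
    _ ≤ _ := sum_le_sum fun j hj => ?_
  by_contra hlt
  have h1 : m j = 0 := by omega
  have h2 : m (q + j) = 0 := by omega
  apply hc0
  rw [← hc j (mem_range.mp hj)]
  simp [b, h1, h2]

end RootsOfUnity

end FiniteOrderEnd

lemma FiniteOrderEnd.eq_one_of_trace_eq_finrank {k V : Type*} [Field k] [CharZero k]
    [IsAlgClosed k] [AddCommGroup V] [Module k V] [FiniteDimensional k V] {X : Module.End k V}
    {d : ℕ} (hd : 0 < d) (hX : X ^ d = 1) (htr : LinearMap.trace k V X = Module.finrank k V) :
    X = 1 := by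
  have : NeZero d := ⟨hd.ne'⟩
  obtain ⟨ζ, hζ⟩ := HasEnoughRootsOfUnity.exists_primitiveRoot k d
  obtain ⟨m, h1, h2, h3⟩ := FiniteOrderEnd.exists_multiplicities (Commute.one_right X)
    IsIdempotentElem.one hd hζ hX
  rw [LinearMap.trace_one] at h1
  rw [mul_one, htr, h1] at h2
  simpa using h3 fun j hj hjd => FiniteOrderEnd.eq_zero_of_sum_mul_pow_eq_sum hd hζ h2.symm hj hjd

namespace HopfAlgebra

open Coalgebra WithConv

section Galois

variable {k H : Type*} [Field k] [Ring H] [HopfAlgebra k H]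

variable (k H) in
/-- The Galois map `x ⊗ y ↦ Δ(x) (1 ⊗ y)`. -/
noncomputable def galoisMap : H ⊗[k] H →ₗ[k] H ⊗[k] H :=
  LinearMap.mul' k (H ⊗[k] H) ∘ₗ TensorProduct.map comul
    (Algebra.TensorProduct.includeRight (R := k) (A := H) (B := H)).toLinearMap

lemma galoisMap_tmul (x y : H) :
    galoisMap k H (x ⊗ₜ y) = comul x * ((1 : H) ⊗ₜ[k] y) := by
  simp [galoisMap]

lemma galoisMap_surjective : Function.Surjective (galoisMap k H) := by
  rw [← LinearMap.range_eq_top, eq_top_iff, ← TensorProduct.span_tmul_eq_top, Submodule.span_le]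
  rintro _ ⟨a, b, rfl⟩
  refine ⟨∑ i ∈ (ℛ k a).index, (ℛ k a).left i ⊗ₜ (antipode k ((ℛ k a).right i) * b), ?_⟩
  have h := congrArg (· * ((1 : H) ⊗ₜ[k] b)) (sum_comul_mul_tmul_antipode (ℛ k a))
  simp only [Finset.sum_mul, mul_assoc, Algebra.TensorProduct.tmul_mul_tmul, mul_one,
    one_mul] at h
  rw [map_sum, ← h]
  exact Finset.sum_congr rfl fun i _ => galoisMap_tmul _ _

lemma eq_one_of_rightHit_eq_one {f : H →ₗ[k] k} (h : (rightHit f : Module.End k H) = 1) :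
    toConv f = 1 := by
  ext x
  have := counit_rightHit f x
  rw [h] at this
  simpa using this.symm

variable [FiniteDimensional k H]

lemma trace_eq_of_galoisMap {X Y : Module.End k (H ⊗[k] H)}
    (h : galoisMap k H ∘ₗ X = Y ∘ₗ galoisMap k H) :
    LinearMap.trace k _ X = LinearMap.trace k _ Y := by
  let e : (H ⊗[k] H) ≃ₗ[k] H ⊗[k] H := LinearEquiv.ofBijective (galoisMap k H)
    ⟨LinearMap.injective_iff_surjective.mpr galoisMap_surjective, galoisMap_surjective⟩
  have he : e.conj X = Y := by
    refine LinearMap.ext fun t => ?_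
    obtain ⟨s, rfl⟩ := e.surjective t
    rw [LinearEquiv.conj_apply_apply, e.symm_apply_apply]
    exact LinearMap.congr_fun h s
  rw [← he, LinearMap.trace_conj']

lemma trace_mulLeft_mul_self {c : H} (hc : IsGroupLikeElem k c) :
    LinearMap.trace k H (LinearMap.mulLeft k c) * LinearMap.trace k H (LinearMap.mulLeft k c) =
      LinearMap.trace k H (LinearMap.mulLeft k c) * Module.finrank k H := by
  have h : galoisMap k H ∘ₗ TensorProduct.map (LinearMap.mulLeft k c) LinearMap.id =
      TensorProduct.map (LinearMap.mulLeft k c) (LinearMap.mulLeft k c) ∘ₗ galoisMap k H := by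
    ext x y
    have h1 (t : H ⊗[k] H) : TensorProduct.map (LinearMap.mulLeft k c) (LinearMap.mulLeft k c) t =
        (c ⊗ₜ c) * t := by
      induction t with
      | zero => simp
      | tmul x y => simp
      | add x y hx hy => simp [mul_add, hx, hy]
    simp [galoisMap_tmul, h1, hc.comul_eq_tmul_self, mul_assoc]
  have h2 := trace_eq_of_galoisMap h
  rw [LinearMap.trace_tensorProduct', LinearMap.trace_tensorProduct', LinearMap.trace_id] at h2
  exact h2.symm

lemma trace_rightHit_mul_self (β : H →ₐ[k] k) :
    LinearMap.trace k H (rightHit β.toLinearMap) * LinearMap.trace k H (rightHit β.toLinearMap) =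
      LinearMap.trace k H (rightHit β.toLinearMap) * Module.finrank k H := by
  have h : galoisMap k H ∘ₗ TensorProduct.map (rightHit β.toLinearMap) (rightHit β.toLinearMap) =
      TensorProduct.map LinearMap.id (rightHit β.toLinearMap) ∘ₗ galoisMap k H := by
    ext x y
    have h1 : TensorProduct.map LinearMap.id (rightHit β.toLinearMap) =
        (Algebra.TensorProduct.map (AlgHom.id k H) (rightHitAlgHom β)).toLinearMap := by
      rw [← toLinearMap_rightHitAlgHom]
      rfl
    simp only [TensorProduct.AlgebraTensorModule.curry_apply, LinearMap.restrictScalars_self,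
      TensorProduct.curry_apply, LinearMap.comp_apply, TensorProduct.map_tmul, galoisMap_tmul,
      comul_rightHit]
    rw [LinearMap.lTensor, h1]
    simp only [AlgHom.toLinearMap_apply, map_mul, Algebra.TensorProduct.map_tmul, map_one,
      ← toLinearMap_rightHitAlgHom]
  have h2 := trace_eq_of_galoisMap h
  rw [LinearMap.trace_tensorProduct', LinearMap.trace_tensorProduct', LinearMap.trace_id] at h2
  rw [h2, mul_comm]

variable [CharZero k] [IsAlgClosed k]

lemma trace_mulLeft_eq_zero {c : H} (hc : IsGroupLikeElem k c) {d : ℕ} (hd : 0 < d)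
    (hcd : c ^ d = 1) (hc1 : c ≠ 1) : LinearMap.trace k H (LinearMap.mulLeft k c) = 0 := by
  by_contra h0
  have h := FiniteOrderEnd.eq_one_of_trace_eq_finrank (X := LinearMap.mulLeft k c) hd
    (by rw [LinearMap.pow_mulLeft, hcd]; exact LinearMap.mulLeft_one _ _)
    (mul_left_cancel₀ h0 (trace_mulLeft_mul_self hc))
  apply hc1
  simpa using LinearMap.congr_fun h 1

lemma trace_rightHit_eq_zero {β : H →ₐ[k] k} {d : ℕ} (hd : 0 < d)
    (hβd : toConv β.toLinearMap ^ d = 1) (hβ : toConv β.toLinearMap ≠ 1) :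
    LinearMap.trace k H (rightHit β.toLinearMap) = 0 := by
  by_contra h0
  have h := FiniteOrderEnd.eq_one_of_trace_eq_finrank (X := rightHit β.toLinearMap) hd
    (by rw [rightHit_pow, hβd]; exact rightHit_counit)
    (mul_left_cancel₀ h0 (trace_rightHit_mul_self β))
  exact hβ (eq_one_of_rightHit_eq_one h)

end Galois

section Orders

variable {k H : Type*} [Field k] [Ring H] [HopfAlgebra k H]

lemma exists_algHom_pow (α : H →ₐ[k] k) (n : ℕ) :
    ∃ β : H →ₐ[k] k, toConv α.toLinearMap ^ n = toConv β.toLinearMap := by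
  induction n with
  | zero => exact ⟨Bialgebra.counitAlgHom k H, rfl⟩
  | succ n ih =>
    obtain ⟨β, hβ⟩ := ih
    exact ⟨(toConv β * toConv α).ofConv, by rw [pow_succ, hβ, AlgHom.toLinearMap_convMul]⟩

variable [FiniteDimensional k H]

lemma isOfFinOrder_groupLike {c : H} (hc : IsGroupLikeElem k c) : IsOfFinOrder c := by
  have : Finite (GroupLike k H) := (linearIndep_groupLikeVal (R := k) (A := H)).finite
  exact (GroupLike.valMonoidHom (R := k) (A := H)).isOfFinOrder
    (isOfFinOrder_of_finite (⟨c, hc⟩ : GroupLike k H))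

lemma isOfFinOrder_algHom (α : H →ₐ[k] k) : IsOfFinOrder (toConv α.toLinearMap) := by
  have : Finite (H →ₐ[k] k) := (linearIndependent_algHom_toLinearMap k H k).finite
  let u : (WithConv (H →ₗ[k] k))ˣ := ⟨toConv α.toLinearMap, toConv (charInv α).toLinearMap,
    mul_charInv α, charInv_mul α⟩
  rw [← Units.val_mk (toConv α.toLinearMap) _ (mul_charInv α) (charInv_mul α),
    Units.isOfFinOrder_val]
  change IsOfFinOrder u
  by_contra hu
  have hinj := injective_pow_iff_not_isOfFinOrder.mpr hu
  choose β hβ using exists_algHom_pow α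
  refine not_injective_infinite_finite β fun i j hij => hinj (Units.ext ?_)
  rw [Units.val_pow_eq_pow_val, Units.val_pow_eq_pow_val]
  change toConv α.toLinearMap ^ i = toConv α.toLinearMap ^ j
  rw [hβ, hβ, hij]

end Orders
end HopfAlgebra

namespace FiniteOrderEnd

variable {k V : Type*} [Field k] [CharZero k] [IsAlgClosed k] [AddCommGroup V] [Module k V]
  [FiniteDimensional k V]

lemma le_of_trace_mul_eq_zero {T E : Module.End k V} (hTE : Commute T E)
    (hE : IsIdempotentElem E) {q r : ℕ} (hq : q.Prime) (hodd : Odd q) (hT : T ^ (2 * q) = 1)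
    (hr : Odd r) (htr : LinearMap.trace k V E = r) (h0 : LinearMap.trace k V (T * E) = 0) :
    q ≤ r := by
  have hpos : 0 < 2 * q := Nat.mul_pos two_pos hq.pos
  have : NeZero (2 * q) := ⟨hpos.ne'⟩
  obtain ⟨ζ, hζ⟩ := HasEnoughRootsOfUnity.exists_primitiveRoot k (2 * q)
  obtain ⟨m, h1, h2, -⟩ := exists_multiplicities hTE hE hpos hζ hT
  have hsum : r = ∑ j ∈ Finset.range (2 * q), m j := by
    rw [htr] at h1
    exact_mod_cast h1
  rw [hsum] at hr ⊢
  exact le_of_sum_mul_pow_eq_zero hq hodd hζ (h2.symm.trans h0) hr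

lemma even_finrank_of_sq_eq_one {T : Module.End k V} (hT : T ^ 2 = 1)
    (h0 : LinearMap.trace k V T = 0) : Even (Module.finrank k V) := by
  obtain ⟨ζ, hζ⟩ := HasEnoughRootsOfUnity.exists_primitiveRoot k 2
  obtain ⟨m, h1, h2, -⟩ := exists_multiplicities (Commute.one_right T) IsIdempotentElem.one
    Nat.two_pos hζ hT
  have hζ' : ζ = -1 := hζ.eq_neg_one_of_two_right
  rw [LinearMap.trace_one] at h1
  rw [mul_one, h0] at h2
  rw [Finset.sum_range_succ, Finset.sum_range_one] at h1 h2
  rw [hζ', pow_zero, pow_one] at h2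
  refine ⟨m 0, ?_⟩
  have h3 : (m 1 : k) = m 0 := by linear_combination h2
  rw [h3] at h1
  exact_mod_cast h1

end FiniteOrderEnd

namespace HopfAlgebra

open Coalgebra WithConv

open FiniteOrderEnd

section Index

variable {k H : Type*} [Field k] [Ring H] [HopfAlgebra k H]

lemma apply_pow_eq_one_of_convPow_eq_one {α : H →ₐ[k] k} {c : H} (hc : IsGroupLikeElem k c)
    {n : ℕ} (h : toConv α.toLinearMap ^ n = 1) : α c ^ n = 1 := by
  have h1 (n : ℕ) : ((rightHit α.toLinearMap : Module.End k H) ^ n) c = α c ^ n • c := by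
    induction n with
    | zero => simp
    | succ n ih =>
      rw [pow_succ', Module.End.mul_apply, ih, map_smul, rightHit_groupLike _ hc, smul_smul,
        pow_succ, AlgHom.toLinearMap_apply]
  have h2 := congrArg (counit (R := k)) (h1 n)
  rw [rightHit_pow, h] at h2
  have h3 : rightHit (1 : WithConv (H →ₗ[k] k)).ofConv c = c :=
    LinearMap.congr_fun rightHit_counit c
  rw [h3, map_smul, hc.counit_eq_one, smul_eq_mul, mul_one] at h2
  exact h2.symm

lemma linearIndependent_groupLike_pow {c : H} (hc : IsGroupLikeElem k c) {r : ℕ}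
    (hr : r ≤ orderOf c) : LinearIndependent k fun i : Fin r => c ^ (i : ℕ) := by
  let f (i : Fin r) : GroupLike k H := ⟨c ^ (i : ℕ), hc.pow⟩
  have hf : Function.Injective f := by
    intro i j hij
    have h : c ^ (i : ℕ) = c ^ (j : ℕ) := congrArg GroupLike.val hij
    exact Fin.ext (pow_injOn_Iio_orderOf (i.2.trans_le hr) (j.2.trans_le hr) h)
  exact (linearIndep_groupLikeVal (R := k) (A := H)).comp f hf

lemma antipodeSq_groupLike {c : H} (hc : IsGroupLikeElem k c) : antipodeSq k H c = c :=
  hc.antipode_antipode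

variable {l : Module.Dual k H} {g L : H} {α : H →ₐ[k] k}

lemma IntegralData.rightHit_groupLike_pow (D : IntegralData l g L α) (hα : α g = 1) (t : ℕ) :
    rightHit α.toLinearMap (g ^ t) = g ^ t := by
  rw [rightHit_groupLike _ D.isGroupLikeElem.pow, AlgHom.toLinearMap_apply, map_pow, hα, one_pow,
    one_smul]

variable [FiniteDimensional k H]

lemma IntegralData.trace_antipodeSq (D : IntegralData l g L α) (hss : ¬ IsSemisimpleRing H) :
    LinearMap.trace k H (antipodeSq k H) = 0 := by
  have h := D.trace_antipodeSq_mul_mulLeft hss 1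
  rwa [LinearMap.mulLeft_one, ← Module.End.one_eq_id, mul_one] at h

variable [CharZero k]

/-- An idempotent on whose range `S²` has trace zero cannot have its range spanned by powers of a
group-like element. -/
lemma false_of_fixed_groupLike_pow {c : H} (hc : IsGroupLikeElem k c) {E : Module.End k H}
    (hE : IsIdempotentElem E) {r : ℕ} (htr : LinearMap.trace k H E = r) (hr0 : 0 < r)
    (hr : r ≤ orderOf c) (hfix : ∀ t < r, E (c ^ t) = c ^ t)
    (h0 : LinearMap.trace k H (antipodeSq k H * E) = 0) : False := by
  rw [mul_eq_of_fixed hE htr (linearIndependent_groupLike_pow hc hr) (fun i => hfix i i.2)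
    fun i => antipodeSq_groupLike hc.pow, htr] at h0
  exact hr0.ne' (by exact_mod_cast h0)

variable [IsAlgClosed k]

lemma IntegralData.exists_idempotent_mulLeft (D : IntegralData l g L α)
    (hss : ¬ IsSemisimpleRing H) :
    ∃ (E : Module.End k H) (r : ℕ), Commute (antipodeSq k H) E ∧ IsIdempotentElem E ∧
      LinearMap.trace k H E = r ∧ orderOf g * r = Module.finrank k H ∧
      LinearMap.trace k H (antipodeSq k H * E) = 0 := by
  have hd := (isOfFinOrder_groupLike D.isGroupLikeElem).orderOf_pos
  have hX : (LinearMap.mulLeft k g : Module.End k H) ^ orderOf g = 1 := by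
    rw [LinearMap.pow_mulLeft, pow_orderOf_eq_one]; exact LinearMap.mulLeft_one _ _
  have hE := isIdempotentElem_avg hd hX
  obtain ⟨r, hr⟩ := exists_trace_eq_natCast hE
  refine ⟨_, r, commute_avg (commute_antipodeSq_mulLeft D.isGroupLikeElem) _, hE, hr, ?_,
    trace_mul_avg _ _ _ fun t _ => ?_⟩
  · have h := trace_avg (LinearMap.mulLeft k g) hd fun t ht htd => by
      rw [LinearMap.pow_mulLeft]
      refine trace_mulLeft_eq_zero D.isGroupLikeElem.pow hd ?_
        (pow_ne_one_of_lt_orderOf ht.ne' htd)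
      rw [← pow_mul, mul_comm, pow_mul, pow_orderOf_eq_one, one_pow]
    rw [hr] at h
    exact_mod_cast h
  · rw [LinearMap.pow_mulLeft]
    exact D.trace_antipodeSq_mul_mulLeft hss _

lemma IntegralData.exists_idempotent_rightHit (D : IntegralData l g L α)
    (hss : ¬ IsSemisimpleRing H) :
    ∃ (E : Module.End k H) (r : ℕ), Commute (antipodeSq k H) E ∧ IsIdempotentElem E ∧
      LinearMap.trace k H E = r ∧ orderOf (toConv α.toLinearMap) * r = Module.finrank k H ∧
      LinearMap.trace k H (antipodeSq k H * E) = 0 ∧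
      ∀ x, rightHit α.toLinearMap x = x → E x = x := by
  have hd := (isOfFinOrder_algHom α).orderOf_pos
  have hX : (rightHit α.toLinearMap : Module.End k H) ^ orderOf (toConv α.toLinearMap) = 1 := by
    rw [rightHit_pow, pow_orderOf_eq_one]; exact rightHit_counit
  have hE := isIdempotentElem_avg hd hX
  obtain ⟨r, hr⟩ := exists_trace_eq_natCast hE
  refine ⟨_, r, commute_avg (commute_antipodeSq_rightHit α) _, hE, hr, ?_,
    trace_mul_avg _ _ _ fun t _ => ?_, fun x hx => avg_apply_of_apply_eq hd hx⟩
  · have h := trace_avg (rightHit α.toLinearMap) hd fun t ht htd => by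
      obtain ⟨β, hβ⟩ := exists_algHom_pow α t
      rw [rightHit_pow, hβ, ofConv_toConv]
      refine trace_rightHit_eq_zero hd ?_ (hβ ▸ pow_ne_one_of_lt_orderOf ht.ne' htd)
      rw [← hβ, ← pow_mul, mul_comm, pow_mul, pow_orderOf_eq_one, one_pow]
    rw [hr] at h
    exact_mod_cast h
  · obtain ⟨β, hβ⟩ := exists_algHom_pow α t
    rw [rightHit_pow, hβ, ofConv_toConv]
    exact D.trace_antipodeSq_mul_rightHit hss β

/-- In odd dimension `p q`, the `p`-th powers of both distinguished group-like elements are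
trivial. -/
lemma IntegralData.pow_eq_one (D : IntegralData l g L α) (hss : ¬ IsSemisimpleRing H)
    {p q : ℕ} (hp : p.Prime) (hq : q.Prime) (hpodd : Odd p) (hqodd : Odd q) (hpq : p ≤ q)
    (hdim : Module.finrank k H = p * q) :
    g ^ p = 1 ∧ toConv α.toLinearMap ^ p = 1 := by
  obtain ⟨E, r, hTE, hE, hEr, hdr, hE0⟩ := D.exists_idempotent_mulLeft hss
  obtain ⟨E', r', hTE', hE', hEr', hdr', hE0', hfix⟩ := D.exists_idempotent_rightHit hss
  have hg := D.isGroupLikeElem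
  have hT := D.trace_antipodeSq hss
  rw [hdim] at hdr hdr'
  have hpos : 0 < p * q := Nat.mul_pos hp.pos hq.pos
  have hodd : Odd (p * q) := hpodd.mul hqodd
  have hrodd : Odd r := hodd.of_dvd_nat ⟨_, by rw [← hdr, mul_comm]⟩
  have hrodd' : Odd r' := hodd.of_dvd_nat ⟨_, by rw [← hdr', mul_comm]⟩
  have hne : orderOf g ≠ p * q := fun h =>
    false_of_fixed_groupLike_pow hg (E := 1) IsIdempotentElem.one (r := p * q)
      (by rw [LinearMap.trace_one, hdim]) hpos h.ge (fun _ _ => rfl) (by rwa [mul_one])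
  have hne' : orderOf (toConv α.toLinearMap) ≠ p * q := fun h => by
    have hr1 : r' = 1 := Nat.eq_of_mul_eq_mul_left hpos (by rw [← h, hdr', mul_one, h])
    refine false_of_fixed_groupLike_pow hg hE' hEr' hrodd'.pos
      (hr1 ▸ (isOfFinOrder_groupLike hg).orderOf_pos) (fun t ht => ?_) hE0'
    obtain rfl : t = 0 := by omega
    refine hfix _ ?_
    rw [rightHit_groupLike _ hg.pow, AlgHom.toLinearMap_apply, pow_zero, map_one, one_smul]
  have hcop : Nat.Coprime (orderOf g) (orderOf (toConv α.toLinearMap)) → r' ≠ orderOf g := by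
    intro hc hr
    have h1 : α g ^ orderOf g = 1 := by rw [← map_pow, pow_orderOf_eq_one, map_one]
    have h2 := apply_pow_eq_one_of_convPow_eq_one hg (pow_orderOf_eq_one (toConv α.toLinearMap))
    have h3 : α g = 1 := by
      rw [← orderOf_eq_one_iff]
      exact Nat.eq_one_of_dvd_coprimes hc (orderOf_dvd_of_pow_eq_one h1)
        (orderOf_dvd_of_pow_eq_one h2)
    exact false_of_fixed_groupLike_pow hg hE' hEr' hrodd'.pos hr.le
      (fun t _ => hfix _ (D.rightHit_groupLike_pow h3 t)) hE0'
  have hle (h : orderOf g ∣ q) (h' : orderOf (toConv α.toLinearMap) ∣ q) : q ≤ r ∧ q ≤ r' := by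
    have hTq := D.antipodeSq_pow_eq_one (orderOf_dvd_iff_pow_eq_one.mp h)
      (orderOf_dvd_iff_pow_eq_one.mp h')
    exact ⟨le_of_trace_mul_eq_zero hTE hE hq hqodd hTq hrodd hEr hE0,
      le_of_trace_mul_eq_zero hTE' hE' hq hqodd hTq hrodd' hEr' hE0'⟩
  rw [← orderOf_dvd_iff_pow_eq_one, ← orderOf_dvd_iff_pow_eq_one]
  generalize orderOf g = d at *
  generalize orderOf (toConv α.toLinearMap) = d' at *
  have hcases {e s : ℕ} (h : e * s = p * q) (hn : e ≠ p * q) : e ∣ p ∨ e = q ∧ s = p := by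
    obtain ⟨a, b, ha, hb, rfl⟩ := Nat.dvd_mul.mp (Dvd.intro s h)
    rcases (Nat.dvd_prime hq).mp hb with rfl | rfl
    · exact .inl (by rwa [mul_one])
    · rcases (Nat.dvd_prime hp).mp ha with rfl | rfl
      · refine .inr ⟨one_mul _, Nat.eq_of_mul_eq_mul_left hq.pos ?_⟩
        rwa [one_mul, mul_comm p] at h
      · exact absurd rfl hn
  rcases hpq.eq_or_lt with rfl | hlt
  · refine ⟨(hcases hdr hne).elim id fun h => h.1.dvd, (hcases hdr' hne').elim id fun h => h.1.dvd⟩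
  have hpq' : Nat.Coprime p q := (Nat.coprime_primes hp hq).mpr hlt.ne
  rcases hcases hdr hne with h | ⟨rfl, rfl⟩ <;> rcases hcases hdr' hne' with h' | ⟨rfl, rfl⟩
  · exact ⟨h, h'⟩
  · rcases (Nat.dvd_prime hp).mp h with rfl | rfl
    · exact absurd (hle (one_dvd _) dvd_rfl).2 hlt.not_ge
    · exact absurd rfl (hcop hpq')
  · rcases (Nat.dvd_prime hp).mp h' with rfl | rfl
    · exact absurd (hle dvd_rfl (one_dvd _)).1 hlt.not_ge
    · exact absurd (Nat.eq_of_mul_eq_mul_left hp.pos hdr') (hcop hpq'.symm)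
  · exact absurd (hle dvd_rfl dvd_rfl).1 hlt.not_ge

lemma IntegralData.le_of_antipodeSq_pow_eq_one (D : IntegralData l g L α)
    (hss : ¬ IsSemisimpleRing H) (hodd : Odd (Module.finrank k H)) {p m : ℕ} (hp : p.Prime)
    (hTp : antipodeSq k H ^ (2 * p) = 1) (hm : 0 < m) (hTm : antipodeSq k H ^ (2 * m) = 1) :
    p ≤ m := by
  by_contra! hlt
  have hc : Nat.Coprime p m := Nat.coprime_of_lt_prime hm.ne' hlt hp
  rw [pow_mul] at hTp hTm
  have h : antipodeSq k H ^ 2 = 1 := by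
    rw [← orderOf_eq_one_iff]
    exact Nat.eq_one_of_dvd_coprimes hc (orderOf_dvd_of_pow_eq_one hTp)
      (orderOf_dvd_of_pow_eq_one hTm)
  exact Nat.not_even_iff_odd.mpr hodd (even_finrank_of_sq_eq_one h (D.trace_antipodeSq hss))

end Index
end HopfAlgebra

/-- Proposition 5.2(ii). If `H` is a non-semisimple Hopf algebra of dimension
`p q`, where `p ≤ q` are odd primes, over an algebraically closed field of characteristic `0`,
then the index of `H` is `p`. -/
theorem stmt2 (k : Type*) [Field k] [IsAlgClosed k] [CharZero k]
    (p q : ℕ) (hp : p.Prime) (hq : q.Prime) (hpodd : Odd p) (hqodd : Odd q) (hpq : p ≤ q)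
    (H : Type*) [Ring H] [HopfAlgebra k H] [FiniteDimensional k H]
    (hdim : Module.finrank k H = p * q) (hss : ¬ IsSemisimpleRing H)
    (g : H) (hg : IsDistinguishedGroupLike k g) :
    IsHopfIndex k g p := by
  obtain ⟨l, L, α, D⟩ := HopfAlgebra.exists_integralData hg
  obtain ⟨h1, h2⟩ := D.pow_eq_one hss hp hq hpodd hqodd hpq hdim
  have hT := D.antipodeSq_pow_eq_one h1 h2
  refine ⟨hp.pos, by rw [HopfAlgebra.antipode_pow_four_mul, hT], h1, fun m hm hSm _ => ?_⟩
  rw [HopfAlgebra.antipode_pow_four_mul] at hSm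
  exact D.le_of_antipodeSq_pow_eq_one hss (hdim ▸ hpodd.mul hqodd) hp hT hm hSm
end
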